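/- arXiv:1711.02170 — 4 statements merged into one kernel-verified Lean document; each statement's English description precedes it below -/
import Mathlib

section
/- Let K be a finite extension of ℚ₂ with valuation ring O_K, and let α ∈ O_K be a unit of O_K which is not a square in K. Then the quadratic extension K(√α)/K is unramified if and only if there exists a unit u ∈ O_K such that u² ≡ α (mod 4). -/
lemma aux_frac (K : Type*) [Field K] [Algebra ℚ_[2] K] [FiniteDimensional ℚ_[2] K]
    [Algebra ℤ_[2] K] [IsScalarTower ℤ_[2] ℚ_[2] K]
    (O : ValuationSubring K) [Algebra ℤ_[2] O] [IsScalarTower ℤ_[2] O K]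
    (h2 : (2 : O) ∈ IsLocalRing.maximalIdeal O) :
    IsDiscreteValuationRing O ∧ ∀ x : O, ∃ a b : O, IsIntegral ℤ_[2] a ∧ IsIntegral ℤ_[2] b ∧
      IsUnit b ∧ x * b = a := by
  let A := integralClosure ℤ_[2] K
  have : CharZero K := charZero_of_injective_algebraMap (algebraMap ℚ_[2] K).injective
  have : IsDedekindDomain A := integralClosure.isDedekindDomain ℤ_[2] ℚ_[2] K
  have hAO : ∀ a : A, (a : K) ∈ O := by
    intro a
    have : IsIntegral O (a : K) := (a.2 : IsIntegral ℤ_[2] (a : K)).tower_top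
    obtain ⟨y, hy⟩ := IsIntegrallyClosed.isIntegral_iff.mp this
    rw [← hy]; exact y.2
  let f : A →+* O := A.val.toRingHom.codRestrict O.toSubring hAO
  let : Algebra A O := f.toAlgebra
  have hf : ∀ a : A, ((algebraMap A O a : O) : K) = a := fun a => rfl
  have hfi : Function.Injective (algebraMap A O) := by
    intro a b h
    apply Subtype.ext
    rw [← hf, ← hf, h]
  have hintegral : ∀ a : A, IsIntegral ℤ_[2] (algebraMap A O a) := by
    intro a
    have h1 : IsIntegral ℤ_[2] (algebraMap O K (algebraMap A O a)) := a.2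
    exact (isIntegral_algebraMap_iff (IsFractionRing.injective O K)).mp h1
  let P : Ideal A := (IsLocalRing.maximalIdeal O).comap (algebraMap A O)
  have hP : P.IsPrime := Ideal.IsPrime.comap _
  have hP0 : P ≠ ⊥ := by
    intro h
    have : (2 : A) ∈ P := by
      show algebraMap A O 2 ∈ IsLocalRing.maximalIdeal O
      rw [map_ofNat]; exact h2
    rw [h] at this
    have h3 : (2 : A) = 0 := this
    have : ((2 : A) : K) = 0 := by rw [h3]; rfl
    exact two_ne_zero (α := K) this
  have hunit : ∀ b : A, b ∉ P → IsUnit (algebraMap A O b) := by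
    intro b hb
    by_contra h
    exact hb ((IsLocalRing.mem_maximalIdeal _).mpr h)
  have := IsLocalization.AtPrime.isDiscreteValuationRing_of_dedekind_domain A hP0
    (Localization.AtPrime P)
  have : IsFractionRing A K := integralClosure.isFractionRing_of_finite_extension ℚ_[2] K
  have key : ∀ x : O, ∃ a b : A, b ∉ P ∧ x * algebraMap A O b = algebraMap A O a := by
    intro x
    obtain ⟨a, b, hb, hab⟩ := IsFractionRing.div_surjective (A := A) (x : K)
    have hb0 : b ≠ 0 := nonZeroDivisors.ne_zero hb
    have hxb : x * algebraMap A O b = algebraMap A O a := by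
      apply Subtype.ext
      show (x : K) * (b : K) = a
      rw [← hab]
      have : (algebraMap A K b) ≠ 0 := by
        simpa using hb0
      exact div_mul_cancel₀ _ this
    -- divisibility in the localization
    rcases ValuationRing.dvd_total (algebraMap A (Localization.AtPrime P) b)
      (algebraMap A (Localization.AtPrime P) a) with h | h
    · obtain ⟨c, hc⟩ := h
      obtain ⟨⟨r, s⟩, hrs⟩ := IsLocalization.surj P.primeCompl c
      refine ⟨r, s, s.2, ?_⟩
      have h1 : a * s = b * r := by
        apply IsLocalization.injective (Localization.AtPrime P) P.primeCompl_le_nonZeroDivisors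
        rw [map_mul, map_mul, hc, ← hrs]; ring
      have h2 := congrArg (algebraMap A O) h1
      rw [map_mul, map_mul, ← hxb] at h2
      have hb1 : algebraMap A O b ≠ 0 := by
        rwa [Ne, map_eq_zero_iff _ hfi]
      apply mul_left_cancel₀ hb1
      rw [← h2]; ring
    · obtain ⟨c, hc⟩ := h
      obtain ⟨⟨r, s⟩, hrs⟩ := IsLocalization.surj P.primeCompl c
      have h1 : b * s = a * r := by
        apply IsLocalization.injective (Localization.AtPrime P) P.primeCompl_le_nonZeroDivisors
        rw [map_mul, map_mul, hc, ← hrs]; ring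
      have h2 := congrArg (algebraMap A O) h1
      rw [map_mul, map_mul, ← hxb] at h2
      have hb1 : algebraMap A O b ≠ 0 := by
        rwa [Ne, map_eq_zero_iff _ hfi]
      have h3 : algebraMap A O s = x * algebraMap A O r := by
        apply mul_left_cancel₀ hb1
        rw [h2]; ring
      refine ⟨s, r, ?_, h3.symm⟩
      have h4 := hunit s s.2
      rw [h3] at h4
      intro hr
      exact ((IsLocalRing.mem_maximalIdeal _).mp hr) (isUnit_of_mul_isUnit_right h4)
  have : IsLocalization.AtPrime O P := by
    refine ⟨fun y => hunit y y.2, ?_, ?_⟩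
    · intro x
      obtain ⟨a, b, hb, h⟩ := key x
      exact ⟨⟨a, ⟨b, hb⟩⟩, h⟩
    · intro x y h
      exact ⟨1, by rw [hfi h]⟩
  refine ⟨IsLocalization.AtPrime.isDiscreteValuationRing_of_dedekind_domain A hP0 O, ?_⟩
  intro x
  obtain ⟨a, b, hb, h⟩ := key x
  exact ⟨_, _, hintegral a, hintegral b, hunit b hb, h⟩

lemma aux_perf (K : Type*) [Field K] (O : ValuationSubring K) [Algebra ℤ_[2] O]
    (h2 : (2 : O) ∈ IsLocalRing.maximalIdeal O)
    (h : ∀ x : O, ∃ a b : O, IsIntegral ℤ_[2] a ∧ IsIntegral ℤ_[2] b ∧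
      IsUnit b ∧ x * b = a) (x : O) : ∃ t : O, x - t ^ 2 ∈ IsLocalRing.maximalIdeal O := by
  have : IsLocalHom (algebraMap ℤ_[2] O) := by
    constructor
    intro a ha
    by_contra hn
    have h3 : a ∈ IsLocalRing.maximalIdeal ℤ_[2] := hn
    rw [PadicInt.maximalIdeal_eq_span_p, Ideal.mem_span_singleton] at h3
    obtain ⟨c, rfl⟩ := h3
    rw [map_mul] at ha
    have := isUnit_of_mul_isUnit_left ha
    exact (IsLocalRing.mem_maximalIdeal _).mp h2 (by
      have e : algebraMap ℤ_[2] O ((2 : ℕ) : ℤ_[2]) = 2 := by rw [map_natCast]; rfl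
      rwa [e] at this)
  let k0 := IsLocalRing.ResidueField ℤ_[2]
  let k := IsLocalRing.ResidueField O
  have : Finite k0 := Finite.of_equiv _ (PadicInt.residueField (p := 2)).symm.toEquiv
  have hi : ∀ a : O, IsIntegral ℤ_[2] a → IsIntegral k0 (IsLocalRing.residue O a) := by
    intro a ha
    have : IsIntegral ℤ_[2] (IsLocalRing.residue O a) :=
      ha.map (IsScalarTower.toAlgHom ℤ_[2] O k)
    exact this.tower_top
  have : Algebra.IsAlgebraic k0 k := by
    constructor
    intro y
    obtain ⟨y, rfl⟩ := IsLocalRing.residue_surjective y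
    obtain ⟨a, b, ha, hb, hu, hab⟩ := h y
    have h1 : IsLocalRing.residue O y = IsLocalRing.residue O a * (IsLocalRing.residue O b)⁻¹ := by
      rw [← hab, map_mul]
      have : IsLocalRing.residue O b ≠ 0 := (hu.map _).ne_zero
      field_simp
    rw [h1]
    exact ((hi a ha).mul (hi b hb).inv).isAlgebraic
  have : PerfectField k := Algebra.IsAlgebraic.perfectField k0
  have : CharP k 2 := by
    apply CharTwo.of_one_ne_zero_of_two_eq_zero one_ne_zero
    have := (IsLocalRing.residue_eq_zero_iff (R := O) 2).mpr h2
    rw [← map_ofNat (IsLocalRing.residue O) 2]; exact this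
  have : ExpChar k 2 := ExpChar.prime Nat.prime_two
  obtain ⟨t, ht⟩ := (PerfectRing.bijective_frobenius (R := k) (p := 2)).2 (IsLocalRing.residue O x)
  obtain ⟨t, rfl⟩ := IsLocalRing.residue_surjective t
  refine ⟨t, ?_⟩
  rw [← IsLocalRing.residue_eq_zero_iff, map_sub, map_pow, ← ht]
  exact sub_self _

lemma aux_conj {K L : Type*} [Field K] [Field L] [Algebra K L] (a : K) (hns : ∀ y : K, y ^ 2 ≠ a)
    (β : L) (hβ : β ^ 2 = algebraMap K L a) (p : Polynomial K)
    (hp : Polynomial.aeval β p = 0) : Polynomial.aeval (-β) p = 0 := by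
  have hm : (Polynomial.X ^ 2 - Polynomial.C a).Monic := Polynomial.monic_X_pow_sub_C a two_ne_zero
  have hirr : Irreducible (Polynomial.X ^ 2 - Polynomial.C a) :=
    X_pow_sub_C_irreducible_of_prime Nat.prime_two hns
  have h1 : Polynomial.X ^ 2 - Polynomial.C a = minpoly K β :=
    minpoly.eq_of_irreducible_of_monic hirr (by simp [hβ]) hm
  obtain ⟨q, rfl⟩ := minpoly.dvd K β hp
  rw [← h1]
  simp [hβ]

lemma aux_repr {K L : Type*} [Field K] [Field L] [Algebra K L] (a : K)
    (β : L) (hβ : β ^ 2 = algebraMap K L a) (hgen : Algebra.adjoin K {β} = ⊤) (z : L) :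
    ∃ x y : K, z = algebraMap K L x + algebraMap K L y * β := by
  have hz : z ∈ Algebra.adjoin K {β} := by rw [hgen]; trivial
  induction hz using Algebra.adjoin_induction with
  | mem z hz => obtain rfl : z = β := hz; exact ⟨0, 1, by simp⟩
  | algebraMap r => exact ⟨r, 0, by simp⟩
  | add u v _ _ hu hv =>
    obtain ⟨x, y, rfl⟩ := hu
    obtain ⟨x', y', rfl⟩ := hv
    exact ⟨x + x', y + y', by simp only [map_add]; ring⟩
  | mul u v _ _ hu hv =>
    obtain ⟨x, y, rfl⟩ := hu
    obtain ⟨x', y', rfl⟩ := hv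
    refine ⟨x * x' + y * y' * a, x * y' + y * x', ?_⟩
    simp only [map_add, map_mul, ← hβ]; ring

lemma aux_conj_int {K L O : Type*} [Field K] [Field L] [Algebra K L] [CommRing O] [Algebra O K]
    [Algebra O L] [IsScalarTower O K L] (a : K) (hns : ∀ y : K, y ^ 2 ≠ a)
    (β : L) (hβ : β ^ 2 = algebraMap K L a) (x y : K)
    (hz : IsIntegral O (algebraMap K L x + algebraMap K L y * β)) :
    IsIntegral O (algebraMap K L x - algebraMap K L y * β) := by
  obtain ⟨p, hp, h⟩ := hz
  refine ⟨p, hp, ?_⟩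
  have h1 := aux_conj a hns β hβ ((p.map (algebraMap O K)).comp
    (Polynomial.C x + Polynomial.C y * Polynomial.X)) ?_
  · rw [Polynomial.aeval_comp] at h1
    simp only [map_add, map_mul, Polynomial.aeval_C, Polynomial.aeval_X,
      Polynomial.aeval_map_algebraMap, mul_neg, ← sub_eq_add_neg] at h1
    exact h1
  · rw [Polynomial.aeval_comp]
    simp only [map_add, map_mul, Polynomial.aeval_C, Polynomial.aeval_X,
      Polynomial.aeval_map_algebraMap]
    exact h

/-- successive approximation -/
lemma aux_fwd {O S : Type*} [CommRing O] [IsDomain O] [IsDiscreteValuationRing O]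
    [CommRing S] [IsDomain S] [Algebra O S]
    (h2 : (2 : O) ∈ IsLocalRing.maximalIdeal O) (h20 : (2 : O) ≠ 0)
    (hperf : ∀ x : O, ∃ t : O, x - t ^ 2 ∈ IsLocalRing.maximalIdeal O)
    (α : O) (hα : IsUnit α)
    (Q : Ideal S) [hQ : Q.IsMaximal]
    (hQm : Q.comap (algebraMap O S) = IsLocalRing.maximalIdeal O)
    (hram : ¬ (IsLocalRing.maximalIdeal O).map (algebraMap O S) ≤ Q ^ 2)
    (β : S) (hβ : β ^ 2 = algebraMap O S α)
    (hdiv : ∀ (c : O) (s : S) (p q : O), c ≠ 0 →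
      s ^ 2 + algebraMap O S (c * p) * s + algebraMap O S (c ^ 2 * q) = 0 →
      ∃ y : S, s = algebraMap O S c * y) (hinj : Function.Injective (algebraMap O S)) :
    ∃ u : O, IsUnit u ∧ (4 : O) ∣ u ^ 2 - α := by
  obtain ⟨π, hπ⟩ := IsDiscreteValuationRing.exists_irreducible O
  have hm : IsLocalRing.maximalIdeal O = Ideal.span {π} := hπ.maximalIdeal_eq
  obtain ⟨e, ε, hε⟩ := IsDiscreteValuationRing.eq_unit_mul_pow_irreducible h20 hπ
  have hmem : ∀ x : O, x ∈ IsLocalRing.maximalIdeal O ↔ π ∣ x := by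
    intro x; rw [hm, Ideal.mem_span_singleton]
  have key : ∀ j ≤ 2 * e, ∃ u : O, π ^ j ∣ u ^ 2 - α := by
    intro j
    induction j with
    | zero => intro _; exact ⟨1, by simp⟩
    | succ j ih =>
      intro hj
      obtain ⟨u, w, hw⟩ := ih (by omega)
      by_cases hwm : π ∣ w
      · exact ⟨u, by rw [hw, pow_succ]; exact mul_dvd_mul_left _ hwm⟩
      rcases Nat.even_or_odd' j with ⟨i, rfl | rfl⟩
      · obtain ⟨t, ht⟩ := hperf (-w)
        rw [hmem] at ht
        obtain ⟨c, hc⟩ := ht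
        obtain ⟨d, rfl⟩ : ∃ d, e = i + 1 + d := ⟨e - i - 1, by omega⟩
        refine ⟨u + π ^ i * t, -c + ε * π ^ d * u * t, ?_⟩
        have hw' : w = - (t ^ 2 + π * c) := by rw [← hc]; ring
        have e1 : (u + π ^ i * t) ^ 2 - α = (u ^ 2 - α) + π ^ (2 * i) * t ^ 2
          + 2 * (π ^ i * u * t) := by ring
        rw [e1, hw, hw', hε]; ring
      · exfalso
        obtain ⟨d, rfl⟩ : ∃ d, e = i + 1 + d := ⟨e - i - 1, by omega⟩
        have hwu : IsUnit w := by
          by_contra hn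
          exact hwm ((hmem w).mp hn)
        have hβ2 : (β - algebraMap O S u) ^ 2 +
            algebraMap O S (π ^ i * (ε * π ^ (d + 1) * u)) * (β - algebraMap O S u)
            + algebraMap O S ((π ^ i) ^ 2 * (π * w)) = 0 := by
          have e1 : π ^ i * (ε * π ^ (d + 1) * u) = 2 * u := by rw [hε]; ring
          have e2 : (π ^ i) ^ 2 * (π * w) = u ^ 2 - α := by rw [hw]; ring
          rw [e1, e2]
          simp only [map_sub, map_mul, map_pow, ← hβ, map_ofNat]
          ring
        have hc0 : π ^ i ≠ 0 := pow_ne_zero _ hπ.ne_zero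
        obtain ⟨y, hy⟩ := hdiv _ _ _ _ hc0 hβ2
        rw [hy] at hβ2
        have hy2 : y ^ 2 + algebraMap O S (ε * π ^ (d + 1) * u) * y + algebraMap O S (π * w) = 0 := by
          have h0 : algebraMap O S (π ^ i) ≠ 0 := by
            rwa [Ne, map_eq_zero_iff _ hinj]
          apply mul_left_cancel₀ (pow_ne_zero 2 h0)
          rw [mul_zero, ← hβ2]
          simp only [map_mul]
          simp only [map_pow]
          ring
        have hπQ : algebraMap O S π ∈ Q := by
          have : π ∈ Q.comap (algebraMap O S) := by rw [hQm, hmem]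
          exact this
        have hyQ : y ∈ Q := by
          apply hQ.isPrime.mem_of_pow_mem 2
          have : y ^ 2 = algebraMap O S π * (-(algebraMap O S (ε * π ^ d * u) * y + algebraMap O S w)) := by
            rw [eq_neg_of_add_eq_zero_left ((add_assoc _ _ _).symm.trans hy2)]
            simp only [map_mul, map_pow]; ring
          rw [this]; exact Ideal.mul_mem_right _ _ hπQ
        obtain ⟨w', hw'⟩ := hwu.exists_right_inv
        apply hram
        rw [hm, Ideal.map_span, Set.image_singleton, Ideal.span_singleton_le_iff_mem]
        have : algebraMap O S π = -(algebraMap O S w') * (y * y) +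
          (-(algebraMap O S w') * algebraMap O S (ε * π ^ d * u)) * (algebraMap O S π * y) := by
          have e3 : algebraMap O S π = algebraMap O S w' * algebraMap O S (π * w) := by
            rw [← map_mul]; congr 1; linear_combination -π * hw'
          rw [eq_neg_of_add_eq_zero_right hy2] at e3
          conv_lhs => rw [e3]
          simp only [map_mul, map_pow]; ring
        rw [this, sq]
        exact Ideal.add_mem _ (Ideal.mul_mem_left _ _ (Ideal.mul_mem_mul hyQ hyQ))
          (Ideal.mul_mem_left _ _ (Ideal.mul_mem_mul hπQ hyQ))
  obtain ⟨u, hu⟩ := key _ le_rfl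
  have h4 : (4 : O) ∣ u ^ 2 - α := by
    have : (4 : O) ∣ π ^ (2 * e) := by
      refine ⟨(↑ε⁻¹ : O) ^ 2, ?_⟩
      have e4 : (4 : O) = 2 * 2 := by norm_num
      have e5 : (ε : O) * (↑ε⁻¹ : O) = 1 := ε.mul_inv
      have e6 : (4 : O) * (↑ε⁻¹ : O) ^ 2 = ((ε : O) * (↑ε⁻¹ : O)) ^ 2 * π ^ (2 * e) := by
        rw [e4, hε]; ring
      rw [e6, e5]; ring
    exact this.trans hu
  refine ⟨u, ?_, h4⟩
  by_contra hn
  have hu1 : u ∈ IsLocalRing.maximalIdeal O := hn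
  obtain ⟨c, hc⟩ := h4
  have : α ∈ IsLocalRing.maximalIdeal O := by
    have : α = u * u - 2 * (2 * c) := by linear_combination -hc
    rw [this]
    exact Ideal.sub_mem _ (Ideal.mul_mem_left _ _ hu1) (Ideal.mul_mem_right _ _ h2)
  exact this hα

/-- Let `K` be a finite extension of `ℚ₂` with valuation ring `O`, and let `α ∈ O` be a unit
which is not a square in `K`. Then the quadratic extension `L = K(√α)` is unramified over `K`
(i.e. every maximal ideal of the integral closure of `O` in `L` lying over the maximal ideal
`m` of `O` has ramification index `1`) if and only if there is a unit `u ∈ O` with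
`u ^ 2 ≡ α (mod 4)`. -/
theorem unramified_quadratic_ext_iff_unit_square_mod_four
    (K : Type*) [Field K] [Algebra ℚ_[2] K] [FiniteDimensional ℚ_[2] K]
    (O : ValuationSubring K)
    (hO : ∀ x : ℚ_[2], algebraMap ℚ_[2] K x ∈ O ↔ ‖x‖ ≤ 1)
    (α : O) (hαunit : IsUnit α) (hαns : ∀ y : K, y ^ 2 ≠ (α : K))
    (L : Type*) [Field L] [Algebra K L] [Algebra O L] [IsScalarTower O K L]
    (β : L) (hβ : β ^ 2 = algebraMap K L (α : K))
    (hgen : Algebra.adjoin K {β} = ⊤) :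
    (∀ Q : Ideal (integralClosure O L), Q.IsMaximal →
        Q.comap (algebraMap O (integralClosure O L)) = IsLocalRing.maximalIdeal O →
        Ideal.ramificationIdx'
          (IsLocalRing.maximalIdeal O) Q = 1) ↔
      ∃ u : O, IsUnit u ∧ (4 : O) ∣ u ^ 2 - α := by
  have : CharZero K := charZero_of_injective_algebraMap (algebraMap ℚ_[2] K).injective
  have : CharZero L := charZero_of_injective_algebraMap (algebraMap K L).injective
  have h20 : (2 : O) ≠ 0 := by
    intro h
    have h' : ((2 : O) : K) = 0 := by rw [h]; rfl
    exact two_ne_zero (α := K) h'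
  have h2 : (2 : O) ∈ IsLocalRing.maximalIdeal O := by
    rw [IsLocalRing.mem_maximalIdeal]
    intro hu
    obtain ⟨c, hc⟩ := hu.exists_right_inv
    have h1 : (2 : K) * (c : K) = 1 := congrArg Subtype.val hc
    have h3 : algebraMap ℚ_[2] K (2⁻¹) = (c : K) := by
      rw [map_inv₀, map_ofNat]
      exact inv_eq_of_mul_eq_one_right h1
    have h4 := (hO 2⁻¹).mp (by rw [h3]; exact c.2)
    rw [norm_inv] at h4
    have h5 : ‖(2 : ℚ_[2])‖ = 2⁻¹ := by simpa using Padic.norm_p (p := 2)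
    rw [h5] at h4
    norm_num at h4
  let algK : Algebra ℤ_[2] K := ((algebraMap ℚ_[2] K).comp (algebraMap ℤ_[2] ℚ_[2])).toAlgebra
  have : IsScalarTower ℤ_[2] ℚ_[2] K := IsScalarTower.of_algebraMap_eq fun _ => rfl
  let algO : Algebra ℤ_[2] O := (((algebraMap ℤ_[2] K)).codRestrict O.toSubring
    (fun x => (hO (x : ℚ_[2])).mpr x.2)).toAlgebra
  have : IsScalarTower ℤ_[2] O K := IsScalarTower.of_algebraMap_eq fun _ => rfl
  obtain ⟨hdvr, hfr⟩ := aux_frac K O h2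
  have hperf := aux_perf K O h2 hfr
  have hOL : ∀ x : O, algebraMap O L x = algebraMap K L (x : K) :=
    fun x => IsScalarTower.algebraMap_apply O K L x
  have hOLi : Function.Injective (algebraMap O L) := by
    intro x y h
    rw [hOL, hOL] at h
    exact Subtype.ext ((algebraMap K L).injective h)
  have hSi : Function.Injective (algebraMap O (integralClosure O L)) := by
    intro x y h
    exact hOLi (congrArg Subtype.val h)
  have hβint : IsIntegral O β := by
    apply IsIntegral.of_pow two_pos
    rw [hβ, ← hOL]
    exact isIntegral_algebraMap
  have hKint : ∀ x : K, IsIntegral O (algebraMap K L x) → ∃ y : O, (y : K) = x := by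
    intro x hx
    have h1 : IsIntegral O x := (isIntegral_algebraMap_iff (algebraMap K L).injective).mp hx
    exact IsIntegrallyClosed.isIntegral_iff.mp h1
  have hle : ∀ Q : Ideal (integralClosure O L),
      Q.comap (algebraMap O (integralClosure O L)) = IsLocalRing.maximalIdeal O →
      (IsLocalRing.maximalIdeal O).map (algebraMap O (integralClosure O L)) ≤ Q := by
    intro Q hQ
    rw [Ideal.map_le_iff_le_comap, hQ]
  constructor
  · intro h
    obtain ⟨Q, hQ, hQm⟩ := Ideal.exists_ideal_over_maximal_of_isIntegral
      (S := integralClosure O L) (IsLocalRing.maximalIdeal O)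
      (by rw [(RingHom.injective_iff_ker_eq_bot _).mp hSi]; exact bot_le)
    have hram : ¬ (IsLocalRing.maximalIdeal O).map (algebraMap O (integralClosure O L)) ≤ Q ^ 2 := by
      rw [← Ideal.ramificationIdx'_ne_one_iff (hle Q hQm)]
      exact not_not.mpr (h Q hQ hQm)
    refine aux_fwd h2 h20 hperf α hαunit Q hQm hram (⟨β, hβint⟩ : integralClosure O L) ?_ ?_ hSi
    · apply Subtype.ext
      show β ^ 2 = algebraMap O L α
      rw [hβ, hOL]
    · intro c s p q hc hs
      have hc0 : algebraMap O L c ≠ 0 := by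
        rwa [Ne, map_eq_zero_iff _ hOLi]
      have hs' : (s : L) ^ 2 + algebraMap O L (c * p) * s + algebraMap O L (c ^ 2 * q) = 0 :=
        congrArg Subtype.val hs
      have hy : IsIntegral O ((s : L) / algebraMap O L c) := by
        refine ⟨Polynomial.X ^ 2 + Polynomial.C p * Polynomial.X + Polynomial.C q, ?_, ?_⟩
        · monicity!
        · simp only [Polynomial.eval₂_add, Polynomial.eval₂_mul, Polynomial.eval₂_pow,
            Polynomial.eval₂_X, Polynomial.eval₂_C]
          simp only [map_mul, map_pow] at hs'
          field_simp
          linear_combination hs'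
      refine ⟨⟨_, hy⟩, ?_⟩
      apply Subtype.ext
      show (s : L) = algebraMap O L c * (s / algebraMap O L c)
      field_simp
  · rintro ⟨u, hu, c, hc⟩ Q hQ hQm
    by_contra hne
    rw [← Ne, Ideal.ramificationIdx'_ne_one_iff (hle Q hQm)] at hne
    have : FiniteDimensional K L := by
      have h1 : (Algebra.adjoin K {β}).toSubmodule.FG :=
        (hβint.tower_top (A := K)).fg_adjoin_singleton
      rw [hgen] at h1
      exact ⟨h1⟩
    have : IsDedekindDomain (integralClosure O L) := integralClosure.isDedekindDomain O K L
    obtain ⟨α', hα'⟩ := hαunit.exists_right_inv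
    have hα1 : algebraMap K L (α : K) * algebraMap O L α' = 1 := by
      rw [← hOL, ← map_mul, hα', map_one]
    have hc' : algebraMap O L u ^ 2 - algebraMap K L (α : K) = 4 * algebraMap O L c := by
      rw [← hOL, ← map_pow, ← map_sub, hc, map_mul, map_ofNat]
    have hγint : IsIntegral O ((β + algebraMap O L u) / 2) := by
      refine ⟨Polynomial.X ^ 2 - Polynomial.C u * Polynomial.X + Polynomial.C c, ?_, ?_⟩
      · monicity!
      · simp only [Polynomial.eval₂_add, Polynomial.eval₂_sub, Polynomial.eval₂_mul,
          Polynomial.eval₂_pow, Polynomial.eval₂_X, Polynomial.eval₂_C]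
        linear_combination (1 / 4) * hβ - (1 / 4) * hc'
    let γ : integralClosure O L := ⟨_, hγint⟩
    let B : integralClosure O L := ⟨β, hβint⟩
    have hmQ : ∀ x : O, algebraMap O (integralClosure O L) x ∈ Q →
        algebraMap O (integralClosure O L) x ∈ Q ^ 2 := by
      intro x hx
      apply hne
      apply Ideal.mem_map_of_mem
      rw [← hQm]; exact hx
    have hidem : Q ≤ Q ^ 2 := by
      intro z hz
      obtain ⟨x, y, hxy⟩ := aux_repr (α : K) β hβ hgen (z : L)
      have hzint : IsIntegral O (z : L) := z.2
      have hz'int : IsIntegral O (algebraMap K L x - algebraMap K L y * β) := by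
        apply aux_conj_int (α : K) hαns β hβ
        rw [← hxy]; exact hzint
      let z' : integralClosure O L := ⟨_, hz'int⟩
      have hz'v : (z' : L) = algebraMap K L x - algebraMap K L y * β := rfl
      obtain ⟨b, hb⟩ := hKint (2 * y) (by
        have h1 := ((hzint.sub hz'int).mul hβint).mul
          (isIntegral_algebraMap (R := O) (A := L) (x := α'))
        have h3 : ((z : L) - (algebraMap K L x - algebraMap K L y * β)) * β * algebraMap O L α'
            = algebraMap K L (2 * y) := by
          rw [hxy, map_mul, map_ofNat]
          linear_combination 2 * algebraMap K L y * algebraMap O L α' * hβ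
            + 2 * algebraMap K L y * hα1
        rwa [h3] at h1)
      have hbL : algebraMap O L b = 2 * algebraMap K L y := by
        rw [hOL, hb, map_mul, map_ofNat]
      obtain ⟨a, ha⟩ := hKint (x - y * (u : K)) (by
        have h1 := hzint.sub ((isIntegral_algebraMap (R := O) (A := L) (x := b)).mul hγint)
        have h3 : (z : L) - algebraMap O L b * ((β + algebraMap O L u) / 2)
            = algebraMap K L (x - y * (u : K)) := by
          rw [hxy, hbL, map_sub, map_mul, ← hOL u]
          ring
        rwa [h3] at h1)
      have haL : algebraMap O L a = algebraMap K L x - algebraMap K L y * algebraMap O L u := by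
        rw [hOL, ha, map_sub, map_mul, ← hOL u]
      have hzab : z = algebraMap O _ a + algebraMap O _ b * γ := by
        apply Subtype.ext
        show (z : L) = algebraMap O L a + algebraMap O L b * ((β + algebraMap O L u) / 2)
        rw [hxy, hbL, haL]; ring
      by_cases hz'Q : z' ∈ Q
      · have hbQ : algebraMap O (integralClosure O L) b ∈ Q := by
          have h1 : algebraMap O (integralClosure O L) b
              = (z - z') * (B * algebraMap O _ α') := by
            apply Subtype.ext
            show algebraMap O L b = ((z : L) - z') * (β * algebraMap O L α')
            rw [hbL, hz'v, hxy]
            linear_combination (-2) * algebraMap K L y * algebraMap O L α' * hβ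
              - 2 * algebraMap K L y * hα1
          rw [h1]
          exact Ideal.mul_mem_right _ _ (Ideal.sub_mem _ hz hz'Q)
        have haQ : algebraMap O (integralClosure O L) a ∈ Q := by
          have h1 : algebraMap O (integralClosure O L) a = z - algebraMap O _ b * γ := by
            rw [hzab]; ring
          rw [h1]
          exact Ideal.sub_mem _ hz (Ideal.mul_mem_right _ _ hbQ)
        rw [hzab]
        exact Ideal.add_mem _ (hmQ _ haQ) (Ideal.mul_mem_right _ _ (hmQ _ hbQ))
      · obtain ⟨n, hn⟩ := hKint (x ^ 2 - y ^ 2 * (α : K)) (by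
          have h1 := hzint.mul hz'int
          have h3 : (z : L) * (algebraMap K L x - algebraMap K L y * β)
              = algebraMap K L (x ^ 2 - y ^ 2 * (α : K)) := by
            rw [hxy]
            simp only [map_sub, map_mul, map_pow, ← hβ]
            ring
          rwa [h3] at h1)
        have hnz : z * z' = algebraMap O _ n := by
          apply Subtype.ext
          show (z : L) * z' = algebraMap O L n
          rw [hOL, hn, hz'v, hxy]
          simp only [map_sub, map_mul, map_pow, ← hβ]
          ring
        have hzz : z * z' ∈ Q ^ 2 := by
          rw [hnz]
          apply hmQ
          rw [← hnz]
          exact Ideal.mul_mem_right _ _ hz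
        obtain ⟨r, i, hi, hr⟩ := hQ.exists_inv hz'Q
        have h1 : z = r * (z * z') + z * i := by linear_combination (-z) * hr
        rw [h1]
        refine Ideal.add_mem _ (Ideal.mul_mem_left _ _ hzz) ?_
        rw [sq]; exact Ideal.mul_mem_mul hz hi
    have hQ0 : Q ≠ ⊥ := by
      intro h0
      have h3 : algebraMap O (integralClosure O L) 2 ∈ Q := hle Q hQm (Ideal.mem_map_of_mem _ h2)
      rw [h0, Ideal.mem_bot, map_eq_zero_iff _ hSi] at h3
      exact h20 h3
    have h5 := Ideal.pow_right_strictAnti Q hQ0 hQ.ne_top (show 1 < 2 by norm_num)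
    have h6 : Q ^ 2 < Q ^ 1 := h5
    rw [pow_one] at h6
    exact absurd hidem (not_le_of_gt h6)
end

section
/- Let K = ℚ₂(√−1), the extension of ℚ₂ generated by a square root of −1, with valuation ring O_K, and let α ∈ O_K be a unit. Then the extension K(⁴√α)/K, obtained by adjoining a root of X⁴ − α, is unramified if and only if α ≡ 1 (mod 8) or α ≡ 1 + 4√−1 (mod 8). -/
namespace Q2i
open Polynomial

lemma fwd1 {S : Type*} [CommRing S] (J b a : S) (hJ : J ^ 2 = -1) (hb : b ^ 4 = a)
    (hred : ∀ u : S, (1 + J) ∣ u ^ 2 → (1 + J) ∣ u) (ha : (1 + J) ∣ a - 1) :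
    ∃ t, a - 1 = (1 + J) ^ 4 * ((t ^ 2 + t) * (t ^ 2 + t - (1 + J) * ((1 + J) * t + 1))) := by
  obtain ⟨e, he⟩ := ha
  have h2 : (2 : S) = (1 + J) * (1 - J) := by linear_combination hJ
  have h4 : (1 + J) ∣ ((b - 1) ^ 2) ^ 2 := by
    refine ⟨e + (1 - J) * (-2 * b ^ 3 + 3 * b ^ 2 - 2 * b + 1), ?_⟩
    linear_combination hb + he + (-2 * b ^ 3 + 3 * b ^ 2 - 2 * b + 1) * h2
  obtain ⟨t, ht⟩ := hred _ (hred _ h4)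
  refine ⟨t, ?_⟩
  have hb1 : b = 1 + (1 + J) * t := by linear_combination ht
  have h3 : b ^ 4 - 1 = (b - 1) * (b + 1) * (b - J) * (b + J) := by
    linear_combination (b ^ 2 - 1) * hJ
  have e1 : b + 1 = (1 + J) * (t - J * (1 + J) + (1 + J ^ 2)) := by
    rw [hb1]; linear_combination hJ
  have e2 : b - J = (1 + J) * (t - J) := by
    rw [hb1]; linear_combination hJ
  have e3 : b + J = (1 + J) * (t + 1) := by
    rw [hb1]; ring
  have e4 : (t - J * (1 + J)) * (t - J) = t ^ 2 + t - (1 + J) * ((1 + J) * t + 1) := by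
    linear_combination (1 + J) * hJ
  rw [← hb, h3, ht, e1, e2, e3, ← e4, hJ]; ring

lemma fwd2a {S : Type*} [CommRing S] [IsDomain S] (p c t d : S) (hp : p ≠ 0) 
    (hred : ∀ u : S, p ∣ u ^ 2 → p ∣ u)
    (hc : c = (t ^ 2 + t) * (t ^ 2 + t - p * (p * t + 1)))
    (hd : c = p + p ^ 2 * d) : p ∣ 1 := by
  obtain ⟨r, hr⟩ := hred (t ^ 2 + t) ⟨1 + p * d + (t ^ 2 + t) * (p * t + 1), by
    linear_combination hd - hc⟩
  refine ⟨r * (r - (p * t + 1)) - d, ?_⟩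
  apply mul_left_cancel₀ hp
  rw [hr] at hc
  linear_combination hc - hd

lemma fwd2b {S : Type*} [CommRing S] [IsDomain S] (p c t d m : S) (hp : p ≠ 0)
    (h2 : 2 = p * m)
    (hred : ∀ u : S, p ∣ u ^ 2 → p ∣ u)
    (hc : c = (t ^ 2 + t) * (t ^ 2 + t - p * (p * t + 1)))
    (hd : c = 1 + p ^ 2 * d) : p ∣ 1 := by
  obtain ⟨r, hr⟩ := hred (t ^ 2 + t + 1) ⟨p * d + (t ^ 2 + t) * (p * t + 1)
      + m * (t ^ 2 + t + 1), by
    linear_combination hd - hc + (t ^ 2 + t + 1) * h2⟩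
  have hr' : t ^ 2 + t = p * r - 1 := by linear_combination hr
  refine ⟨d - r ^ 2 + m * r + r * (p * t + 1) - t, ?_⟩
  apply mul_left_cancel₀ hp
  rw [hr'] at hc
  linear_combination hd - hc + p * r * h2

lemma ram_iff {O S : Type*} [CommRing O] [IsLocalRing O] [CommRing S] [IsDedekindDomain S]
    [Algebra O S] (ϖ : O) (hm : IsLocalRing.maximalIdeal O = Ideal.span {ϖ})
    (h0 : algebraMap O S ϖ ≠ 0) :
    (∀ Q : Ideal S, Q.IsMaximal →
        Q.comap (algebraMap O S) = IsLocalRing.maximalIdeal O →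
        Ideal.ramificationIdx' (IsLocalRing.maximalIdeal O) Q = 1) ↔
      ∀ u : S, algebraMap O S ϖ ∣ u ^ 2 → algebraMap O S ϖ ∣ u := by
  have hmap : Ideal.map (algebraMap O S) (IsLocalRing.maximalIdeal O)
      = Ideal.span {algebraMap O S ϖ} := by
    rw [hm, Ideal.map_span, Set.image_singleton]
  have hne : Ideal.span {algebraMap O S ϖ} ≠ 0 := by
    simpa [Ideal.zero_eq_bot, Ideal.span_singleton_eq_bot] using h0
  constructor
  · intro H u hu
    have hsq : Squarefree (Ideal.span {algebraMap O S ϖ}) := by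
      rw [squarefree_iff_irreducible_sq_not_dvd_of_ne_zero hne]
      intro Q hQ hdvd
      rw [Ideal.dvd_iff_le] at hdvd
      have hQp : Prime Q := hQ.prime
      have hQm : Q.IsMaximal := (Ideal.isPrime_of_prime hQp).isMaximal hQp.ne_zero
      have hle : Ideal.span {algebraMap O S ϖ} ≤ Q := hdvd.trans Ideal.mul_le_left
      have := H Q hQm (by
        symm
        apply (IsLocalRing.maximalIdeal.isMaximal O).eq_of_le
        · exact Ideal.comap_ne_top _ hQm.ne_top
        · rw [← Ideal.map_le_iff_le_comap, hmap]; exact hle)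
      refine absurd this ?_
      rw [← ne_eq, Ideal.ramificationIdx'_ne_one_iff (by rw [hmap]; exact hle), hmap, pow_two]
      exact hdvd
    have hr := ((isRadical_iff_squarefree_of_ne_zero hne).2 hsq) 2 (Ideal.span {u}) (by
      rw [Ideal.span_singleton_pow, Ideal.dvd_iff_le, Ideal.span_singleton_le_span_singleton]
      exact hu)
    rwa [Ideal.dvd_iff_le, Ideal.span_singleton_le_span_singleton] at hr
  · intro H Q hQ hcomap
    have hle : Ideal.map (algebraMap O S) (IsLocalRing.maximalIdeal O) ≤ Q := by
      rw [Ideal.map_le_iff_le_comap, hcomap]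
    by_contra hcon
    rw [← ne_eq, Ideal.ramificationIdx'_ne_one_iff hle, hmap] at hcon
    have hrad : IsRadical (Ideal.span {algebraMap O S ϖ}) := by
      rw [isRadical_iff_pow_one_lt 2 one_lt_two]
      intro I hI
      rw [Ideal.dvd_iff_le] at hI ⊢
      intro u hu
      rw [Ideal.mem_span_singleton]
      apply H
      rw [← Ideal.mem_span_singleton]
      exact hI (Ideal.pow_mem_pow hu 2)
    have hsq := (isRadical_iff_squarefree_of_ne_zero hne).1 hrad
    have := hsq Q (by rw [Ideal.dvd_iff_le, ← pow_two]; exact hcon)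
    exact hQ.ne_top (Ideal.isUnit_iff.1 this)

lemma quad {O K L : Type*} [CommRing O] [Field K] [Field L] [Algebra K L] [Algebra O K]
    [Algebra O L] [IsScalarTower O K L] (F : IntermediateField K L) (w z e : L)
    (hz : z ∈ F) (hzi : IsIntegral O z) (hei : IsIntegral O e)
    (hw : w ^ 2 + w = z) (he : e * (1 + 4 * z) = 1) (c0 c1 : L) (h0 : c0 ∈ F) (h1 : c1 ∈ F)
    (hu : IsIntegral O (c0 + c1 * w)) :
    ∃ d0 ∈ F, ∃ d1 ∈ F, IsIntegral O d0 ∧ IsIntegral O d1 ∧ c0 + c1 * w = d0 + d1 * w := by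
  by_cases hwF : w ∈ F
  · exact ⟨_, F.add_mem h0 (F.mul_mem h1 hwF), 0, F.zero_mem, hu, isIntegral_zero, by ring⟩
  have hwi : IsIntegral O w := by
    have : IsIntegral O (w * (w + 1)) := by
      have : w * (w + 1) = z := by rw [← hw]; ring
      rwa [this]
    refine IsIntegral.of_aeval_monic (p := (X ^ 2 + X : O[X])) ?_ ?_ ?_
    · monicity!
    · have : (X ^ 2 + X : O[X]).natDegree = 2 ∨ Subsingleton O := by
        rcases subsingleton_or_nontrivial O with h | h
        · exact Or.inr h
        · left; compute_degree!
      rcases this with h | h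
      · rw [h]; norm_num
      · exfalso
        have : (1 : K) = 0 := by
          rw [← map_one (algebraMap O K), Subsingleton.elim (1 : O) 0, map_zero]
        exact one_ne_zero this
    · simpa [hw] using hzi
  have hconj : IsIntegral O (c0 + c1 * (-1 - w)) := by
    obtain ⟨p, hpm, hp⟩ := hu
    refine ⟨p, hpm, ?_⟩
    let f : O →+* F := (algebraMap K F).comp (algebraMap O K)
    have hf : (algebraMap F L).comp f = algebraMap O L := by
      ext x
      simp only [f, RingHom.comp_apply]
      rw [← IsScalarTower.algebraMap_apply K F L, ← IsScalarTower.algebraMap_apply O K L]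
    let P : F[X] := (p.map f).comp (C ⟨c0, h0⟩ + C ⟨c1, h1⟩ * X)
    have hP : ∀ v : L, aeval v P = eval₂ (algebraMap O L) (c0 + c1 * v) p := by
      intro v
      simp only [P, aeval_def, eval₂_comp, eval₂_map, hf]
      congr 1
      simp
    let q : F[X] := X ^ 2 + X - C ⟨z, hz⟩
    have hq : q.Monic := by simp only [q]; monicity!
    have hqd : q.natDegree = 2 := by simp only [q]; compute_degree!
    have hqv : ∀ v : L, aeval v q = v ^ 2 + v - z := by
      intro v
      simp only [q, map_sub, map_add, map_pow, aeval_X, aeval_C]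
      rfl
    have hdiv := modByMonic_add_div P q
    have hdeg : (P %ₘ q).natDegree ≤ 1 := by
      have := natDegree_modByMonic_lt P hq (by intro h; rw [h] at hqd; simp at hqd)
      omega
    obtain ⟨b, a, hab⟩ := exists_eq_X_add_C_of_natDegree_le_one hdeg
    have hPw : aeval w P = 0 := by rw [hP]; exact hp
    have hr : (b : L) * w + a = 0 := by
      rw [← hdiv, map_add, map_mul, hqv, hw, sub_self, zero_mul, add_zero, hab] at hPw
      simpa using hPw
    have hb : b = 0 := by
      by_contra hb
      apply hwF
      have hb' : (b : L) ≠ 0 := by simpa using hb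
      have : w = -a / b := by field_simp; linear_combination hr
      rw [this]
      exact F.div_mem (F.neg_mem a.2) b.2
    have ha : a = 0 := by
      rw [hb] at hr
      simpa using hr
    rw [← hP, ← hdiv, map_add, map_mul, hqv, hab, hb, ha]
    have : (-1 - w) ^ 2 + (-1 - w) - z = 0 := by rw [← hw]; ring
    rw [this]; simp
  have hc1 : IsIntegral O c1 := by
    have h : IsIntegral O (e * ((c0 + c1 * w) - (c0 + c1 * (-1 - w))) ^ 2) :=
      hei.mul ((hu.sub hconj).pow 2)
    have h' : e * ((c0 + c1 * w) - (c0 + c1 * (-1 - w))) ^ 2 = c1 ^ 2 := by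
      linear_combination c1 ^ 2 * he + 4 * e * c1 ^ 2 * hw
    rw [h'] at h
    exact IsIntegral.of_pow two_pos h
  have hc0 : IsIntegral O c0 := by
    have := hu.sub (hc1.mul hwi)
    simpa using this
  exact ⟨c0, h0, c1, h1, hc0, hc1, rfl⟩

lemma sq_padic (c : ℤ_[2]) : ¬ (4 : ℤ_[2]) ∣ 1 + c ^ 2 := by
  rintro ⟨d, hd⟩
  have h := congrArg (PadicInt.toZModPow 2) hd
  simp only [map_add, map_one, map_pow, map_mul, map_ofNat] at h
  generalize PadicInt.toZModPow 2 c = x at h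
  generalize PadicInt.toZModPow 2 d = y at h
  revert x y
  decide

lemma parity (a : ℤ_[2]) : (2 : ℤ_[2]) ∣ a ∨ (2 : ℤ_[2]) ∣ a - 1 := by
  obtain ⟨n, hn, h⟩ := PadicInt.exists_mem_range a
  rw [PadicInt.maximalIdeal_eq_span_p, Ideal.mem_span_singleton] at h
  interval_cases n
  · left; simpa using h
  · right; simpa using h

lemma core {K : Type*} [Field K] [Algebra ℚ_[2] K]
    (i : K) (hi : i ^ 2 = -1) (O : ValuationSubring K)
    (hO : ∀ x : ℚ_[2], algebraMap ℚ_[2] K x ∈ O ↔ ‖x‖ ≤ 1) (j : O) (hj : (j : K) = i)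
    (a b : ℚ_[2]) (h : algebraMap ℚ_[2] K a + algebraMap ℚ_[2] K b * i ∈ O)
    (hab : ‖b‖ ≤ ‖a‖) : ‖a‖ ≤ 1 := by
  by_contra! ha
  have ha0 : a ≠ 0 := by rintro rfl; simp at ha; linarith
  have hainv : ‖a⁻¹‖ < 1 := by rw [norm_inv]; exact inv_lt_one_of_one_lt₀ ha
  have hc : ‖b / a‖ ≤ 1 := by
    rw [norm_div]; exact div_le_one_of_le₀ hab (norm_nonneg _)
  obtain ⟨m, hm⟩ := (PadicInt.norm_lt_one_iff_dvd (⟨a⁻¹, hainv.le⟩ : ℤ_[2])).1 hainv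
  have hm' : a⁻¹ = 2 * (m : ℚ_[2]) := by
    have := congrArg (fun x : ℤ_[2] => (x : ℚ_[2])) hm
    rw [PadicInt.coe_mul] at this
    exact this
  have hiO : i ∈ O := hj ▸ j.2
  set φ := algebraMap ℚ_[2] K
  have hmO : φ m ∈ O := (hO _).2 m.norm_le_one
  have hcO : φ (b / a) ∈ O := (hO _).2 hc
  have hφa : φ a ≠ 0 := by simpa using ha0
  have hφm : φ a * (2 * φ m) = 1 := by
    rw [← map_ofNat φ 2, ← map_mul, ← map_mul, ← hm', mul_inv_cancel₀ ha0, map_one]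
  have hφc : φ (b / a) * φ a = φ b := by
    rw [← map_mul, div_mul_cancel₀ _ ha0]
  set y := φ m * (φ a + φ b * i) with hy
  have hyO : y ∈ O := O.mul_mem _ _ hmO h
  have h1 : 2 * y = 1 + φ (b / a) * i := by
    rw [hy, ← hφc]; linear_combination (1 + φ (b / a) * i) * hφm
  have h2 : φ ((1 + (b / a) ^ 2) / 4) = y * (1 - y) := by
    have h4 : (4 : K) ≠ 0 := by
      rw [← map_ofNat φ 4, ne_eq, map_eq_zero]; norm_num
    have : φ ((1 + (b / a) ^ 2) / 4) * 4 = 1 + φ (b / a) ^ 2 := by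
      rw [← map_ofNat φ 4, ← map_mul, div_mul_cancel₀ _ (by norm_num)]; simp
    apply mul_right_cancel₀ h4
    rw [this]
    linear_combination (-2 + 2 * y + φ (b / a) * i - 1 + 2) * h1 + φ (b / a) ^ 2 * hi
  have h3 : ‖(1 + (b / a) ^ 2) / 4‖ ≤ 1 := by
    rw [← hO, h2]
    exact O.mul_mem _ _ hyO (sub_mem O.one_mem hyO)
  apply sq_padic ⟨b / a, hc⟩
  refine ⟨⟨_, h3⟩, ?_⟩
  apply Subtype.ext
  change 1 + (b / a) ^ 2 = 4 * ((1 + (b / a) ^ 2) / 4)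
  field_simp

lemma decomp {K : Type*} [Field K] [Algebra ℚ_[2] K]
    (i : K) (hi : i ^ 2 = -1) (hKgen : Algebra.adjoin ℚ_[2] {i} = ⊤) (O : ValuationSubring K)
    (hO : ∀ x : ℚ_[2], algebraMap ℚ_[2] K x ∈ O ↔ ‖x‖ ≤ 1) (j : O) (hj : (j : K) = i)
    (x : O) : ∃ a b : ℤ_[2],
    (x : K) = algebraMap ℚ_[2] K a + algebraMap ℚ_[2] K b * i := by
  have hx : (x : K) ∈ Algebra.adjoin ℚ_[2] {i} := by rw [hKgen]; trivial
  have : ∃ a b : ℚ_[2], (x : K) = algebraMap ℚ_[2] K a + algebraMap ℚ_[2] K b * i := by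
    generalize (x : K) = x at hx
    induction hx using Algebra.adjoin_induction with
    | mem y hy => exact ⟨0, 1, by simp_all⟩
    | algebraMap r => exact ⟨r, 0, by simp⟩
    | add y z _ _ h1 h2 =>
      obtain ⟨a, b, h⟩ := h1
      obtain ⟨c, d, h'⟩ := h2
      exact ⟨a + c, b + d, by rw [h, h']; simp only [map_add]; ring⟩
    | mul y z _ _ h1 h2 =>
      obtain ⟨a, b, h⟩ := h1
      obtain ⟨c, d, h'⟩ := h2
      refine ⟨a * c - b * d, a * d + b * c, ?_⟩
      rw [h, h']; simp only [map_add, map_sub, map_mul]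
      linear_combination algebraMap ℚ_[2] K b * algebraMap ℚ_[2] K d * hi
  obtain ⟨a, b, hab⟩ := this
  have hxO : algebraMap ℚ_[2] K a + algebraMap ℚ_[2] K b * i ∈ O := hab ▸ x.2
  have key : ‖a‖ ≤ 1 ∧ ‖b‖ ≤ 1 := by
    rcases le_total ‖b‖ ‖a‖ with h | h
    · have := core i hi O hO j hj a b hxO h
      exact ⟨this, h.trans this⟩
    · have := core i hi O hO j hj b (-a) (by
        have h2 : (-i) * (algebraMap ℚ_[2] K a + algebraMap ℚ_[2] K b * i) ∈ O :=
          O.mul_mem _ _ (O.neg_mem _ (hj ▸ j.2)) hxO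
        convert h2 using 1
        rw [map_neg]; linear_combination algebraMap ℚ_[2] K b * hi) (by rwa [norm_neg])
      exact ⟨h.trans this, this⟩
  exact ⟨⟨a, key.1⟩, ⟨b, key.2⟩, hab⟩

lemma exists_hom {K : Type*} [Field K] [Algebra ℚ_[2] K]
    (i : K) (hi : i ^ 2 = -1) (hKgen : Algebra.adjoin ℚ_[2] {i} = ⊤) (O : ValuationSubring K)
    (hO : ∀ x : ℚ_[2], algebraMap ℚ_[2] K x ∈ O ↔ ‖x‖ ≤ 1) (j : O) (hj : (j : K) = i) : ∃ φ : ℤ_[2] →+* O, (∀ x : O, ∃ a b, x = φ a + φ b * j) := by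
  let φ : ℤ_[2] →+* O := ((algebraMap ℚ_[2] K).comp PadicInt.Coe.ringHom).codRestrict O.toSubring
    (fun x => (hO _).2 x.norm_le_one)
  refine ⟨φ, fun x => ?_⟩
  obtain ⟨a, b, h⟩ := decomp i hi hKgen O hO j hj x
  refine ⟨a, b, Subtype.ext ?_⟩
  rw [h, ← hj]; rfl

lemma noeth {K : Type*} [Field K] [Algebra ℚ_[2] K]
    (i : K) (hi : i ^ 2 = -1) (hKgen : Algebra.adjoin ℚ_[2] {i} = ⊤) (O : ValuationSubring K)
    (hO : ∀ x : ℚ_[2], algebraMap ℚ_[2] K x ∈ O ↔ ‖x‖ ≤ 1) (j : O) (hj : (j : K) = i) : IsNoetherianRing O := by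
  obtain ⟨φ, h⟩ := exists_hom i hi hKgen O hO j hj
  refine isNoetherianRing_of_surjective ℤ_[2][X] O (eval₂RingHom φ j) fun x => ?_
  obtain ⟨a, b, h⟩ := h x
  exact ⟨C a + C b * X, by simp [h]⟩

lemma j_sq {K : Type*} [Field K] (i : K) (hi : i ^ 2 = -1)
    (O : ValuationSubring K) (j : O) (hj : (j : K) = i) : j ^ 2 = -1 := by
  apply Subtype.ext; simp [hj, hi]

lemma res {K : Type*} [Field K] [Algebra ℚ_[2] K]
    (i : K) (hi : i ^ 2 = -1) (hKgen : Algebra.adjoin ℚ_[2] {i} = ⊤) (O : ValuationSubring K)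
    (hO : ∀ x : ℚ_[2], algebraMap ℚ_[2] K x ∈ O ↔ ‖x‖ ≤ 1) (j : O) (hj : (j : K) = i)
    (x : O) : (1 + j) ∣ x ∨ (1 + j) ∣ x - 1 := by
  obtain ⟨φ, h⟩ := exists_hom i hi hKgen O hO j hj
  obtain ⟨a, b, h⟩ := h x
  have hj2 := j_sq i hi O j hj
  have h2 : ∀ a : ℤ_[2], 2 ∣ a → (1 + j) ∣ φ a := by
    rintro _ ⟨d, rfl⟩
    refine ⟨(1 - j) * φ d, ?_⟩
    rw [map_mul, map_ofNat]; linear_combination φ d * hj2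
  have h3 : x = φ (a - b) + (1 + j) * φ b := by rw [h, map_sub]; ring
  rcases parity (a - b) with h' | h'
  · left; rw [h3]; exact dvd_add (h2 _ h') (dvd_mul_right _ _)
  · right
    have : x - 1 = φ (a - b - 1) + (1 + j) * φ b := by rw [h3, map_sub φ (a - b), map_one]; ring
    rw [this]; exact dvd_add (h2 _ h') (dvd_mul_right _ _)

lemma not_unit {K : Type*} [Field K] [Algebra ℚ_[2] K]
    (i : K) (hi : i ^ 2 = -1) (hKgen : Algebra.adjoin ℚ_[2] {i} = ⊤) (O : ValuationSubring K)
    (hO : ∀ x : ℚ_[2], algebraMap ℚ_[2] K x ∈ O ↔ ‖x‖ ≤ 1) (j : O) (hj : (j : K) = i) : ¬ IsUnit (1 + j) := by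
  intro h
  have hj2 := j_sq i hi O j hj
  have : (2 : O) = (1 + j) ^ 2 * (-j) := by linear_combination (2 + j) * hj2
  have hju : IsUnit (-j) := IsUnit.of_mul_eq_one j (by linear_combination -hj2)
  have h2 : IsUnit (2 : O) := by rw [this]; exact (h.pow 2).mul hju
  obtain ⟨r, hr⟩ := h2.exists_right_inv
  have hr' : (2 : K) * r = 1 := congrArg Subtype.val hr
  have h2K : (2 : K) ≠ 0 := by intro h; simp [h] at hr'
  have : algebraMap ℚ_[2] K 2⁻¹ = r := by
    apply mul_left_cancel₀ h2K
    rw [hr', map_inv₀, map_ofNat, mul_inv_cancel₀ h2K]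
  have h3 := (hO 2⁻¹).1 (this ▸ r.2)
  rw [norm_inv] at h3
  have : ‖(2 : ℚ_[2])‖ = 2⁻¹ := by simpa using Padic.norm_p (p := 2)
  rw [this] at h3
  norm_num at h3

lemma maxIdeal {K : Type*} [Field K] [Algebra ℚ_[2] K]
    (i : K) (hi : i ^ 2 = -1) (hKgen : Algebra.adjoin ℚ_[2] {i} = ⊤) (O : ValuationSubring K)
    (hO : ∀ x : ℚ_[2], algebraMap ℚ_[2] K x ∈ O ↔ ‖x‖ ≤ 1) (j : O) (hj : (j : K) = i) : IsLocalRing.maximalIdeal O = Ideal.span {1 + j} := by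
  have hnu := not_unit i hi hKgen O hO j hj
  have hmem : 1 + j ∈ IsLocalRing.maximalIdeal O := hnu
  apply le_antisymm
  · intro x hx
    rw [Ideal.mem_span_singleton]
    rcases res i hi hKgen O hO j hj x with h | ⟨d, h⟩
    · exact h
    · exfalso
      have h1 : x - 1 ∈ IsLocalRing.maximalIdeal O := h ▸ Ideal.mul_mem_right _ _ hmem
      have := Ideal.sub_mem _ hx h1
      rw [sub_sub_cancel] at this
      exact (Ideal.ne_top_iff_one _).1 (IsLocalRing.maximalIdeal.isMaximal O).ne_top this
  · rw [Ideal.span_le]; simpa using hmem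

end Q2i
namespace Q2i
open Polynomial

lemma frob1 {R : Type*} [CommRing R] (h2 : (2 : R) = 0) (x y : R) (hx : x ^ 2 = x)
    (hy : y ^ 2 + y = x) : y ^ 4 = y := by
  have h : y ^ 2 = x - y := by linear_combination hy
  have : y ^ 4 = (x - y) ^ 2 := by rw [← h]; ring
  rw [this]
  linear_combination hx + h + (x - x * y - y) * h2

lemma frob2 {R : Type*} [CommRing R] (h2 : (2 : R) = 0) (z w : R) (hz : z ^ 4 = z)
    (hw : w ^ 2 + w = z) : w ^ 16 = w := by
  have h : w ^ 2 = z + w := by linear_combination hw - w * h2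
  have h4 : w ^ 4 = z ^ 2 + z + w := by
    have : w ^ 4 = (z + w) ^ 2 := by rw [← h]; ring
    rw [this]; linear_combination h + z * w * h2
  have h8 : w ^ 8 = z ^ 2 + w := by
    have : w ^ 8 = (z ^ 2 + z + w) ^ 2 := by rw [← h4]; ring
    rw [this]; linear_combination h + hz + (z ^ 3 + z ^ 2 * w + z * w + z) * h2
  have : w ^ 16 = (z ^ 2 + w) ^ 2 := by rw [← h8]; ring
  rw [this]; linear_combination h + hz + (z ^ 2 * w + z) * h2

/-- the span of `1, w` over `F` is everything in `adjoin`. -/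
lemma span_two {K L : Type*} [Field K] [Field L] [Algebra K L] (F : IntermediateField K L)
    (w z b : L) (hz : z ∈ F) (hw : w ^ 2 + w = z)
    (hb : ∃ c0 ∈ F, ∃ c1 ∈ F, b = c0 + c1 * w) (u : L) (hu : u ∈ Algebra.adjoin K {b}) :
    ∃ c0 ∈ F, ∃ c1 ∈ F, u = c0 + c1 * w := by
  induction hu using Algebra.adjoin_induction with
  | mem y hy => 
    rw [Set.mem_singleton_iff.1 hy]; exact hb
  | algebraMap r => exact ⟨algebraMap K L r, F.algebraMap_mem r, 0, F.zero_mem, by simp⟩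
  | add y z _ _ h1 h2 =>
    obtain ⟨a, ha, b, hb, h⟩ := h1
    obtain ⟨c, hc, d, hd, h'⟩ := h2
    exact ⟨a + c, F.add_mem ha hc, b + d, F.add_mem hb hd, by rw [h, h']; ring⟩
  | mul y v _ _ h1 h2 =>
    obtain ⟨a, ha, b, hb, h⟩ := h1
    obtain ⟨c, hc, d, hd, h'⟩ := h2
    refine ⟨a * c + b * d * z, F.add_mem (F.mul_mem ha hc) (F.mul_mem (F.mul_mem hb hd) hz),
      a * d + b * c - b * d, F.sub_mem (F.add_mem (F.mul_mem ha hd) (F.mul_mem hb hc))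
        (F.mul_mem hb hd), ?_⟩
    rw [h, h']; linear_combination b * d * hw

lemma bwd {O K L : Type*} [CommRing O] [IsLocalRing O] [IsDomain O] [IsIntegrallyClosed O]
    [Field K] [Field L] [Algebra O K] [IsFractionRing O K]
    [Algebra K L] [Algebra O L] [IsScalarTower O K L] [CharZero L]
    (j : O) (hj : j ^ 2 = -1) (hres : ∀ x : O, (1 + j) ∣ x ∨ (1 + j) ∣ x - 1)
    (hnu : ¬ IsUnit (1 + j)) (α : O) (hαu : IsUnit α) (β : L) (hβ : β ^ 4 = algebraMap O L α)
    (hgen : Algebra.adjoin K {β} = ⊤) (x ε d : O) (hα : α = 1 + 4 * x) (hx : x = ε * j + 2 * d)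
    (hε : ε = 0 ∨ ε = 1) (u : integralClosure O L)
    (hu : algebraMap O (integralClosure O L) (1 + j) ∣ u ^ 2) :
    algebraMap O (integralClosure O L) (1 + j) ∣ u := by
  have hε2 : ε ^ 2 = ε := by rcases hε with rfl | rfl <;> simp
  -- the unit `n`
  let n : O := (1 + (1 + j) * ε) ^ 2 - (1 + (1 + j) * ε) * (1 + j) - (1 + j) ^ 2 * x
  have hn : IsUnit n := by
    rcases IsLocalRing.isUnit_or_isUnit_one_sub_self n with h | h
    · exact h
    · exfalso
      have : 1 - n = (1 + j) * (-2 * ε - (1 + j) * ε ^ 2 + (1 + (1 + j) * ε) + (1 + j) * x) := by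
        simp only [n]; ring
      rw [this] at h
      exact hnu (isUnit_of_mul_isUnit_left h)
  obtain ⟨N, hN⟩ := hn.exists_left_inv
  obtain ⟨A, hA⟩ := hαu.exists_left_inv
  set f := algebraMap O L with hf
  have hfi : ∀ c : O, IsIntegral O (f c) := fun c => isIntegral_algebraMap
  set J := f j with hJdef
  have hJ : J ^ 2 = -1 := by rw [hJdef, ← map_pow, hj]; simp
  have hE2 : f ε ^ 2 = f ε := by rw [← map_pow, hε2]
  have hX : f x = f ε * J + 2 * f d := by rw [hx, map_add, map_mul, map_mul, map_ofNat]
  have hfα : f α = 1 + 4 * f x := by rw [hα, map_add, map_one, map_mul, map_ofNat]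
  have hNn : f N * ((1 + (1 + J) * f ε) ^ 2 - (1 + (1 + J) * f ε) * (1 + J)
      - (1 + J) ^ 2 * f x) = 1 := by
    have := congrArg f hN
    simpa [n, hJdef] using this
  have hAα : f A * f α = 1 := by rw [← map_mul, hA, map_one]
  obtain ⟨y, hy⟩ : ∃ y, β ^ 2 = 1 + 2 * y := ⟨(β ^ 2 - 1) / 2, by field_simp; ring⟩
  have h4 : (4 : L) ≠ 0 := by norm_num
  have hyx : y ^ 2 + y = f x := by
    apply mul_left_cancel₀ h4
    have : β ^ 4 = (1 + 2 * y) ^ 2 := by rw [← hy]; ring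
    linear_combination hβ - this + hfα
  set s := 1 + (1 + J) * (y + f ε) with hs
  set s' := f N * (1 + (1 + J) * f ε - (1 + J) - (1 + J) * y) with hs'
  have hss : s * s' = 1 := by
    rw [hs, hs']; linear_combination hNn - f N * (1 + J) ^ 2 * hyx
  set k := -J * (f ε + f d + f ε * y) with hk
  have hk4 : 1 + 2 * y = s ^ 2 + 4 * k := by
    rw [hs, hk]
    linear_combination (-2 * J) * hyx - (2 * J) * hE2 - (2 * J) * hX
      - (y + f ε) ^ 2 * hJ + (-2 * f ε) * hJ
  set z := k * s' ^ 2 with hz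
  obtain ⟨w, hw1⟩ : ∃ w, β * s' = 1 + 2 * w := ⟨(β * s' - 1) / 2, by field_simp; ring⟩
  have hbb : β = s + 2 * s * w := by linear_combination s * hw1 - β * hss
  have hwz : w ^ 2 + w = z := by
    apply mul_left_cancel₀ h4
    have : (β * s') ^ 2 = (1 + 2 * w) ^ 2 := by rw [hw1]
    rw [hz]
    linear_combination - this + s' ^ 2 * hy + s' ^ 2 * hk4 + (s * s' + 1) * hss
  have he : (β ^ 2 * s ^ 2 * f A) * (1 + 4 * z) = 1 := by
    have h1 : 1 + 4 * z = β ^ 2 * s' ^ 2 := by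
      rw [hz, hy]; linear_combination - s' ^ 2 * hk4 - (s * s' + 1) * hss
    rw [h1]
    linear_combination hAα + f A * hβ * (s * s') ^ 2 + f A * f α * (s * s' + 1) * hss
  -- integrality
  have hβi : IsIntegral O β := by
    refine IsIntegral.of_pow (n := 4) (by norm_num) ?_
    rw [hβ]; exact hfi α
  have hroot : ∀ v c : L, v ^ 2 + v = c → IsIntegral O c → IsIntegral O v := by
    intro v c hv hc
    refine IsIntegral.of_aeval_monic (p := (X ^ 2 + X : O[X])) ?_ ?_ ?_
    · monicity!
    · have : (X ^ 2 + X : O[X]).natDegree = 2 := by compute_degree!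
      rw [this]; norm_num
    · simpa [hv] using hc
  have hyi : IsIntegral O y := hroot _ _ hyx (hfi x)
  have h1i : IsIntegral O (1 : L) := isIntegral_one
  have hpi : IsIntegral O (1 + J) := h1i.add (hfi j)
  have hsi : IsIntegral O s := h1i.add (hpi.mul (hyi.add (hfi ε)))
  have hki : IsIntegral O k := (hfi j).neg.mul (((hfi ε).add (hfi d)).add ((hfi ε).mul hyi))
  have hs'i : IsIntegral O s' :=
    (hfi N).mul (((h1i.add (hpi.mul (hfi ε))).sub hpi).sub (hpi.mul hyi))
  have hzi : IsIntegral O z := hki.mul (hs'i.pow 2)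
  have hwi : IsIntegral O w := hroot _ _ hwz hzi
  -- fields
  let F := IntermediateField.adjoin K {y}
  have hyF : y ∈ F := IntermediateField.mem_adjoin_simple_self K y
  have hfK : ∀ c : O, f c = algebraMap K L (algebraMap O K c) := fun c =>
    IsScalarTower.algebraMap_apply O K L c
  have hfF : ∀ (E : IntermediateField K L) (c : O), f c ∈ E := by
    intro E c; rw [hfK]; exact E.algebraMap_mem _
  have hpF : 1 + J ∈ F := F.add_mem F.one_mem (hfF F j)
  have hsF : s ∈ F := F.add_mem F.one_mem (F.mul_mem hpF (F.add_mem hyF (hfF F ε)))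
  have hkF : k ∈ F := F.mul_mem (F.neg_mem (hfF F j))
    (F.add_mem (F.add_mem (hfF F ε) (hfF F d)) (F.mul_mem (hfF F ε) hyF))
  have hs'F : s' ∈ F := F.mul_mem (hfF F N) (F.sub_mem (F.sub_mem (F.add_mem F.one_mem
    (F.mul_mem hpF (hfF F ε))) hpF) (F.mul_mem hpF hyF))
  have hzF : z ∈ F := F.mul_mem hkF (pow_mem hs'F 2)
  have hF : ∀ v ∈ F, IsIntegral O v → ∃ a b : O, v = f a + f b * y := by
    intro v hv hvi
    have hv' : v ∈ Algebra.adjoin K {y} := by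
      rw [← IntermediateField.adjoin_simple_toSubalgebra_of_isAlgebraic
        (hyi.tower_top (A := K)).isAlgebraic]
      exact hv
    obtain ⟨c0, h0, c1, h1, hc⟩ := span_two (⊥ : IntermediateField K L) y (f x) y (hfF ⊥ x) hyx
      ⟨0, zero_mem _, 1, one_mem _, by ring⟩ v hv'
    rw [hc] at hvi
    obtain ⟨d0, hd0, d1, hd1, hd0i, hd1i, hd⟩ := quad (⊥ : IntermediateField K L) y (f x) (f A)
      (hfF ⊥ x) (hfi x) (hfi A) hyx (by rw [← hfα, hAα]) c0 c1 h0 h1 hvi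
    have hbot : ∀ v ∈ (⊥ : IntermediateField K L), IsIntegral O v → ∃ a : O, v = f a := by
      intro v hv hvi
      obtain ⟨a, rfl⟩ := IntermediateField.mem_bot.1 hv
      have := (isIntegral_algebraMap_iff (algebraMap K L).injective).1 hvi
      obtain ⟨b, rfl⟩ := IsIntegrallyClosed.isIntegral_iff.1 this
      exact ⟨b, (hfK b).symm⟩
    obtain ⟨a, rfl⟩ := hbot _ hd0 hd0i
    obtain ⟨b, rfl⟩ := hbot _ hd1 hd1i
    exact ⟨a, b, hc.trans hd⟩
  have hall : ∀ v : L, IsIntegral O v → ∃ a b c e : O, v = f a + f b * y + (f c + f e * y) * w := by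
    intro v hvi
    obtain ⟨c0, h0, c1, h1, hc⟩ := span_two F w z β hzF hwz
      ⟨s, hsF, 2 * s, F.mul_mem (ofNat_mem F 2) hsF, hbb⟩ v (by rw [hgen]; trivial)
    rw [hc] at hvi
    obtain ⟨d0, hd0, d1, hd1, hd0i, hd1i, hd⟩ := quad F w z _
      hzF hzi (((hβi.pow 2).mul (hsi.pow 2)).mul (hfi A)) hwz he c0 c1 h0 h1 hvi
    obtain ⟨a, b, rfl⟩ := hF _ hd0 hd0i
    obtain ⟨a', b', rfl⟩ := hF _ hd1 hd1i
    exact ⟨a, b, a', b', hc.trans hd⟩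
  -- reduction
  set g := algebraMap O (integralClosure O L) with hg
  by_cases hunit : IsUnit (g (1 + j))
  · exact hunit.dvd
  let I : Ideal (integralClosure O L) := Ideal.span {g (1 + j)}
  have hI : I ≠ ⊤ := by rwa [ne_eq, Ideal.span_singleton_eq_top]
  have hnt : Nontrivial (integralClosure O L ⧸ I) := Ideal.Quotient.nontrivial_iff.2 hI
  let m := Ideal.Quotient.mk I
  have hm0 : ∀ v, m v = 0 ↔ g (1 + j) ∣ v := by
    intro v
    rw [Ideal.Quotient.eq_zero_iff_mem, Ideal.mem_span_singleton]
  have h2 : (2 : integralClosure O L ⧸ I) = 0 := by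
    have : m (g ((1 + j) * (1 - j))) = 0 := by
      rw [hm0, map_mul]; exact dvd_mul_right _ _
    rw [← this, show (1 + j) * (1 - j) = 2 by linear_combination -hj]
    rw [map_ofNat g 2, map_ofNat m 2]
  have hmg : ∀ c : O, m (g c) = 0 ∨ m (g c) = 1 := by
    intro c
    rcases hres c with h | h
    · left; rw [hm0]; exact map_dvd g h
    · right
      have : m (g (c - 1)) = 0 := by rw [hm0]; exact map_dvd g h
      rw [map_sub, map_one, map_sub, map_one] at this
      exact sub_eq_zero.1 this
  have : CharP (integralClosure O L ⧸ I) 2 :=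
    (CharP.charP_iff_prime_eq_zero Nat.prime_two).2 (by exact_mod_cast h2)
  let T2 : Subring (integralClosure O L ⧸ I) :=
    RingHom.eqLocus (iterateFrobenius _ 2 2) (RingHom.id _)
  let T4 : Subring (integralClosure O L ⧸ I) :=
    RingHom.eqLocus (iterateFrobenius _ 2 4) (RingHom.id _)
  have hT2 : ∀ v, v ∈ T2 ↔ v ^ 4 = v := by
    intro v
    change iterateFrobenius _ 2 2 v = v ↔ _
    rw [iterateFrobenius_def]; norm_num
  have hT4 : ∀ v, v ∈ T4 ↔ v ^ 16 = v := by
    intro v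
    change iterateFrobenius _ 2 4 v = v ↔ _
    rw [iterateFrobenius_def]; norm_num
  have hT24 : ∀ v, v ∈ T2 → v ∈ T4 := by
    intro v hv
    rw [hT2] at hv
    rw [hT4, show v ^ 16 = (v ^ 4) ^ 4 by ring, hv, hv]
  have hgT : ∀ c, m (g c) ∈ T2 := by
    intro c
    rcases hmg c with h | h <;> rw [h]
    · exact T2.zero_mem
    · exact T2.one_mem
  let Y : integralClosure O L := ⟨y, hyi⟩
  let W : integralClosure O L := ⟨w, hwi⟩
  have hYx : Y ^ 2 + Y = g x := Subtype.ext hyx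
  let Z : integralClosure O L := (- g j * (g ε + g d + g ε * Y)) *
    (g N * (1 + (1 + g j) * g ε - (1 + g j) - (1 + g j) * Y)) ^ 2
  have hWZ : W ^ 2 + W = Z := Subtype.ext hwz
  have hYT : m Y ∈ T2 := by
    rw [hT2]
    refine frob1 h2 (m (g x)) _ ?_ ?_
    · rcases hmg x with h | h <;> rw [h] <;> simp
    · rw [← hYx]; simp
  have hZT : m Z ∈ T2 := by
    simp only [Z, map_mul, map_neg, map_add, map_pow, map_sub, map_one]
    refine T2.mul_mem (T2.mul_mem (T2.neg_mem (hgT _)) (T2.add_mem (T2.add_mem (hgT _) (hgT _))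
      (T2.mul_mem (hgT _) hYT))) (T2.pow_mem (T2.mul_mem (hgT _) ?_) 2)
    have hp := T2.add_mem T2.one_mem (hgT j)
    exact T2.sub_mem (T2.sub_mem (T2.add_mem T2.one_mem (T2.mul_mem hp (hgT _))) hp)
      (T2.mul_mem hp hYT)
  have hWT : m W ∈ T4 := by
    rw [hT4]
    refine frob2 h2 (m Z) _ ((hT2 _).1 hZT) ?_
    rw [← hWZ]; simp
  have huT : m u ∈ T4 := by
    obtain ⟨a, b, c, e, h⟩ := hall u u.2
    have : u = g a + g b * Y + (g c + g e * Y) * W := Subtype.ext h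
    rw [this]
    simp only [map_mul, map_add]
    exact T4.add_mem (T4.add_mem (hT24 _ (hgT _)) (T4.mul_mem (hT24 _ (hgT _)) (hT24 _ hYT)))
      (T4.mul_mem (T4.add_mem (hT24 _ (hgT _)) (T4.mul_mem (hT24 _ (hgT _)) (hT24 _ hYT))) hWT)
  rw [← hm0] at hu ⊢
  rw [map_pow] at hu
  rw [hT4] at huT
  rw [← huT, show m u ^ 16 = (m u ^ 2) ^ 8 by ring, hu]; simp

end Q2i


/-- Let `K = ℚ₂(√-1)` with valuation ring `O`, and let `α ∈ O` be a unit.  Then the extension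
`L = K(⁴√α)`, obtained by adjoining a root `β` of `X ^ 4 - α`, is unramified over `K`
(every maximal ideal of the integral closure of `O` in `L` lying over the maximal ideal of `O`
has ramification index `1`) if and only if `α ≡ 1 (mod 8)` or `α ≡ 1 + 4√-1 (mod 8)`. -/
theorem unramified_quartic_ext_over_Q2i_iff
    (K : Type*) [Field K] [Algebra ℚ_[2] K] [FiniteDimensional ℚ_[2] K]
    (i : K) (hi : i ^ 2 = -1) (hKgen : Algebra.adjoin ℚ_[2] {i} = ⊤)
    (O : ValuationSubring K)
    (hO : ∀ x : ℚ_[2], algebraMap ℚ_[2] K x ∈ O ↔ ‖x‖ ≤ 1)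
    (j : O) (hj : (j : K) = i)
    (α : O) (hαunit : IsUnit α)
    (L : Type*) [Field L] [Algebra K L] [Algebra O L] [IsScalarTower O K L]
    (β : L) (hβ : β ^ 4 = algebraMap K L (α : K))
    (hgen : Algebra.adjoin K {β} = ⊤) :
    (∀ Q : Ideal (integralClosure O L), Q.IsMaximal →
        Q.comap (algebraMap O (integralClosure O L)) = IsLocalRing.maximalIdeal O →
        Ideal.ramificationIdx'
          (IsLocalRing.maximalIdeal O) Q = 1) ↔
      ((8 : O) ∣ α - 1 ∨ (8 : O) ∣ α - (1 + 4 * j)) := by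
  have hnoeth : IsNoetherianRing O := Q2i.noeth i hi hKgen O hO j hj
  have hpid : IsPrincipalIdealRing O := inferInstance
  have hded : IsDedekindDomain O := inferInstance
  have hmax := Q2i.maxIdeal i hi hKgen O hO j hj
  have hnu := Q2i.not_unit i hi hKgen O hO j hj
  have hres := Q2i.res i hi hKgen O hO j hj
  have hj2 := Q2i.j_sq i hi O j hj
  have hK0 : CharZero K := charZero_of_injective_algebraMap (algebraMap ℚ_[2] K).injective
  have hL0 : CharZero L := charZero_of_injective_algebraMap (algebraMap K L).injective
  have hβ' : β ^ 4 = algebraMap O L α := by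
    rw [hβ, IsScalarTower.algebraMap_apply O K L]; rfl
  have hβi : IsIntegral O β := by
    refine IsIntegral.of_pow (n := 4) (by norm_num) ?_
    rw [hβ']; exact isIntegral_algebraMap
  have hfin : FiniteDimensional K L := by
    have h : (Algebra.adjoin K {β}).toSubmodule.FG := (hβi.tower_top (A := K)).fg_adjoin_singleton
    rw [hgen, Algebra.top_toSubmodule] at h
    exact ⟨h⟩
  have hdS : IsDedekindDomain (integralClosure O L) :=
    IsIntegralClosure.isDedekindDomain O K L (integralClosure O L)
  have hinjL : Function.Injective (algebraMap O L) := by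
    rw [IsScalarTower.algebraMap_eq O K L]
    exact (algebraMap K L).injective.comp Subtype.val_injective
  have hinj : Function.Injective (algebraMap O (integralClosure O L)) := by
    intro a b hab
    exact hinjL (congrArg Subtype.val hab)
  have h1j : (1 + j) ≠ 0 := by
    intro h
    have h2 : (2 : O) = 0 := by linear_combination (1 - j) * h + hj2
    have h2' : (2 : K) = 0 := congrArg Subtype.val h2
    exact two_ne_zero h2'
  have h0 : algebraMap O (integralClosure O L) (1 + j) ≠ 0 := by
    rw [ne_eq, map_eq_zero_iff _ hinj]; exact h1j
  rw [Q2i.ram_iff (1 + j) hmax h0]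
  -- an element of `K` integral over `O` lies in `O`
  have hint : ∀ (a b : O) (t : integralClosure O L), b ≠ 0 →
      algebraMap O (integralClosure O L) a = algebraMap O (integralClosure O L) b * t →
      ∃ c : O, a = b * c ∧ algebraMap O (integralClosure O L) c = t := by
    intro a b t hb hab
    have hbK : (b : K) ≠ 0 := fun h => hb (Subtype.ext h)
    have hbL : algebraMap O L b ≠ 0 := by
      rw [ne_eq, map_eq_zero_iff _ hinjL]; exact hb
    have habL : algebraMap O L a = algebraMap O L b * t := congrArg Subtype.val hab
    have ht : (t : L) = algebraMap K L ((a : K) / b) := by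
      rw [map_div₀]
      have e1 : algebraMap K L (a : K) = algebraMap O L a :=
        (IsScalarTower.algebraMap_apply O K L a).symm
      have e2 : algebraMap K L (b : K) = algebraMap O L b :=
        (IsScalarTower.algebraMap_apply O K L b).symm
      rw [e1, e2, habL, mul_div_cancel_left₀ _ hbL]
    have hti : IsIntegral O (t : L) := t.2
    rw [ht] at hti
    obtain ⟨c, hc⟩ := IsIntegrallyClosed.isIntegral_iff.1
      ((isIntegral_algebraMap_iff (algebraMap K L).injective).1 hti)
    have hc' : (c : K) = a / b := hc
    have hac : a = b * c := by
      apply Subtype.ext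
      change (a : K) = b * c
      rw [hc']; field_simp
    refine ⟨c, hac, ?_⟩
    apply mul_left_cancel₀ (a := algebraMap O (integralClosure O L) b)
    · rw [ne_eq, map_eq_zero_iff _ hinj]; exact hb
    · rw [← hab, hac, map_mul]
  have hnuS : ¬ algebraMap O (integralClosure O L) (1 + j) ∣ 1 := by
    rintro ⟨t, ht⟩
    obtain ⟨c, hc, -⟩ := hint 1 (1 + j) t h1j (by rw [map_one]; exact ht)
    exact hnu (IsUnit.of_mul_eq_one c hc.symm)
  constructor
  · intro hred
    have hα1 : (1 + j) ∣ α - 1 := by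
      rcases hres α with h | h
      · exact absurd (isUnit_of_dvd_unit h hαunit) hnu
      · exact h
    set g := algebraMap O (integralClosure O L) with hg
    have hg1 : g (1 + j) = 1 + g j := by rw [map_add, map_one]
    have hgj : g j ^ 2 = -1 := by rw [← map_pow, hj2, map_neg, map_one]
    rw [hg1] at hred h0 hnuS
    obtain ⟨t, ht⟩ := Q2i.fwd1 (g j) (⟨β, hβi⟩ : integralClosure O L) (g α) hgj
      (Subtype.ext hβ') hred (by rw [← hg1, ← map_one g, ← map_sub]; exact map_dvd g hα1)
    obtain ⟨c, hc, hct⟩ := hint (α - 1) ((1 + j) ^ 4) _ (pow_ne_zero 4 h1j) (by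
      rw [map_sub, map_one, map_pow, hg1]; exact ht)
    rcases hres c with ⟨c', hc'⟩ | ⟨c', hc'⟩ <;> rcases hres c' with ⟨d, hd⟩ | ⟨d, hd⟩
    · left
      refine ⟨-j * d, ?_⟩
      rw [hc, hc', hd]
      linear_combination (j ^ 4 * d + 6 * j ^ 3 * d + 14 * j ^ 2 * d + 14 * j * d + d) * hj2
    · exfalso
      apply hnuS
      refine Q2i.fwd2a (1 + g j) (g c) t (g d) h0 hred hct ?_
      rw [hc', sub_eq_iff_eq_add.1 hd]; simp only [map_mul, map_add, map_one]; ring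
    · exfalso
      apply hnuS
      refine Q2i.fwd2b (1 + g j) (g c) t (g d) (1 - g j) h0 (by linear_combination hgj) hred hct ?_
      rw [sub_eq_iff_eq_add.1 hc', hd]; simp only [map_mul, map_add, map_one]; ring
    · right
      have h4 : (1 + j) ^ 4 = -4 := by linear_combination (j ^ 2 + 4 * j + 5) * hj2
      have h22 : (1 + j) ^ 2 = 2 * j := by linear_combination hj2
      refine ⟨-1 - j - j * d, ?_⟩
      have : c = 2 + j + (1 + j) ^ 2 * d := by linear_combination hc' + (1 + j) * hd
      rw [sub_add_eq_sub_sub, hc, h4, this, h22]; ring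
  · rintro (⟨r, hr⟩ | ⟨r, hr⟩)
    · exact Q2i.bwd (K := K) j hj2 hres hnu α hαunit β hβ' hgen (2 * r) 0 r
        (by linear_combination hr) (by ring) (Or.inl rfl)
    · exact Q2i.bwd (K := K) j hj2 hres hnu α hαunit β hβ' hgen (j + 2 * r) 1 r
        (by linear_combination hr) (by ring) (Or.inr rfl)
end

section
/- Let K = ℚ(√−3) with ring of integers O_K = ℤ[w] where w = (1+√−3)/2 is a 6th root of unity, and let α ∈ O_K be coprime to 6 (a 2-adic and 3-adic unit). Let L = K(⁶√α) be the field obtained from K by adjoining a root of X⁶ − α. Then every prime of L lying above 2 or above 3 is unramified over K if and only if both of the following hold: (1) α ≡ 1, w², or w⁴ (mod 4) (equivalently, α is congruent to a square modulo 4); and (2) α ≡ ±1 (mod (√−3)³) (equivalently, α is congruent to a cube modulo (√−3)³). -/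
open NumberField

theorem aux_dvd (R : Type*) [CommRing R] [IsDomain R] [IsIntegrallyClosed R] (D m p q r : R)
    (hm : m ≠ 0) (h : D ^ 3 + m * p * D ^ 2 + m ^ 2 * q * D = m ^ 3 * r) : m ∣ D := by
  have hm' : algebraMap R (FractionRing R) m ≠ 0 := by simpa using hm
  have hint : IsIntegral R (algebraMap R (FractionRing R) D / algebraMap R (FractionRing R) m) := by
    refine ⟨Polynomial.X ^ 3 + Polynomial.C p * Polynomial.X ^ 2 + Polynomial.C q * Polynomial.X
      - Polynomial.C r, by monicity!, ?_⟩
    have h2 := congrArg (algebraMap R (FractionRing R)) h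
    simp only [map_add, map_mul, map_pow] at h2
    simp only [Polynomial.eval₂_add, Polynomial.eval₂_sub, Polynomial.eval₂_mul,
      Polynomial.eval₂_pow, Polynomial.eval₂_X, Polynomial.eval₂_C]
    field_simp
    linear_combination h2
  obtain ⟨y, hy⟩ := IsIntegrallyClosed.algebraMap_eq_of_integral hint
  refine ⟨y, IsFractionRing.injective R (FractionRing R) ?_⟩
  rw [map_mul, hy]
  field_simp

theorem aux_pow (R : Type*) [CommRing R] [IsDedekindDomain R] (Q : Ideal R) [hQ : Q.IsPrime]
    (l : R) (hl : l ∈ Q) (hl2 : l ∉ Q ^ 2) (n : ℕ) (x : R) (h : l * x ∈ Q ^ (n + 1)) :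
    x ∈ Q ^ n := by
  have hQ0 : Q ≠ 0 := by
    rintro rfl
    apply hl2
    simp at hl
    simp [hl]
  obtain ⟨J, hJ⟩ := Ideal.dvd_iff_le.2 ((Ideal.span_singleton_le_iff_mem Q).2 hl)
  have hQJ : ¬ J ≤ Q := by
    intro hle
    obtain ⟨J', hJ'⟩ := Ideal.dvd_iff_le.2 hle
    apply hl2
    rw [← Ideal.span_singleton_le_iff_mem, hJ, hJ', ← mul_assoc, ← pow_two]
    exact Ideal.mul_le_inf.trans inf_le_left
  obtain ⟨j, hj, hjQ⟩ := SetLike.not_le_iff_exists.1 hQJ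
  have h1 : Q ^ (n + 1) ∣ Q * J * Ideal.span {x} := by
    rw [← hJ, Ideal.span_singleton_mul_span_singleton]
    exact Ideal.dvd_iff_le.2 ((Ideal.span_singleton_le_iff_mem _).2 h)
  rw [pow_succ', mul_assoc] at h1
  have h2 := Ideal.dvd_iff_le.1 ((mul_dvd_mul_iff_left hQ0).1 h1)
  have h3 : j * x ∈ Q ^ n := h2 (Ideal.mul_mem_mul hj (Ideal.mem_span_singleton_self x))
  exact (Ideal.IsPrime.mul_mem_pow Q h3).resolve_left hjQ

theorem aux_galois (K L : Type*) [Field K] [CharZero K] [Field L] [Algebra K L]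
    [FiniteDimensional K L] (a : K)
    (w : K) (hw : IsPrimitiveRoot w 6) (β : L) (hβ : β ^ 6 = algebraMap K L a)
    (hgen : Algebra.adjoin K {β} = ⊤) : IsGalois K L := by
  have : (Polynomial.X ^ 6 - Polynomial.C a : Polynomial K).IsSplittingField K L := by
    constructor
    · rw [Polynomial.map_sub, Polynomial.map_pow, Polynomial.map_C, Polynomial.map_X]
      exact X_pow_sub_C_splits_of_isPrimitiveRoot
        (hw.map_of_injective (algebraMap K L).injective) hβ
    · rw [eq_top_iff, ← hgen]
      apply Algebra.adjoin_mono
      rw [Set.singleton_subset_iff, Polynomial.mem_rootSet_of_ne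
        (Polynomial.X_pow_sub_C_ne_zero (by norm_num) a)]
      simp [hβ]
  have := Normal.of_isSplittingField (F := K) (E := L) (Polynomial.X ^ 6 - Polynomial.C a)
  exact ⟨⟩

theorem aux_inertia (K L : Type) [Field K] [NumberField K] [Field L] [NumberField L] [Algebra K L]
    [IsGalois K L] (Q : Ideal (𝓞 L)) [Q.IsPrime] (hQ : Q ≠ ⊥)
    (h : ∀ σ : Gal(L/K), (∀ x : 𝓞 L, σ • x - x ∈ Q) → σ = 1) :
    Ideal.ramificationIdx' (Q.comap (algebraMap (𝓞 K) (𝓞 L))) Q = 1 := by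
  have hp : Q.under (𝓞 K) ≠ ⊥ := Ideal.under_ne_bot _ hQ
  have : (Q.under (𝓞 K)).IsMaximal := Ideal.IsPrime.isMaximal inferInstance hp
  have : Finite (𝓞 K ⧸ Q.under (𝓞 K)) := Ideal.finiteQuotientOfFreeOfNeBot _ hp
  have : Finite (Q.under (𝓞 K)).ResidueField := by
    refine Finite.of_surjective _ (Ideal.bijective_algebraMap_quotient_residueField (Q.under (𝓞 K))).2
  have e := Ideal.card_inertia_eq_ramificationIdxIn (G := Gal(L/K)) (Q.under (𝓞 K)) Q
  have hb : Q.inertia Gal(L/K) = ⊥ := by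
    rw [eq_bot_iff]
    intro σ hσ
    exact Subgroup.mem_bot.2 (h σ hσ)
  rw [hb, Subgroup.card_bot, Ideal.ramificationIdxIn_eq_ramificationIdx (Q.under (𝓞 K)) Q Gal(L/K)] at e
  rw [e]
  exact Ideal.ramificationIdx'_eq_ramificationIdx (Q.under (𝓞 K)) Q hp

theorem aux_int (K : Type) [Field K] [NumberField K]
    (s : K) (hs : s ^ 2 = -3) (hK : Module.finrank ℚ K = 2)
    (w : 𝓞 K) (hw : (w : K) = (1 + s) / 2) (x : 𝓞 K) : ∃ a b : ℤ, x = a + b * w := by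
  have hp : IsPrimitiveRoot ((w - 1 : 𝓞 K) : K) 3 := by
    have : Fact (Nat.Prime 3) := ⟨by norm_num⟩
    rw [← Polynomial.isRoot_cyclotomic_iff, Polynomial.cyclotomic_three]
    simp [hw]
    linear_combination hs / 4
  have : IsCyclotomicExtension {3} ℚ K := by
    have h1 : IsCyclotomicExtension {3} ℚ (IntermediateField.adjoin ℚ {((w - 1 : 𝓞 K) : K)}) := hp.intermediateField_adjoin_isCyclotomicExtension ℚ
    have h2 : Module.finrank ℚ (IntermediateField.adjoin ℚ {((w - 1 : 𝓞 K) : K)}) = 2 := by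
      have := IsCyclotomicExtension.finrank (n := 3) (K := ℚ) (IntermediateField.adjoin ℚ {((w - 1 : 𝓞 K) : K)}) (Polynomial.cyclotomic.irreducible_rat (by norm_num))
      rw [this]; rfl
    have h3 : IntermediateField.adjoin ℚ {((w - 1 : 𝓞 K) : K)} = ⊤ :=
      IntermediateField.eq_of_le_of_finrank_eq le_top (by rw [h2, IntermediateField.finrank_top', hK])
    rw [IsCyclotomicExtension.iff_singleton]
    refine ⟨⟨_, hp⟩, fun x => ?_⟩
    have h3' := congrArg IntermediateField.toSubalgebra h3
    rw [IntermediateField.adjoin_simple_toSubalgebra_of_isAlgebraic (IsAlgebraic.of_finite ℚ _)] at h3'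
    have hx : x ∈ Algebra.adjoin ℚ {((w - 1 : 𝓞 K) : K)} := by
      rw [h3']; trivial
    refine Algebra.adjoin_mono ?_ hx
    rw [Set.singleton_subset_iff]
    exact hp.pow_eq_one
  have h4 := IsCyclotomicExtension.Rat.isIntegralClosure_adjoin_singleton (n := 3) hp
  obtain ⟨y, hy⟩ := h4.isIntegral_iff.1 x.isIntegral_coe
  have h5 : (y : K) ∈ Algebra.adjoin ℤ {((w - 1 : 𝓞 K) : K)} := y.2
  have h6 : ∀ z ∈ Algebra.adjoin ℤ {((w - 1 : 𝓞 K) : K)}, ∃ a b : ℤ, z = a + b * w := by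
    intro z hz
    induction hz using Algebra.adjoin_induction with
    | mem z hz =>
      refine ⟨-1, 1, ?_⟩
      rw [Set.mem_singleton_iff.1 hz]
      push_cast; ring
    | algebraMap r => exact ⟨r, 0, by simp⟩
    | add x y _ _ hx hy =>
      obtain ⟨a, b, rfl⟩ := hx
      obtain ⟨c, d, rfl⟩ := hy
      exact ⟨a + c, b + d, by push_cast; ring⟩
    | mul x y _ _ hx hy =>
      obtain ⟨a, b, rfl⟩ := hx
      obtain ⟨c, d, rfl⟩ := hy
      refine ⟨a * c - b * d, a * d + b * c + b * d, ?_⟩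
      have : (w : K) ^ 2 = w - 1 := by rw [hw]; linear_combination hs / 4
      push_cast
      linear_combination (b * d : K) * this
  obtain ⟨a, b, hab⟩ := h6 _ h5
  refine ⟨a, b, ?_⟩
  apply RingOfIntegers.coe_injective
  rw [← hy]
  simpa using hab

theorem aux_nonunit (L : Type) [Field L] [NumberField L] (n : ℕ) (hn : 2 ≤ n) :
    (n : 𝓞 L) ∈ nonunits (𝓞 L) := by
  intro h
  have h1 : IsUnit (algebraMap ℤ (𝓞 L) n) := by simpa using h
  have := (Algebra.IsIntegral.isLocalHom ℤ (𝓞 L)).map_nonunit _ h1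
  rw [Int.isUnit_iff] at this
  omega

theorem aux_back2 (R : Type*) [CommRing R] [IsDomain R] [IsIntegrallyClosed R] [CharZero R]
    (Q : Ideal R) [hQ : Q.IsPrime] (σ : R →+* R) (hσ : ∀ x, σ x - x ∈ Q) (b u q : R)
    (hu : σ u = u) (h2 : (2 : R) ∈ Q)
    (hb : b ∉ Q) (h6 : σ (b ^ 6) = b ^ 6) (hq : b ^ 6 - u ^ 2 = 4 * q) : σ b = b := by
  obtain ⟨d, hd⟩ := aux_dvd R (b ^ 3 - u) 2 u (-q) 0 two_ne_zero (by
    linear_combination (b ^ 3 - u) * hq)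
  have hcb := hσ b
  have hdd := hσ d
  have hsd := congrArg σ hd
  rw [map_pow] at h6
  simp only [map_sub, map_pow, map_mul, hu, map_ofNat] at hsd
  generalize σ b = c at *
  generalize σ d = e at *
  have h3 : (3 : R) ∉ Q := fun h3 => hQ.ne_top ((Ideal.eq_top_iff_one Q).2 (by
    have := Q.sub_mem h3 h2; norm_num at this; exact this))
  have hf : (c ^ 3 + b ^ 3) * ((c - b) * (c ^ 2 + c * b + b ^ 2)) = 0 := by
    linear_combination h6
  rcases mul_eq_zero.1 hf with h | h
  · exfalso
    apply hb
    apply hQ.mem_of_pow_mem 3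
    have : b ^ 3 = - (e - d) := by
      apply mul_left_cancel₀ (two_ne_zero (α := R))
      linear_combination h - hsd + hd
    rw [this]
    exact Q.neg_mem hdd
  · rcases mul_eq_zero.1 h with h | h
    · exact sub_eq_zero.1 h
    · exfalso
      have : 3 * b ^ 2 ∈ Q := by
        have : 3 * b ^ 2 = (c - b) * (- c - 2 * b) := by linear_combination h
        rw [this]
        exact Q.mul_mem_right _ hcb
      rcases hQ.mem_or_mem this with h | h
      · exact h3 h
      · exact hb (hQ.mem_of_pow_mem 2 h)

theorem aux_back3 (R : Type*) [CommRing R] [IsDomain R] [IsIntegrallyClosed R] [CharZero R]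
    (Q : Ideal R) [hQ : Q.IsPrime] (σ : R →+* R) (hσ : ∀ x, σ x - x ∈ Q) (b t ε y : R)
    (ht : t ^ 2 = -3) (hσt : σ t = t) (hε : ε ^ 2 = 1) (hσε : σ ε = ε) (h3 : (3 : R) ∈ Q)
    (hb : b ∉ Q) (h6 : σ (b ^ 6) = b ^ 6) (hy : b ^ 6 - ε = t ^ 3 * y) : σ b = b := by
  have ht0 : t ≠ 0 := by
    rintro rfl
    norm_num at ht
  obtain ⟨d, hd⟩ := aux_dvd R (b ^ 2 - ε) t (-t * ε) (-1) y ht0 (by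
    linear_combination hy + (-(b ^ 2 - ε) ^ 2 * ε - (b ^ 2 - ε)) * ht - (3 * b ^ 2 - 2 * ε) * hε)
  have hcb := hσ b
  have hdd := hσ d
  have hsd := congrArg σ hd
  rw [map_pow] at h6
  simp only [map_sub, map_pow, map_mul, hσε, hσt] at hsd
  generalize σ b = c at *
  generalize σ d = e at *
  have h2 : (2 : R) ∉ Q := fun h2 => hQ.ne_top ((Ideal.eq_top_iff_one Q).2 (by
    have := Q.sub_mem h3 h2; norm_num at this; exact this))
  have hf : (c + b) * ((c - b) * (c ^ 4 + c ^ 2 * b ^ 2 + b ^ 4)) = 0 := by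
    linear_combination h6
  rcases mul_eq_zero.1 hf with h | h
  · exfalso
    have : 2 * b ∈ Q := by
      have : 2 * b = - (c - b) := by linear_combination h
      rw [this]
      exact Q.neg_mem hcb
    rcases hQ.mem_or_mem this with h | h
    · exact h2 h
    · exact hb h
  · rcases mul_eq_zero.1 h with h | h
    · exact sub_eq_zero.1 h
    · exfalso
      have hD : c ^ 2 - b ^ 2 = t * (e - d) := by linear_combination hsd - hd
      have h7 : (e - d) ^ 2 = (c * b) ^ 2 := by
        apply mul_left_cancel₀ (pow_ne_zero 2 ht0)
        linear_combination h - (c ^ 2 - b ^ 2 + t * (e - d)) * hD - c ^ 2 * b ^ 2 * ht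
      have h8 : c * b ∈ Q := by
        apply hQ.mem_of_pow_mem 2
        rw [← h7]
        exact Q.pow_mem_of_mem hdd 2 (by norm_num)
      rcases hQ.mem_or_mem h8 with h | h
      · apply hb
        have : b = c - (c - b) := by ring
        rw [this]
        exact Q.sub_mem h hcb
      · exact hb h

open NumberField

/-- Let `K = ℚ(√-3)` with ring of integers `O_K = ℤ[w]`, `w = (1+√-3)/2`, and let `α ∈ O_K` be
coprime to `6`.  Let `L = K(⁶√α)` be obtained by adjoining a root `β` of `X ^ 6 - α`.  Then
every prime of `L` above `2` or `3` is unramified over `K` if and only if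
`α ≡ 1, w², w⁴ (mod 4)` and `α ≡ ±1 (mod (√-3)³)`. -/
theorem unramified_sextic_ext_over_Q_sqrt_neg_three_iff
    (K : Type) [Field K] [NumberField K]
    (s : K) (hs : s ^ 2 = -3) (hK : Module.finrank ℚ K = 2)
    (t : 𝓞 K) (ht : (t : K) = s)
    (w : 𝓞 K) (hw : (w : K) = (1 + s) / 2)
    (α : 𝓞 K) (hα : IsCoprime α 6)
    (L : Type) [Field L] [Algebra K L] [NumberField L]
    (β : L) (hβ : β ^ 6 = algebraMap K L (α : K))
    (hgen : Algebra.adjoin K {β} = ⊤) :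
    (∀ Q : Ideal (𝓞 L), Q.IsPrime → ((2 : 𝓞 L) ∈ Q ∨ (3 : 𝓞 L) ∈ Q) →
        Ideal.ramificationIdx'
          (Q.comap (algebraMap (𝓞 K) (𝓞 L))) Q = 1) ↔
      (((4 : 𝓞 K) ∣ α - 1 ∨ (4 : 𝓞 K) ∣ α - w ^ 2 ∨ (4 : 𝓞 K) ∣ α - w ^ 4) ∧
        (t ^ 3 ∣ α - 1 ∨ t ^ 3 ∣ α + 1)) := by
  have ht2 : t ^ 2 = -3 := by
    apply RingOfIntegers.coe_injective
    have h : algebraMap (𝓞 K) K t = s := ht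
    simp only [map_pow, map_neg, map_ofNat]
    rw [h, hs]
  have htw : 2 * w = 1 + t := by
    apply RingOfIntegers.coe_injective
    simp only [map_mul, map_add, map_one, map_ofNat]
    have h1 : algebraMap (𝓞 K) K t = s := ht
    have h2 : algebraMap (𝓞 K) K w = (1 + s) / 2 := hw
    rw [h1, h2]
    ring
  have hw2 : w ^ 2 = w - 1 := by
    apply RingOfIntegers.coe_injective
    simp only [map_pow, map_sub, map_one]
    have h2 : algebraMap (𝓞 K) K w = (1 + s) / 2 := hw
    rw [h2]
    linear_combination hs / 4
  have hwt : w + 1 = t * (1 - w) := by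
    linear_combination (1 - w) * htw + 2 * hw2
  have hab := aux_int K s hs hK w hw
  let f := algebraMap (𝓞 K) (𝓞 L)
  have hbint : IsIntegral ℤ β := by
    apply IsIntegral.of_pow (n := 6) (by norm_num)
    rw [hβ]
    exact α.isIntegral_coe.algebraMap
  obtain ⟨b, hbβ⟩ : ∃ b : 𝓞 L, (b : L) = β := ⟨⟨β, hbint⟩, rfl⟩
  have hb6 : b ^ 6 = f α := by
    apply RingOfIntegers.coe_injective
    have h : algebraMap (𝓞 L) L b = β := hbβ
    rw [map_pow, h, hβ]
    rfl
  have hαQ : ∀ Q : Ideal (𝓞 L), Q.IsPrime → ((2 : 𝓞 L) ∈ Q ∨ (3 : 𝓞 L) ∈ Q) → f α ∉ Q := by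
    intro Q hQ h23 hmem
    obtain ⟨x, y, hxy⟩ := hα
    have h6 : (6 : 𝓞 L) ∈ Q := by
      rcases h23 with h | h
      · have := Q.mul_mem_left 3 h
        norm_num at this
        exact this
      · have := Q.mul_mem_left 2 h
        norm_num at this
        exact this
    apply hQ.ne_top
    rw [Ideal.eq_top_iff_one]
    have := congrArg f hxy
    simp only [map_add, map_mul, map_one, map_ofNat] at this
    rw [← this]
    exact Q.add_mem (Q.mul_mem_left _ hmem) (Q.mul_mem_left _ h6)
  have hbQ : ∀ Q : Ideal (𝓞 L), Q.IsPrime → ((2 : 𝓞 L) ∈ Q ∨ (3 : 𝓞 L) ∈ Q) → b ∉ Q := by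
    intro Q hQ h23 hmem
    apply hαQ Q hQ h23
    rw [← hb6]
    exact Q.pow_mem_of_mem hmem 6 (by norm_num)
  have hft2 : f t ^ 2 = -3 := by rw [← map_pow, ht2, map_neg, map_ofNat]
  have hwu : ∀ Q : Ideal (𝓞 L), Q.IsPrime → f w ∉ Q := by
    intro Q hQ h
    apply hQ.ne_top
    rw [Ideal.eq_top_iff_one]
    have h1 : (1 : 𝓞 L) = f w * (1 - f w) := by
      have := congrArg f hw2
      simp only [map_pow, map_sub, map_one] at this
      linear_combination this
    rw [h1]
    exact Q.mul_mem_right _ h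
  constructor
  · intro H
    have key : ∀ Q : Ideal (𝓞 L), Q.IsPrime → ((2 : 𝓞 L) ∈ Q ∨ (3 : 𝓞 L) ∈ Q) → ∀ l : 𝓞 K,
        (∀ x : 𝓞 K, f x ∈ Q → l ∣ x) → f l ∉ Q ^ 2 := by
      intro Q hQ h23 l hl hmem
      have h1 := H Q hQ h23
      have := (Ideal.ramificationIdx'_ne_one_iff (p := Q.comap f) (P := Q)
        Ideal.map_comap_le).2 (by
          rw [Ideal.map_le_iff_le_comap]
          intro x hx
          obtain ⟨y, rfl⟩ := hl x hx
          rw [Ideal.mem_comap]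
          have : algebraMap (𝓞 K) (𝓞 L) (l * y) = f l * f y := map_mul _ _ _
          rw [this]
          exact Ideal.mul_mem_right _ _ hmem)
      exact this h1
    constructor
    · -- the prime 2
      have hmod2 : ∀ x : 𝓞 K, 2 ∣ x ∨ 2 ∣ x - 1 ∨ 2 ∣ x - w ∨ 2 ∣ x - w ^ 2 := by
        intro x
        obtain ⟨a, c, rfl⟩ := hab x
        rcases Int.even_or_odd' a with ⟨a', rfl | rfl⟩ <;>
          rcases Int.even_or_odd' c with ⟨c', rfl | rfl⟩ <;> push_cast
        · left; exact ⟨a' + c' * w, by ring⟩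
        · right; right; left; exact ⟨a' + c' * w, by ring⟩
        · right; left; exact ⟨a' + c' * w, by ring⟩
        · right; right; right; exact ⟨a' + c' * w + 1, by rw [hw2]; ring⟩
      obtain ⟨Q, hQm, h2Q⟩ : ∃ Q : Ideal (𝓞 L), Q.IsMaximal ∧ (2 : 𝓞 L) ∈ Q := by
        apply exists_max_ideal_of_mem_nonunits
        exact mod_cast aux_nonunit L 2 (by norm_num)
      have hQ := hQm.isPrime
      have hdvd : ∀ x, f x ∈ Q → 2 ∣ x := by
        intro x hx
        have hd : ∀ y, 2 ∣ x - y → f y ∈ Q := by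
          rintro y ⟨z, hz⟩
          have : f y = f x - 2 * f z := by
            have := congrArg f hz
            simp only [map_sub, map_mul, map_ofNat] at this
            linear_combination -this
          rw [this]
          exact Q.sub_mem hx (Q.mul_mem_right _ h2Q)
        rcases hmod2 x with h | h | h | h
        · exact h
        · exact absurd (hd _ h) (by rw [map_one]; exact fun h => hQ.ne_top ((Ideal.eq_top_iff_one Q).2 h))
        · exact absurd (hd _ h) (hwu Q hQ)
        · exact absurd (hd _ h) (by rw [map_pow]; exact fun h => hwu Q hQ (hQ.mem_of_pow_mem 2 h))
      have h2n := key Q hQ (Or.inl h2Q) 2 hdvd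
      rw [map_ofNat] at h2n
      have main : ∀ u : 𝓞 K, 2 ∣ α - u ^ 2 → 4 ∣ α - u ^ 2 := by
        rintro u ⟨x, hx⟩
        have hfx : b ^ 6 - f u ^ 2 = 2 * f x := by
          rw [hb6, ← map_pow, ← map_sub, hx, map_mul, map_ofNat]
        have hd : b ^ 3 - f u ∈ Q := by
          apply hQ.mem_of_pow_mem 2
          have : (b ^ 3 - f u) ^ 2 = 2 * (f x - f u * (b ^ 3 - f u)) := by
            linear_combination hfx
          rw [this]
          exact Q.mul_mem_right _ h2Q
        have h1 : 2 * f x ∈ Q ^ (1 + 1) := by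
          have : 2 * f x = (b ^ 3 - f u) * (b ^ 3 - f u) + 2 * (b ^ 3 - f u) * f u := by
            linear_combination -hfx
          rw [this, one_add_one_eq_two, pow_two Q]
          exact Ideal.add_mem _ (Ideal.mul_mem_mul hd hd)
            (Ideal.mul_mem_right _ _ (Ideal.mul_mem_mul h2Q hd))
        have h3 := aux_pow (𝓞 L) Q 2 h2Q h2n 1 (f x) h1
        rw [pow_one] at h3
        obtain ⟨y, rfl⟩ := hdvd x h3
        exact ⟨y, by rw [hx]; ring⟩
      rcases hmod2 α with h | h | h | h
      · exfalso
        obtain ⟨z, hz⟩ := h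
        apply hαQ Q hQ (Or.inl h2Q)
        rw [hz, map_mul, map_ofNat]
        exact Q.mul_mem_right _ h2Q
      · left
        have := main 1 (by simpa using h)
        simpa using this
      · right; right
        have h4 : w ^ 4 = -w := by linear_combination (w ^ 2 + w) * hw2
        have := main (w ^ 2) (by
          obtain ⟨z, hz⟩ := h
          exact ⟨z + w, by linear_combination hz - h4⟩)
        rwa [← pow_mul] at this
      · right; left
        exact main w h
    · -- the prime 3
      have hmod3 : ∀ x : 𝓞 K, t ∣ x ∨ t ∣ x - 1 ∨ t ∣ x + 1 := by
        intro x
        obtain ⟨a, c, rfl⟩ := hab x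
        have h1 : ∀ k : ℤ, (k : 𝓞 K) * 3 = t * (- t * k) := by
          intro k; linear_combination (k : 𝓞 K) * ht2
        have h0 : (a : 𝓞 K) + c * w = ((a - c : ℤ) : 𝓞 K) + t * (c * (1 - w)) := by
          push_cast
          linear_combination (c : 𝓞 K) * hwt
        rw [h0]
        generalize a - c = n
        obtain ⟨k, hk⟩ : ∃ k, n = k * 3 ∨ n = k * 3 + 1 ∨ n = k * 3 - 1 := ⟨(n + 1) / 3, by omega⟩
        rcases hk with rfl | rfl | rfl
        · left
          exact ⟨- t * k + c * (1 - w), by push_cast; linear_combination h1 k⟩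
        · right; left
          exact ⟨- t * k + c * (1 - w), by push_cast; linear_combination h1 k⟩
        · right; right
          exact ⟨- t * k + c * (1 - w), by push_cast; linear_combination h1 k⟩
      obtain ⟨Q, hQm, h3Q⟩ : ∃ Q : Ideal (𝓞 L), Q.IsMaximal ∧ (3 : 𝓞 L) ∈ Q := by
        apply exists_max_ideal_of_mem_nonunits
        exact mod_cast aux_nonunit L 3 (by norm_num)
      have hQ := hQm.isPrime
      have htQ : f t ∈ Q := by
        apply hQ.mem_of_pow_mem 2
        rw [hft2]
        exact Q.neg_mem h3Q
      have hdvd : ∀ x, f x ∈ Q → t ∣ x := by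
        intro x hx
        have h1Q : (1 : 𝓞 L) ∉ Q := fun h => hQ.ne_top ((Ideal.eq_top_iff_one Q).2 h)
        rcases hmod3 x with h | ⟨z, hz⟩ | ⟨z, hz⟩
        · exact h
        · exfalso
          apply h1Q
          have : 1 = f x - f t * f z := by
            have := congrArg f hz
            simp only [map_sub, map_mul, map_one] at this
            linear_combination -this
          rw [this]
          exact Q.sub_mem hx (Q.mul_mem_right _ htQ)
        · exfalso
          apply h1Q
          have : 1 = f t * f z - f x := by
            have := congrArg f hz
            simp only [map_add, map_mul, map_one] at this
            linear_combination this
          rw [this]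
          exact Q.sub_mem (Q.mul_mem_right _ htQ) hx
      have htn := key Q hQ (Or.inr h3Q) t hdvd
      have main : ∀ ε : 𝓞 K, ε ^ 2 = 1 → t ∣ α - ε → t ^ 3 ∣ α - ε := by
        rintro ε hε ⟨x, hx⟩
        have hfε : f ε ^ 2 = 1 := by rw [← map_pow, hε, map_one]
        have hfx : b ^ 6 - f ε = f t * f x := by
          rw [hb6, ← map_sub, hx, map_mul]
        have hd : b ^ 2 - f ε ∈ Q := by
          apply hQ.mem_of_pow_mem 3
          have : (b ^ 2 - f ε) ^ 3 = f t * (f x + f t * (b ^ 2 * f ε * (b ^ 2 - f ε))) := by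
            linear_combination hfx - (b ^ 2 * f ε * (b ^ 2 - f ε)) * hft2 - f ε * hfε
          rw [this]
          exact Q.mul_mem_right _ htQ
        have h1 : f t * f x ∈ Q ^ (2 + 1) := by
          have : f t * f x = (b ^ 2 - f ε) ^ 3 + f t ^ 2 * (b ^ 2 - f ε) * (- b ^ 2 * f ε) := by
            linear_combination -hfx + (b ^ 2 * f ε * (b ^ 2 - f ε)) * hft2 + f ε * hfε
          rw [this]
          refine Ideal.add_mem _ (Ideal.pow_mem_pow hd 3) (Ideal.mul_mem_right _ _ ?_)
          rw [pow_succ Q]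
          exact Ideal.mul_mem_mul (Ideal.pow_mem_pow htQ 2) hd
        have h3 := aux_pow (𝓞 L) Q (f t) htQ htn 2 (f x) h1
        obtain ⟨y, rfl⟩ := hdvd x (Ideal.pow_le_self (by norm_num) h3)
        rw [map_mul] at h3
        have h4 := aux_pow (𝓞 L) Q (f t) htQ htn 1 (f y) h3
        rw [pow_one] at h4
        obtain ⟨z, rfl⟩ := hdvd y h4
        exact ⟨z, by rw [hx]; ring⟩
      rcases hmod3 α with h | h | h
      · exfalso
        obtain ⟨z, hz⟩ := h
        apply hαQ Q hQ (Or.inr h3Q)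
        rw [hz, map_mul]
        exact Q.mul_mem_right _ htQ
      · left; exact main 1 (by norm_num) h
      · right
        have := main (-1) (by norm_num) (by simpa using h)
        simpa using this
  · rintro ⟨h4, h27⟩ Q hQ h23
    have hprim : IsPrimitiveRoot (w : K) 6 := by
      rw [← Polynomial.isRoot_cyclotomic_iff, Polynomial.cyclotomic_six]
      simp [hw]
      linear_combination hs / 4
    have hgal := aux_galois K L (α : K) (w : K) hprim β hβ hgen
    have hQ0 : Q ≠ ⊥ := by
      rintro rfl
      simp at h23
    apply aux_inertia K L Q hQ0
    intro σ hσ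
    have hfix : ∀ x : 𝓞 K, σ • f x = f x := fun x => smul_algebraMap σ x
    let σ' : 𝓞 L →+* 𝓞 L := MulSemiringAction.toRingHom Gal(L/K) (𝓞 L) σ
    have hb := hbQ Q hQ h23
    have hσb : σ' b = b := by
      have h6 : σ' (b ^ 6) = b ^ 6 := by rw [hb6]; exact hfix α
      rcases h23 with h2 | h3
      · obtain ⟨u, q, hu⟩ : ∃ u q : 𝓞 K, α - u ^ 2 = 4 * q := by
          rcases h4 with ⟨q, h⟩ | ⟨q, h⟩ | ⟨q, h⟩
          · exact ⟨1, q, by rw [← h]; ring⟩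
          · exact ⟨w, q, by rw [← h]⟩
          · exact ⟨w ^ 2, q, by rw [← h]; ring⟩
        refine aux_back2 (𝓞 L) Q σ' hσ b (f u) (f q) (hfix u) h2 hb h6 ?_
        rw [hb6, ← map_pow, ← map_sub, hu, map_mul, map_ofNat]
      · obtain ⟨ε, y, hε, hy⟩ : ∃ ε y : 𝓞 K, ε ^ 2 = 1 ∧ α - ε = t ^ 3 * y := by
          rcases h27 with ⟨q, h⟩ | ⟨q, h⟩
          · exact ⟨1, q, by norm_num, h⟩
          · exact ⟨-1, q, by norm_num, by rw [← h]; ring⟩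
        refine aux_back3 (𝓞 L) Q σ' hσ b (f t) (f ε) (f y) hft2 (hfix t) ?_ (hfix ε) h3 hb h6 ?_
        · rw [← map_pow, hε, map_one]
        · rw [hb6, ← map_sub, hy, map_mul, map_pow]
    have hσβ : σ β = β := by
      have := congrArg (fun x : 𝓞 L => (x : L)) hσb
      rw [← hbβ]
      exact this
    have hAlg : (σ : L →ₐ[K] L) = AlgHom.id K L := by
      apply AlgHom.ext_of_adjoin_eq_top hgen
      intro x hx
      rw [Set.mem_singleton_iff.1 hx]
      exact hσβ
    ext x
    exact DFunLike.congr_fun hAlg x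
end

section
/- For d ∈ {11, 19, 43, 67, 163}, let K = ℚ(√−d) and let p_d(x) be the cubic polynomial x³−x²+x+1 for d=11, x³−2x−2 for d=19, x³−x²−x+3 for d=43, x³−x²−3x+5 for d=67, and x³−8x+10 for d=163 (each of discriminant −4d). Then the splitting field L of p_d over K is a Galois extension of K of degree 3 which is unramified at every prime ideal of O_K not dividing 2; moreover, it is the unique such extension: every degree-3 Galois extension of K unramified at all primes of O_K not dividing 2 is K-isomorphic to L. -/
open NumberField Polynomial

section Helpers
open scoped Pointwise


lemma units_not_all_cubes {M : Type} [Field M] [NumberField M] (hrank : 0 < Units.rank M)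
   (cube : ∀ u : (𝓞 M)ˣ, ∃ w : (𝓞 M)ˣ, u = w ^ 3) : False := by
  let i : Fin (Units.rank M) := ⟨0, hrank⟩
  obtain ⟨w, hw⟩ := cube (Units.fundSystem M i)
  obtain ⟨⟨ζ, e⟩, hw2, -⟩ := Units.exist_unique_eq_mul_prod M w
  have h1 : Units.fundSystem M i = ((1 : Units.torsion M) : (𝓞 M)ˣ) *
      ∏ j, Units.fundSystem M j ^ ((Pi.single i 1 : Fin (Units.rank M) → ℤ) j) := by
    rw [Finset.prod_eq_single i]
    · simp
    · intro j _ hj; simp [hj]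
    · simp
  have h2 : Units.fundSystem M i = ((ζ ^ 3 : Units.torsion M) : (𝓞 M)ˣ) *
      ∏ j, Units.fundSystem M j ^ ((fun j => e j * 3) j) := by
    rw [hw, hw2, mul_pow, ← Finset.prod_pow]
    simp only [zpow_mul]
    norm_cast
  obtain ⟨x, -, hx⟩ := Units.exist_unique_eq_mul_prod M (Units.fundSystem M i)
  have h3 := (hx (1, (Pi.single i 1 : Fin (Units.rank M) → ℤ)) h1).trans
    (hx (ζ ^ 3, fun j => e j * 3) h2).symm
  have h4 : (Pi.single i 1 : Fin (Units.rank M) → ℤ) i = e i * 3 :=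
    congrFun (congrArg Prod.snd h3) i
  rw [Pi.single_eq_same] at h4
  omega

lemma card_inertia_eq {K L : Type} [Field K] [NumberField K] [Field L] [NumberField L]
    [Algebra K L] [IsGalois K L] (P : Ideal (𝓞 K)) [P.IsPrime] (hP : P ≠ ⊥) (Q : Ideal (𝓞 L)) [Q.IsPrime]
    [Q.LiesOver P] : Nat.card (Q.inertia Gal(L/K)) = Ideal.ramificationIdx' P Q := by
  have : P.IsMaximal := Ideal.IsPrime.isMaximal inferInstance hP
  let : Field (𝓞 K ⧸ P) := Ideal.Quotient.field P
  have : Finite (𝓞 K ⧸ P) := Ideal.finiteQuotientOfFreeOfNeBot P hP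
  have : Finite P.ResidueField := Finite.of_surjective (algebraMap (𝓞 K ⧸ P) P.ResidueField) (Ideal.bijective_algebraMap_quotient_residueField P).2
  rw [Ideal.card_inertia_eq_ramificationIdxIn P Q, Ideal.ramificationIdxIn_eq_ramificationIdx P Q Gal(L/K),
    Ideal.ramificationIdx'_eq_ramificationIdx P Q hP]

section T1
variable {K M : Type} [Field K] [NumberField K] [Field M] [NumberField M] [Algebra K M] [IsGalois K M]

lemma invariant_ideal_principal [IsPrincipalIdealRing (𝓞 K)]
    (hunr : ∀ P : Ideal (𝓞 K), P.IsPrime → P ≠ ⊥ → ∀ Q : Ideal (𝓞 M), Q.IsPrime →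
      Q.LiesOver P → Ideal.ramificationIdx' P Q = 1)
    (I : Ideal (𝓞 M)) (hI0 : I ≠ ⊥) (hI : ∀ σ : Gal(M/K), σ • I = I) :
    ∃ a : 𝓞 K, I = Ideal.span {algebraMap (𝓞 K) (𝓞 M) a} := by
  induction I using IsNoetherian.induction with
  | hgt I ih =>
  by_cases htop : I = ⊤
  · exact ⟨1, by simp [htop]⟩
  obtain ⟨Q, hQ, hIQ⟩ := Ideal.exists_le_maximal I htop
  have hQ0 : Q ≠ ⊥ := fun h => hI0 (by rwa [h, le_bot_iff] at hIQ)
  set P := Q.under (𝓞 K) with hPdef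
  have hQP : Q.LiesOver P := ⟨rfl⟩
  have hPp : P.IsPrime := inferInstance
  have hP0 : P ≠ ⊥ := by
    intro h
    exact hQ0 (Ideal.eq_bot_of_comap_eq_bot (R := 𝓞 K) h)
  have hmap0 : P.map (algebraMap (𝓞 K) (𝓞 M)) ≠ ⊥ := Ideal.map_ne_bot_of_ne_bot hP0
  have hdvd : P.map (algebraMap (𝓞 K) (𝓞 M)) ∣ I := by
    classical
    rw [UniqueFactorizationMonoid.dvd_iff_normalizedFactors_le_normalizedFactors hmap0 hI0,
      Multiset.le_iff_count]
    intro q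
    by_cases hq : q ∈ UniqueFactorizationMonoid.normalizedFactors (P.map (algebraMap (𝓞 K) (𝓞 M)))
    · have hqprime := UniqueFactorizationMonoid.prime_of_normalized_factor q hq
      have hqp : q.IsPrime := Ideal.isPrime_of_prime hqprime
      have hq0 : q ≠ ⊥ := hqprime.ne_zero
      have hle : P.map (algebraMap (𝓞 K) (𝓞 M)) ≤ q :=
        Ideal.le_of_dvd (UniqueFactorizationMonoid.dvd_of_mem_normalizedFactors hq)
      have hqP : q.LiesOver P := by
        constructor
        have := hPp.isMaximal hP0
        exact this.eq_of_le (Ideal.IsPrime.ne_top inferInstance) (Ideal.map_le_iff_le_comap.mp hle)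
      have h1 := hunr P hPp hP0 q hqp hqP
      rw [Ideal.IsDedekindDomain.ramificationIdx'_eq_normalizedFactors_count hmap0 hqp hq0] at h1
      rw [h1, Nat.one_le_iff_ne_zero, Multiset.count_ne_zero]
      obtain ⟨σ, hσ⟩ := Ideal.exists_smul_eq_of_isGaloisGroup P Q q Gal(M/K)
      rw [Ideal.mem_normalizedFactors_iff hI0]
      refine ⟨hqp, ?_⟩
      rw [← hI σ, ← hσ]
      exact smul_mono_right σ hIQ
    · rw [Multiset.count_eq_zero_of_notMem hq]; exact Nat.zero_le _
  obtain ⟨J, hJ⟩ := hdvd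
  have hJ0 : J ≠ ⊥ := by rintro rfl; apply hI0; rw [hJ]; simp
  have hinv : ∀ σ : Gal(M/K), σ • J = J := by
    intro σ
    have h := hI σ
    rw [hJ, smul_mul'] at h
    have h2 : σ • (P.map (algebraMap (𝓞 K) (𝓞 M))) = P.map (algebraMap (𝓞 K) (𝓞 M)) := by
      rw [Ideal.pointwise_smul_def, Ideal.map_map]
      congr 1
      ext x
      exact smul_algebraMap σ x
    rw [h2] at h
    exact mul_left_cancel₀ hmap0 h
  have hlt : I < J := by
    refine lt_of_le_of_ne (by rw [hJ]; exact Ideal.mul_le_right) ?_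
    intro h
    have h3 : P.map (algebraMap (𝓞 K) (𝓞 M)) * J = ⊤ * J := by rw [← hJ, h, Ideal.top_mul]
    have h4 := mul_right_cancel₀ hJ0 h3
    have h5 : P.map (algebraMap (𝓞 K) (𝓞 M)) ≤ Q := Ideal.map_le_iff_le_comap.mpr le_rfl
    exact hQ.ne_top (top_le_iff.mp (h4 ▸ h5))
  obtain ⟨b, hb⟩ := ih J hlt hJ0 hinv
  obtain ⟨a, ha⟩ := (IsPrincipalIdealRing.principal P)
  refine ⟨a * b, ?_⟩
  rw [hJ, hb, ha, Ideal.submodule_span_eq, Ideal.map_span, Set.image_singleton,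
    Ideal.span_singleton_mul_span_singleton, map_mul]

lemma hilbert90_units [IsPrincipalIdealRing (𝓞 K)]
    (hunr : ∀ P : Ideal (𝓞 K), P.IsPrime → P ≠ ⊥ → ∀ Q : Ideal (𝓞 M), Q.IsPrime →
      Q.LiesOver P → Ideal.ramificationIdx' P Q = 1)
    (hdeg : Module.finrank K M = 3)
    (hu : ∀ u : (𝓞 K)ˣ, u = 1 ∨ u = -1)
    (σ : Gal(M/K)) (hσ : ∀ x, x ∈ Subgroup.zpowers σ)
    (u : (𝓞 M)ˣ) (hnu : Algebra.norm K ((u : 𝓞 M) : M) = 1) :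
    ∃ v : (𝓞 M)ˣ, (u : 𝓞 M) * σ • (v : 𝓞 M) = v ∧ Algebra.norm K ((v : 𝓞 M) : M) = 1 := by
  have hcyc : IsCyclic Gal(M/K) := ⟨σ, hσ⟩
  obtain ⟨y, hy⟩ := groupCohomology.exists_div_of_norm_eq_one hσ hnu
  have halg : IsAlgebraic ℤ (y : M) := by
    have : IsAlgebraic ℚ (y : M) := Algebra.IsAlgebraic.isAlgebraic _
    exact (IsFractionRing.isAlgebraic_iff ℤ ℚ M).mpr this
  obtain ⟨n, hn, hxint⟩ := halg.exists_integral_multiple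
  have hσy : σ (y : M) ≠ 0 := by simp
  have hxu : ∃ x : 𝓞 M, x ≠ 0 ∧ (u : 𝓞 M) * σ • x = x := by
    refine ⟨⟨n • (y : M), hxint⟩, ?_, ?_⟩
    · intro h
      have h2 := congrArg (fun z : 𝓞 M => (z : M)) h
      simp at h2
      tauto
    · apply RingOfIntegers.ext
      change ((u : 𝓞 M) : M) * σ (n • (y : M)) = n • (y : M)
      rw [← hy, map_zsmul]
      simp only [zsmul_eq_mul]
      field_simp
  obtain ⟨x, hx0, hx⟩ := hxu
  have hgen : ∀ τ : Gal(M/K), τ • (Ideal.span {x}) = Ideal.span {x} := by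
    have h1 : σ ∈ MulAction.stabilizer Gal(M/K) (Ideal.span {x}) := by
      rw [MulAction.mem_stabilizer_iff, Ideal.pointwise_smul_def, Ideal.map_span,
        Set.image_singleton]
      change Ideal.span {σ • x} = _
      rw [Ideal.span_singleton_eq_span_singleton]
      exact ⟨u, by rw [mul_comm]; exact hx⟩
    intro τ
    have h2 := (Subgroup.zpowers_le.mpr h1) (hσ τ)
    exact h2
  obtain ⟨a, ha⟩ := invariant_ideal_principal hunr (Ideal.span {x}) (by simpa using hx0) hgen
  rw [Ideal.span_singleton_eq_span_singleton] at ha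
  obtain ⟨w, hw⟩ := ha.symm
  have ha0 : algebraMap (𝓞 K) (𝓞 M) a ≠ 0 := by
    intro h; rw [h, zero_mul] at hw; exact hx0 hw.symm
  have hw2 : (u : 𝓞 M) * σ • (w : 𝓞 M) = w := by
    apply mul_left_cancel₀ ha0
    calc _ = (u : 𝓞 M) * σ • (algebraMap (𝓞 K) (𝓞 M) a * w) := by
          rw [smul_mul', smul_algebraMap]; ring
      _ = _ := by rw [hw, hx]
  have hnorm : Algebra.norm K ((w : 𝓞 M) : M) = 1 ∨ Algebra.norm K ((w : 𝓞 M) : M) = -1 := by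
    have h3 := hu (Units.map (RingOfIntegers.norm K) w)
    have h4 : ((RingOfIntegers.norm K (w : 𝓞 M) : 𝓞 K) : K) = Algebra.norm K ((w : 𝓞 M) : M) :=
      RingOfIntegers.coe_norm K _
    rw [← h4]
    rcases h3 with h3 | h3
    · left
      have := congrArg (fun z : (𝓞 K)ˣ => ((z : 𝓞 K) : K)) h3
      simpa using this
    · right
      have := congrArg (fun z : (𝓞 K)ˣ => ((z : 𝓞 K) : K)) h3
      simpa using this
  rcases hnorm with h | h
  · exact ⟨w, hw2, h⟩
  · refine ⟨-w, ?_, ?_⟩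
    · rw [Units.val_neg, smul_neg, mul_neg, hw2]
    · have : (((-w : (𝓞 M)ˣ) : 𝓞 M) : M) = algebraMap K M (-1) * ((w : 𝓞 M) : M) := by simp
      rw [this, map_mul, Algebra.norm_algebraMap, hdeg, h]; norm_num

lemma norm_three (hdeg : Module.finrank K M = 3)
    (σ : Gal(M/K)) (hσ : ∀ x, x ∈ Subgroup.zpowers σ) (x : M) :
    algebraMap K M (Algebra.norm K x) = x * σ x * σ (σ x) := by
  classical
  have ho : orderOf σ = 3 := by
    rw [orderOf_eq_card_of_forall_mem_zpowers hσ, IsGalois.card_aut_eq_finrank, hdeg]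
  rw [Algebra.norm_eq_prod_automorphisms, ← IsCyclic.image_range_orderOf hσ, ho,
    Finset.prod_image]
  · simp [Finset.prod_range_succ]
  · intro i hi j hj h
    simp only [Finset.coe_range, Set.mem_Iio] at hi hj
    exact pow_injOn_Iio_orderOf (by simpa [ho] using hi) (by simpa [ho] using hj) h

theorem no_unramified_cubic [IsPrincipalIdealRing (𝓞 K)]
    (hunr : ∀ P : Ideal (𝓞 K), P.IsPrime → P ≠ ⊥ → ∀ Q : Ideal (𝓞 M), Q.IsPrime →
      Q.LiesOver P → Ideal.ramificationIdx' P Q = 1)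
    (hdeg : Module.finrank K M = 3)
    (hu : ∀ u : (𝓞 K)ˣ, u = 1 ∨ u = -1) : False := by
  have hcard : Nat.card Gal(M/K) = 3 := by rw [IsGalois.card_aut_eq_finrank, hdeg]
  have : Fact (Nat.Prime 3) := ⟨Nat.prime_three⟩
  have hcyc : IsCyclic Gal(M/K) := isCyclic_of_prime_card hcard
  obtain ⟨σ, hσ⟩ := hcyc.exists_generator
  have cube1 : ∀ u : (𝓞 M)ˣ, Algebra.norm K ((u : 𝓞 M) : M) = 1 → ∃ w : (𝓞 M)ˣ, u = w ^ 3 := by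
    intro u hnu
    obtain ⟨v, hv, hnv⟩ := hilbert90_units hunr hdeg hu σ hσ u hnu
    obtain ⟨w, hw, hnw⟩ := hilbert90_units hunr hdeg hu σ hσ v hnv
    let w' : (𝓞 M)ˣ := Units.map (MulSemiringAction.toRingHom Gal(M/K) (𝓞 M) σ : 𝓞 M →* 𝓞 M) w
    have hw' : (w' : 𝓞 M) = σ • (w : 𝓞 M) := rfl
    have hn3 := norm_three hdeg σ hσ ((w : 𝓞 M) : M)
    rw [hnw, map_one] at hn3
    have hn4 : (w : 𝓞 M) * σ • (w : 𝓞 M) * σ • (σ • (w : 𝓞 M)) = 1 := by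
      apply RingOfIntegers.ext
      exact hn3.symm
    have hv2 : σ • (v : 𝓞 M) * σ • (σ • (w : 𝓞 M)) = σ • (w : 𝓞 M) := by
      rw [← smul_mul', hw]
    refine ⟨w'⁻¹, ?_⟩
    rw [inv_pow, eq_inv_iff_mul_eq_one]
    apply Units.ext
    push_cast
    rw [hw']
    generalize (σ • (σ • (w : 𝓞 M))) = w2 at *
    have hw1 : IsUnit (σ • (w : 𝓞 M)) := ⟨w', rfl⟩
    generalize (σ • (w : 𝓞 M)) = w1 at *
    generalize (σ • (v : 𝓞 M)) = v1 at *
    have e : (u : 𝓞 M) * v1 * w1 = w := by rw [hv, hw]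
    calc (u : 𝓞 M) * w1 ^ 3 = u * w1 * w1 * (v1 * w2) := by rw [hv2]; ring
      _ = (u * v1 * w1) * w1 * w2 := by ring
      _ = 1 := by rw [e, hn4]
  have cube : ∀ u : (𝓞 M)ˣ, ∃ w : (𝓞 M)ˣ, u = w ^ 3 := by
    intro u
    have hnorm : Algebra.norm K ((u : 𝓞 M) : M) = 1 ∨ Algebra.norm K ((u : 𝓞 M) : M) = -1 := by
      have h3 := hu (Units.map (RingOfIntegers.norm K) u)
      have h4 : ((RingOfIntegers.norm K (u : 𝓞 M) : 𝓞 K) : K) = Algebra.norm K ((u : 𝓞 M) : M) :=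
        RingOfIntegers.coe_norm K _
      rw [← h4]
      rcases h3 with h3 | h3
      · left
        have := congrArg (fun z : (𝓞 K)ˣ => ((z : 𝓞 K) : K)) h3
        simpa using this
      · right
        have := congrArg (fun z : (𝓞 K)ˣ => ((z : 𝓞 K) : K)) h3
        simpa using this
    rcases hnorm with h | h
    · exact cube1 u h
    · have h2 : Algebra.norm K (((-u : (𝓞 M)ˣ) : 𝓞 M) : M) = 1 := by
        have : (((-u : (𝓞 M)ˣ) : 𝓞 M) : M) = algebraMap K M (-1) * ((u : 𝓞 M) : M) := by simp
        rw [this, map_mul, Algebra.norm_algebraMap, hdeg, h]; norm_num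
      obtain ⟨w, hw⟩ := cube1 (-u) h2
      refine ⟨-w, ?_⟩
      rw [Odd.neg_pow (by decide), ← hw, neg_neg]
  have hrank : 0 < Units.rank M := by
    have h1 := InfinitePlace.card_add_two_mul_card_eq_rank M
    have h2 := InfinitePlace.card_eq_nrRealPlaces_add_nrComplexPlaces M
    have h3 : 3 ≤ Module.finrank ℚ M := by
      rw [← Module.finrank_mul_finrank ℚ K M, hdeg]
      have : 0 < Module.finrank ℚ K := Module.finrank_pos
      omega
    rw [Units.rank, h2]
    omega
  exact units_not_all_cubes hrank cube

end T1

section Tame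
variable {S G : Type} [CommRing S] [IsDedekindDomain S] [Group G] [MulSemiringAction G S]

lemma smul_mem_pow_of_inertia {Q : Ideal S} {σ : G} (hσ : σ ∈ Q.inertia G) (n : ℕ) {x : S}
    (hx : x ∈ Q ^ n) : σ • x ∈ Q ^ n := by
  have h1 : σ • Q = Q := Ideal.inertia_le_stabilizer (M := G) Q hσ
  have h2 : σ • (Q ^ n) = Q ^ n := by rw [smul_pow', h1]
  rw [← h2]
  exact Ideal.smul_mem_pointwise_smul σ x _ hx

lemma tame_aux (hfaith : ∀ σ : G, (∀ x : S, σ • x = x) → σ = 1)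
    (Q : Ideal S) [Q.IsPrime] (hQ0 : Q ≠ ⊥) (h3 : (3 : S) ∉ Q) (σ : G) (hσ : σ ∈ Q.inertia G)
    (hσ3 : σ ^ 3 = 1) (π : S) (hπ : π ∈ Q) (hπ2 : π ∉ Q ^ 2) (hσπ : σ • π - π ∈ Q ^ 2) :
    σ = 1 := by
  have hst := fun n x hx => smul_mem_pow_of_inertia (G := G) hσ n (x := x) hx
  have hσ3' : ∀ x : S, σ • (σ • (σ • x)) = x := by
    intro x
    rw [← mul_smul, ← mul_smul, ← pow_two, ← pow_succ, hσ3, one_smul]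
  set t := π + σ • π + σ • (σ • π) with ht
  have htσ : σ • t = t := by
    rw [ht, smul_add, smul_add, hσ3']; ring
  have htQ : t ∈ Q := by
    have h1 : σ • π ∈ Q := by simpa using hst 1 π (by simpa using hπ)
    have h2 : σ • (σ • π) ∈ Q := by simpa using hst 1 _ (by simpa using h1)
    exact Q.add_mem (Q.add_mem hπ h1) h2
  have ht2 : t ∉ Q ^ 2 := by
    intro h
    have h1 := hst 2 _ hσπ
    have h2 : 3 * π ∈ Q ^ 2 := by
      have : 3 * π = t - (σ • π - π) - (σ • π - π) - σ • (σ • π - π) := by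
        rw [ht, smul_sub]; ring
      rw [this]
      exact (Q ^ 2).sub_mem ((Q ^ 2).sub_mem ((Q ^ 2).sub_mem h hσπ) hσπ) h1
    rcases Ideal.IsPrime.mul_mem_pow Q h2 with h | h
    · exact h3 h
    · exact hπ2 h
  have key : ∀ n : ℕ, ∀ x : S, σ • x - x ∈ Q ^ (n + 1) := by
    intro n
    induction n with
    | zero => intro x; simpa using hσ x
    | succ n ih =>
      have hQ2 : ∀ e ∈ Q ^ 2, σ • e - e ∈ Q ^ (n + 2) := by
        intro e he
        rw [pow_two] at he
        induction he using Submodule.mul_induction_on' with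
        | mem_mul_mem a ha b hb =>
          have e1 : σ • (a * b) - a * b = (σ • a - a) * b + σ • a * (σ • b - b) := by
            rw [smul_mul']; ring
          rw [e1]
          refine Ideal.add_mem _ ?_ ?_
          · rw [pow_succ]; exact Ideal.mul_mem_mul (ih a) hb
          · rw [pow_succ']
            exact Ideal.mul_mem_mul (by simpa using hst 1 a (by simpa using ha)) (ih b)
        | add x _ y _ hx hy =>
          have e1 : σ • (x + y) - (x + y) = (σ • x - x) + (σ • y - y) := by
            rw [smul_add]; ring
          rw [e1]; exact Ideal.add_mem _ hx hy
      have hQ1 : ∀ x ∈ Q, σ • x - x ∈ Q ^ (n + 2) := by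
        intro x hx
        obtain ⟨d, e, he, hde⟩ := Ideal.exists_mul_add_mem_pow_succ (P := Q) (i := 1) hQ0
          t x (by simpa using htQ) (by simpa using ht2) (by simpa using hx)
        have e1 : σ • x - x = t * (σ • d - d) + (σ • e - e) := by
          rw [← hde, smul_add, smul_mul', htσ]; ring
        rw [e1]
        refine Ideal.add_mem _ ?_ (hQ2 e (by simpa using he))
        rw [pow_succ']; exact Ideal.mul_mem_mul htQ (ih d)
      intro x
      set w := σ • x - x with hw
      have hwQ : w ∈ Q := by simpa using hσ x
      have hδ := hQ1 w hwQ
      have hδ' := hst _ _ hδ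
      have e2 : 3 * w = -(2 * (σ • w - w) + σ • (σ • w - w)) := by
        have := hσ3' x
        have a1 : σ • x = x + w := by rw [hw]; ring
        have a2 : σ • (σ • x) = σ • x + σ • w := by rw [← smul_add, ← a1]
        have a3 : σ • (σ • (σ • x)) = σ • (σ • x) + σ • (σ • w) := by rw [← smul_add, ← a2]
        rw [smul_sub σ (σ • w) w]
        linear_combination this - a1 - a2 - a3
      have h4 : 3 * w ∈ Q ^ (n + 2) := by
        rw [e2]
        exact Ideal.neg_mem_iff _ |>.mpr (Ideal.add_mem _ (Ideal.mul_mem_left _ _ hδ) hδ')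
      rcases Ideal.IsPrime.mul_mem_pow Q h4 with h | h
      · exact absurd h h3
      · exact h
  apply hfaith
  intro x
  rw [← sub_eq_zero]
  have hbot := Ideal.iInf_pow_eq_bot_of_isDomain Q (Ideal.IsPrime.ne_top inferInstance)
  have : σ • x - x ∈ (⨅ i : ℕ, Q ^ i) := by
    rw [Ideal.mem_iInf]
    intro i
    exact Ideal.pow_le_pow_right (Nat.le_succ i) (key i x)
  rw [hbot] at this
  simpa using this

lemma card_inertia_le_three [Finite G] (hfaith : ∀ σ : G, (∀ x : S, σ • x = x) → σ = 1)
    (hexp : ∀ σ : G, σ ^ 3 = 1)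
    (Q : Ideal S) [Q.IsPrime] (hQ0 : Q ≠ ⊥) (h3 : (3 : S) ∉ Q) :
    Nat.card (Q.inertia G) ≤ 3 := by
  classical
  obtain ⟨π, hπ, hπ2⟩ := Ideal.exists_mem_pow_notMem_pow_succ Q hQ0 (Ideal.IsPrime.ne_top inferInstance) 1
  rw [pow_one] at hπ
  norm_num at hπ2
  have hex : ∀ σ : Q.inertia G, ∃ c : S, (σ : G) • π - c * π ∈ Q ^ 2 := by
    rintro ⟨σ, hσ⟩
    obtain ⟨d, e, he, hde⟩ := Ideal.exists_mul_add_mem_pow_succ (P := Q) (i := 1) hQ0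
      π (σ • π) (by simpa using hπ) (by simpa using hπ2)
      (smul_mem_pow_of_inertia hσ 1 (by simpa using hπ))
    refine ⟨d, ?_⟩
    have : σ • π - d * π = e := by rw [← hde]; ring
    simpa [this] using he
  choose c hc using hex
  have hcancel : ∀ x : S, x * π ∈ Q ^ 2 → x ∈ Q := fun x hx =>
    (Ideal.IsPrime.mul_mem_pow Q hx).resolve_right hπ2
  let f : Q.inertia G → S ⧸ Q := fun σ => Ideal.Quotient.mk Q (c σ)
  have hf3 : ∀ σ, f σ ∈ (nthRoots 3 (1 : S ⧸ Q)).toFinset := by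
    intro σ
    rw [Multiset.mem_toFinset, mem_nthRoots (by norm_num), ← map_pow, ← map_one (Ideal.Quotient.mk Q),
      Ideal.Quotient.eq]
    apply hcancel
    have hσ3 : (σ : G) • ((σ : G) • ((σ : G) • π)) = π := by
      rw [← mul_smul, ← mul_smul, ← pow_two, ← pow_succ, hexp, one_smul]
    have step : ∀ y b : S, y - b * π ∈ Q ^ 2 → (σ : G) • y - (b * c σ) * π ∈ Q ^ 2 := by
      intro y b hy
      have h1 := smul_mem_pow_of_inertia σ.2 2 hy
      have h2 : ((σ : G) • b - b) * ((σ : G) • π) ∈ Q ^ 2 := by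
        rw [pow_two]
        exact Ideal.mul_mem_mul (σ.2 b)
          (by simpa using smul_mem_pow_of_inertia σ.2 1 (by simpa using hπ))
      have h3 := (Q ^ 2).mul_mem_left b (hc σ)
      have e : (σ : G) • y - (b * c σ) * π = (σ : G) • (y - b * π) +
          ((σ : G) • b - b) * ((σ : G) • π) + b * ((σ : G) • π - c σ * π) := by
        rw [smul_sub, smul_mul']; ring
      rw [e]
      exact Ideal.add_mem _ (Ideal.add_mem _ h1 h2) h3
    have h5 := step _ _ (step _ _ (hc σ))
    rw [hσ3] at h5
    have h6 := (Ideal.neg_mem_iff _).mpr h5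
    convert h6 using 1
    ring
  have hinj : Function.Injective f := by
    intro σ τ h
    have h1 : c σ - c τ ∈ Q := Ideal.Quotient.eq.mp h
    have h2 : (σ : G) • π - (τ : G) • π ∈ Q ^ 2 := by
      have e : (σ : G) • π - (τ : G) • π = ((σ : G) • π - c σ * π) - ((τ : G) • π - c τ * π)
        + (c σ - c τ) * π := by ring
      rw [e]
      refine Ideal.add_mem _ (Ideal.sub_mem _ (hc σ) (hc τ)) ?_
      rw [pow_two]; exact Ideal.mul_mem_mul h1 hπ
    have h3' : ((τ⁻¹ * σ : Q.inertia G) : G) • π - π ∈ Q ^ 2 := by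
      have := smul_mem_pow_of_inertia (τ⁻¹).2 2 h2
      rw [smul_sub, ← mul_smul, ← mul_smul] at this
      simpa using this
    have h4 := tame_aux hfaith Q hQ0 h3 _ (τ⁻¹ * σ).2 (hexp _) π hπ hπ2 h3'
    have h5 : τ⁻¹ * σ = 1 := Subtype.ext h4
    exact (inv_mul_eq_one.mp h5).symm
  let g : Q.inertia G → (nthRoots 3 (1 : S ⧸ Q)).toFinset := fun σ => ⟨f σ, hf3 σ⟩
  have hg : Function.Injective g := fun a b h => hinj (congrArg Subtype.val h)
  calc Nat.card (Q.inertia G) ≤ Nat.card (nthRoots 3 (1 : S ⧸ Q)).toFinset :=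
        Nat.card_le_card_of_injective g hg
    _ = (nthRoots 3 (1 : S ⧸ Q)).toFinset.card := by
        rw [Nat.card_eq_fintype_card, Fintype.card_coe]
    _ ≤ Multiset.card (nthRoots 3 (1 : S ⧸ Q)) := Multiset.toFinset_card_le _
    _ ≤ 3 := card_nthRoots 3 1
end Tame

section Quad
variable {K : Type} [Field K] [NumberField K]

lemma quad_lin (d : ℕ) (hd : 0 < d) (s : K) (hs : s ^ 2 = -(d : K)) (a b : ℚ)
    (h : (a : K) + b * s = 0) : a = 0 ∧ b = 0 := by
  have h1 : (a : K) ^ 2 = - (d * b ^ 2) := by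
    have : (a : K) = - (b * s) := by linear_combination h
    rw [this]; linear_combination b ^ 2 * hs
  have h2 : a ^ 2 = - (d * b ^ 2) := by exact_mod_cast h1
  have hd' : (0 : ℚ) < d := by exact_mod_cast hd
  have hb : b = 0 := by
    by_contra hb
    have : 0 < b ^ 2 := by positivity
    nlinarith [sq_nonneg a, mul_pos hd' this]
  subst hb
  refine ⟨?_, rfl⟩
  simpa using h2

lemma quad_structure (d : ℕ) (hd : d.Prime) (m : ℤ) (hm : (d : ℤ) = 4 * m - 1)
    (s : K) (hs : s ^ 2 = -(d : K)) (hK : Module.finrank ℚ K = 2) :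
    ∃ ω : 𝓞 K, ω * ω = ω - m ∧ (∀ x : 𝓞 K, ∃ u v : ℤ, x = u + v * ω) ∧
      (∀ u v : ℤ, (u : 𝓞 K) + v * ω = 0 → u = 0 ∧ v = 0) := by
  have hlin := quad_lin d hd.pos s hs
  have hdm : (d : K) = 4 * m - 1 := by exact_mod_cast congrArg (Int.cast : ℤ → K) hm
  have hli : LinearIndependent ℚ ![(1 : K), s] := by
    rw [LinearIndependent.pair_iff]
    intro a b h
    apply hlin
    simpa [Algebra.smul_def] using h
  let b := basisOfLinearIndependentOfCardEqFinrank hli (by simp [hK])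
  have hb0 : b 0 = 1 := by simp [b]
  have hb1 : b 1 = s := by simp [b]
  have hrep : ∀ x : K, ∃ a c : ℚ, x = a + c * s := by
    intro x
    refine ⟨b.repr x 0, b.repr x 1, ?_⟩
    conv_lhs => rw [← b.sum_repr x]
    simp [Fin.sum_univ_two, hb0, hb1, Algebra.smul_def]
  have htr1 : Algebra.trace ℚ K s = 0 := by
    rw [Algebra.trace_eq_matrix_trace b, Matrix.trace_fin_two, Algebra.leftMulMatrix_eq_repr_mul,
      Algebra.leftMulMatrix_eq_repr_mul, hb0, hb1, mul_one, ← pow_two, hs, ← hb1]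
    have : -(d : K) = (-(d : ℚ)) • b 0 := by rw [hb0]; simp [Algebra.smul_def]
    rw [this, map_smul]
    simp
  have htr : ∀ a c : ℚ, Algebra.trace ℚ K (a + c * s) = 2 * a := by
    intro a c
    have : (a : K) + c * s = a • 1 + c • s := by simp [Algebra.smul_def]
    rw [this, map_add, map_smul, map_smul, htr1]
    have := Algebra.trace_algebraMap (R := ℚ) (S := K) (1 : ℚ)
    rw [map_one, hK] at this
    rw [this]; simp; ring
  have htrint : ∀ x : K, IsIntegral ℤ x → ∃ n : ℤ, Algebra.trace ℚ K x = n := by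
    intro x hx
    have := (Algebra.isIntegral_trace hx : IsIntegral ℤ (Algebra.trace ℚ K x))
    obtain ⟨n, hn⟩ := IsIntegrallyClosed.isIntegral_iff.mp this
    exact ⟨n, by simpa using hn.symm⟩
  have hsint : IsIntegral ℤ s := by
    refine ⟨X ^ 2 + C (d : ℤ), by monicity!, ?_⟩
    simp [hs]
  have hωint : IsIntegral ℤ ((1 + s) / 2) := by
    refine ⟨X ^ 2 - X + C m, by monicity!, ?_⟩
    rw [eval₂_add, eval₂_sub, eval₂_pow, eval₂_X, eval₂_C, eq_intCast]
    field_simp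
    linear_combination hs - hdm
  refine ⟨⟨(1 + s) / 2, hωint⟩, ?_, ?_, ?_⟩
  · apply RingOfIntegers.ext
    push_cast
    change (1 + s) / 2 * ((1 + s) / 2) = (1 + s) / 2 - m
    field_simp
    linear_combination hs - hdm
  · intro x
    obtain ⟨a, c, hac⟩ := hrep x
    have hx : IsIntegral ℤ (x : K) := x.isIntegral_coe
    obtain ⟨A, hA⟩ := htrint _ hx
    obtain ⟨B, hB⟩ := htrint _ (hx.mul hsint)
    obtain ⟨n, hn⟩ := htrint _ (hx.mul hx)
    have e1 : (x : K) * s = ((-(d : ℚ) * c : ℚ) : K) + (a : ℚ) * s := by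
      rw [hac]; push_cast; linear_combination c * hs
    have e2 : (x : K) * x = ((a ^ 2 - d * c ^ 2 : ℚ) : K) + ((2 * a * c : ℚ) : K) * s := by
      rw [hac]; push_cast; linear_combination c ^ 2 * hs
    rw [hac, htr] at hA
    rw [e1, htr] at hB
    rw [e2, htr] at hn
    have hdQ : (d : ℚ) ≠ 0 := by exact_mod_cast hd.ne_zero
    have k1 : (d : ℚ) * A ^ 2 - B ^ 2 = 2 * d * n := by
      rw [← hA, ← hB, ← hn]; ring
    have k2 : (d : ℤ) * A ^ 2 - B ^ 2 = 2 * d * n := by exact_mod_cast k1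
    have k3 : (d : ℤ) ∣ B := by
      apply (Nat.prime_iff_prime_int.mp hd).dvd_of_dvd_pow (n := 2)
      exact ⟨A ^ 2 - 2 * n, by linear_combination -k2⟩
    obtain ⟨B', rfl⟩ := k3
    have hdZ : (d : ℤ) ≠ 0 := by exact_mod_cast hd.ne_zero
    have k4 : A ^ 2 - d * B' ^ 2 = 2 * n := by
      apply mul_left_cancel₀ hdZ
      linear_combination k2
    have hc : 2 * c = -B' := by
      apply mul_left_cancel₀ hdQ
      push_cast at hB
      linear_combination -hB
    have k5 : Even (A + B') := by
      have : Even (A ^ 2 - d * B' ^ 2) := ⟨n, by rw [k4]; ring⟩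
      have hdo : ¬ Even (d : ℤ) := by rw [hm]; intro ⟨r, hr⟩; omega
      rw [Int.even_sub, Int.even_mul] at this
      rw [Int.even_add]
      simp [Int.even_pow, hdo] at this ⊢
      tauto
    obtain ⟨r, hr⟩ := k5
    refine ⟨r, -B', ?_⟩
    apply RingOfIntegers.ext
    push_cast
    change (x : K) = r + (-B') * ((1 + s) / 2)
    have hA' : (2 : K) * a = A := by exact_mod_cast congrArg (Rat.cast : ℚ → K) hA
    have hc' : (2 : K) * c = -B' := by exact_mod_cast congrArg (Rat.cast : ℚ → K) hc
    have hr' : (A : K) + B' = r + r := by exact_mod_cast congrArg (Int.cast : ℤ → K) hr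
    rw [hac]
    have h2 : (2 : K) ≠ 0 := two_ne_zero
    field_simp
    linear_combination hA' + s * hc' + hr'
  · intro u v h
    have h' := congrArg (fun z : 𝓞 K => (z : K)) h
    push_cast at h'
    change (u : K) + v * ((1 + s) / 2) = 0 at h'
    have := hlin (u + v / 2) (v / 2) (by push_cast; rw [← h']; ring)
    have hv : (v : ℚ) = 0 := by linarith [this.2]
    have hu : (u : ℚ) = 0 := by linarith [this.1]
    exact ⟨by exact_mod_cast hu, by exact_mod_cast hv⟩

end Quad

section Quad2
variable {K : Type} [Field K] [NumberField K]

lemma quad_units (m : ℤ) (hm : 2 ≤ m) (ω : 𝓞 K) (hω : ω * ω = ω - m)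
    (hrep : ∀ x : 𝓞 K, ∃ u v : ℤ, x = u + v * ω)
    (hlin : ∀ u v : ℤ, (u : 𝓞 K) + v * ω = 0 → u = 0 ∧ v = 0) (x : (𝓞 K)ˣ) :
    x = 1 ∨ x = -1 := by
  obtain ⟨u, v, h1⟩ := hrep x
  obtain ⟨u', v', h2⟩ := hrep ((x⁻¹ : (𝓞 K)ˣ) : 𝓞 K)
  have h3 : (x : 𝓞 K) * ((x⁻¹ : (𝓞 K)ˣ) : 𝓞 K) = 1 := by simp
  rw [h1, h2] at h3
  have h4 := hlin (u * u' - m * v * v' - 1) (u * v' + v * u' + v * v')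
    (by push_cast; linear_combination h3 - v * v' * hω)
  obtain ⟨h5, h6⟩ := h4
  have h7 : (u ^ 2 + u * v + m * v ^ 2) * (u' ^ 2 + u' * v' + m * v' ^ 2) = 1 := by
    have e : (u ^ 2 + u * v + m * v ^ 2) * (u' ^ 2 + u' * v' + m * v' ^ 2) =
      (u * u' - m * v * v') ^ 2 + (u * u' - m * v * v') * (u * v' + v * u' + v * v')
        + m * (u * v' + v * u' + v * v') ^ 2 := by ring
    have h8 : u * u' - m * v * v' = 1 := by linarith
    rw [e, h6, h8]; ring
  have h8 : u ^ 2 + u * v + m * v ^ 2 = 1 := by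
    rcases Int.eq_one_or_neg_one_of_mul_eq_one h7 with h | h
    · exact h
    · nlinarith [sq_nonneg (2 * u + v), sq_nonneg v]
  have hv : v = 0 := by
    by_contra hv
    have : 1 ≤ v ^ 2 := by have : 0 < v ^ 2 := by positivity
                           omega
    nlinarith [sq_nonneg (2 * u + v)]
  subst hv
  have hu : u = 1 ∨ u = -1 := by
    have : u * u = 1 := by linarith
    exact Int.eq_one_or_neg_one_of_mul_eq_one this
  rcases hu with rfl | rfl
  · left; apply Units.ext; simpa using h1
  · right; apply Units.ext; simpa using h1

lemma quad_prime (m : ℤ) (ω : 𝓞 K) (hω : ω * ω = ω - m)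
    (hrep : ∀ x : 𝓞 K, ∃ u v : ℤ, x = u + v * ω)
    (hlin : ∀ u v : ℤ, (u : 𝓞 K) + v * ω = 0 → u = 0 ∧ v = 0) (p : ℕ) (hp : p.Prime)
    (han : ∀ u v : ZMod p, u ^ 2 + u * v + m * v ^ 2 = 0 → u = 0 ∧ v = 0) :
    Prime (p : 𝓞 K) := by
  have hcoord : ∀ u v : ℤ, (p : 𝓞 K) ∣ u + v * ω → (p : ℤ) ∣ u ∧ (p : ℤ) ∣ v := by
    rintro u v ⟨y, hy⟩
    obtain ⟨a, b, rfl⟩ := hrep y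
    have := hlin (u - p * a) (v - p * b) (by push_cast; linear_combination hy)
    exact ⟨⟨a, by linarith⟩, ⟨b, by linarith⟩⟩
  have han' : ∀ u v : ℤ, (p : ℤ) ∣ u ^ 2 + u * v + m * v ^ 2 → (p : 𝓞 K) ∣ u + v * ω := by
    intro u v h
    have h1 := (ZMod.intCast_zmod_eq_zero_iff_dvd _ p).mpr h
    push_cast at h1
    obtain ⟨h2, h3⟩ := han _ _ h1
    rw [ZMod.intCast_zmod_eq_zero_iff_dvd] at h2 h3
    obtain ⟨a, rfl⟩ := h2
    obtain ⟨b, rfl⟩ := h3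
    exact ⟨a + b * ω, by push_cast; ring⟩
  refine ⟨by exact_mod_cast hp.ne_zero, ?_, ?_⟩
  · intro h
    have := (hcoord 1 0 (by simpa using h.dvd)).1
    have := Int.eq_one_of_dvd_one (by positivity) this
    exact hp.one_lt.ne' (by exact_mod_cast this)
  · intro x y hxy
    obtain ⟨u, v, rfl⟩ := hrep x
    obtain ⟨u', v', rfl⟩ := hrep y
    have e : ((u : 𝓞 K) + v * ω) * (u' + v' * ω) =
      ((u * u' - m * v * v' : ℤ) : 𝓞 K) + ((u * v' + v * u' + v * v' : ℤ) : 𝓞 K) * ω := by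
      push_cast; linear_combination v * v' * hω
    rw [e] at hxy
    obtain ⟨h1, h2⟩ := hcoord _ _ hxy
    have h7 : (p : ℤ) ∣ (u ^ 2 + u * v + m * v ^ 2) * (u' ^ 2 + u' * v' + m * v' ^ 2) := by
      have e : (u ^ 2 + u * v + m * v ^ 2) * (u' ^ 2 + u' * v' + m * v' ^ 2) =
        (u * u' - m * v * v') * (u * u' - m * v * v') +
        (u * v' + v * u' + v * v') * (u * u' - m * v * v' + m * (u * v' + v * u' + v * v')) := by
          ring
      rw [e]
      exact dvd_add (h1.mul_right _) (h2.mul_right _)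
    rcases (Nat.prime_iff_prime_int.mp hp).dvd_or_dvd h7 with h | h
    · left; exact han' _ _ h
    · right; exact han' _ _ h

lemma eq_span_of_mem_prime (q : 𝓞 K) (hq : Prime q) (P : Ideal (𝓞 K)) [hP : P.IsPrime]
    (h : q ∈ P) : P = Ideal.span {q} := by
  have h1 : (Ideal.span {q}).IsPrime := (Ideal.span_singleton_prime hq.ne_zero).mpr hq
  have h2 : (Ideal.span {q}).IsMaximal := h1.isMaximal (by simpa using hq.ne_zero)
  exact (h2.eq_of_le hP.ne_top (by simpa [Ideal.span_le] using h)).symm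

lemma quad_discr (m : ℤ) (ω : 𝓞 K) (hω : ω * ω = ω - m) (hK : Module.finrank ℚ K = 2)
    (hrep : ∀ x : 𝓞 K, ∃ u v : ℤ, x = u + v * ω)
    (hlin : ∀ u v : ℤ, (u : 𝓞 K) + v * ω = 0 → u = 0 ∧ v = 0) : discr K = 1 - 4 * m := by
  have hli : LinearIndependent ℤ ![(1 : 𝓞 K), ω] := by
    rw [LinearIndependent.pair_iff]
    intro a b h
    apply hlin
    simpa using h
  let b := Module.Basis.mk hli (by
    intro x _
    obtain ⟨u, v, rfl⟩ := hrep x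
    rw [Matrix.range_cons, Matrix.range_cons, Matrix.range_empty]
    rw [Set.union_empty, Set.singleton_union, Submodule.mem_span_pair]
    exact ⟨u, v, by simp⟩)
  have hb0 : b 0 = 1 := by simp [b]
  have hb1 : b 1 = ω := by simp [b]
  have htr0 : Algebra.trace ℤ (𝓞 K) 1 = 2 := by
    have := Algebra.trace_algebraMap (R := ℤ) (S := 𝓞 K) (1 : ℤ)
    rw [map_one, RingOfIntegers.rank, hK] at this
    simpa using this
  have htr1 : Algebra.trace ℤ (𝓞 K) ω = 1 := by
    rw [Algebra.trace_eq_matrix_trace b, Matrix.trace_fin_two, Algebra.leftMulMatrix_eq_repr_mul,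
      Algebra.leftMulMatrix_eq_repr_mul, hb0, hb1, mul_one, hω, map_sub, ← hb1]
    have : (m : 𝓞 K) = m • b 0 := by rw [hb0]; simp
    rw [this, map_smul]
    simp
  have htr2 : Algebra.trace ℤ (𝓞 K) (ω * ω) = 1 - 2 * m := by
    have : ω - (m : 𝓞 K) = ω - m • 1 := by simp
    rw [hω, this, map_sub, map_smul, htr1, htr0]; simp; ring
  rw [← discr_eq_discr K b, Algebra.discr_def, Matrix.det_fin_two]
  simp only [Algebra.traceMatrix_apply, Algebra.traceForm_apply, hb0, hb1, one_mul, mul_one, htr0,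
    htr1, htr2]
  ring

lemma quad_pid (hK : Module.finrank ℚ K = 2) (d B : ℕ) (hdisc : discr K = -d)
    (hB : 4 * d < 9 * (B + 1) ^ 2)
    (hpr : ∀ p : ℕ, p.Prime → p ≤ B → Prime (p : 𝓞 K)) : IsPrincipalIdealRing (𝓞 K) := by
  apply RingOfIntegers.isPrincipalIdealRing_of_isPrincipal_of_pow_le_of_mem_primesOver_of_mem_Icc
  intro p hp hpp P hP _
  have hM : ⌊(4 / Real.pi) ^ InfinitePlace.nrComplexPlaces K *
      ((Module.finrank ℚ K).factorial / (Module.finrank ℚ K) ^ (Module.finrank ℚ K) *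
        √|discr K|)⌋₊ ≤ B := by
    have hr : InfinitePlace.nrComplexPlaces K ≤ 1 := by
      have := InfinitePlace.card_add_two_mul_card_eq_rank K
      omega
    rw [← Nat.lt_succ_iff, Nat.floor_lt (by positivity), hdisc, hK]
    have hpi := Real.pi_gt_three
    have hpi4 := Real.pi_le_four
    have h1 : (4 / Real.pi) ^ InfinitePlace.nrComplexPlaces K ≤ 4 / 3 := by
      calc (4 / Real.pi) ^ InfinitePlace.nrComplexPlaces K ≤ (4 / Real.pi) ^ 1 := by
            apply pow_le_pow_right₀ _ hr
            rw [le_div_iff₀ (by positivity)]; linarith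
        _ ≤ 4 / 3 := by rw [pow_one]; gcongr
    have h2 : √(d : ℝ) < 3 / 2 * (B + 1) := by
      rw [Real.sqrt_lt' (by positivity)]
      have : (4 * d : ℝ) < 9 * (B + 1) ^ 2 := by exact_mod_cast hB
      nlinarith
    have h3 : √|(((-d : ℤ) : ℤ) : ℝ)| = √(d : ℝ) := by simp
    push_cast at h3 ⊢
    rw [h3]
    calc _ ≤ 4 / 3 * (((Nat.factorial 2 : ℕ) : ℝ) / 2 ^ 2 * √(d : ℝ)) := by gcongr
      _ = 2 / 3 * √(d : ℝ) := by norm_num [Nat.factorial]; ring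
      _ < _ := by linarith
  have hpB : p ≤ B := (Finset.mem_Icc.mp hp).2.trans (by simpa using hM)
  obtain ⟨hP1, hP2⟩ := hP
  have hmem : (p : 𝓞 K) ∈ P := by
    have := (Ideal.mem_of_liesOver P (Ideal.span {(p : ℤ)}) (p : ℤ)).mp
      (Ideal.mem_span_singleton_self _)
    simpa using this
  rw [eq_span_of_mem_prime _ (hpr p hpp hpB) P hmem]
  exact ⟨⟨_, rfl⟩⟩

lemma quad_all (d : ℕ) (hd : d ∈ ({11, 19, 43, 67, 163} : Finset ℕ))
    (s : K) (hs : s ^ 2 = -(d : K)) (hK : Module.finrank ℚ K = 2) :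
    IsPrincipalIdealRing (𝓞 K) ∧ (∀ u : (𝓞 K)ˣ, u = 1 ∨ u = -1) ∧ Prime (2 : 𝓞 K) := by
  have key : ∀ (m B : ℕ), 2 ≤ m → d.Prime → d + 1 = 4 * m →
      4 * d < 9 * (B + 1) ^ 2 → 2 ≤ B → (∀ p : ℕ, p.Prime → p ≤ B → 
       ∀ u v : ZMod p, u ^ 2 + u * v + m * v ^ 2 = 0 → u = 0 ∧ v = 0) →
      IsPrincipalIdealRing (𝓞 K) ∧ (∀ u : (𝓞 K)ˣ, u = 1 ∨ u = -1) ∧ Prime (2 : 𝓞 K) := by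
    intro m B hm hdp hdm hB hB2 han
    have hdm' : (d : ℤ) = 4 * (m : ℤ) - 1 := by omega
    obtain ⟨ω, hω, hrep, hlin⟩ := quad_structure d hdp m hdm' s hs hK
    have hpr : ∀ p : ℕ, p.Prime → p ≤ B → Prime (p : 𝓞 K) := fun p hp hpB =>
      quad_prime m ω hω hrep hlin p hp (by simpa using han p hp hpB)
    refine ⟨quad_pid hK d B ?_ hB hpr, quad_units m (by omega) ω hω hrep hlin, ?_⟩
    · rw [quad_discr m ω hω hK hrep hlin]; omega
    · exact_mod_cast hpr 2 Nat.prime_two hB2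
  simp only [Finset.mem_insert, Finset.mem_singleton] at hd
  have f2 : ∀ u v : ZMod 2, u ^ 2 + u * v + 1 * v ^ 2 = 0 → u = 0 ∧ v = 0 := by decide
  rcases hd with rfl | rfl | rfl | rfl | rfl
  · refine key 3 2 (by norm_num) (by norm_num) (by norm_num) (by norm_num) (by norm_num) ?_
    intro p hp hpB
    interval_cases p <;> first | (exfalso; revert hp; norm_num; done) | decide
  · refine key 5 2 (by norm_num) (by norm_num) (by norm_num) (by norm_num) (by norm_num) ?_
    intro p hp hpB
    interval_cases p <;> first | (exfalso; revert hp; norm_num; done) | decide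
  · refine key 11 4 (by norm_num) (by norm_num) (by norm_num) (by norm_num) (by norm_num) ?_
    intro p hp hpB
    interval_cases p <;> first | (exfalso; revert hp; norm_num; done) | decide
  · refine key 17 5 (by norm_num) (by norm_num) (by norm_num) (by norm_num) (by norm_num) ?_
    intro p hp hpB
    interval_cases p <;> first | (exfalso; revert hp; norm_num; done) | decide
  · refine key 41 8 (by norm_num) (by norm_num) (by norm_num) (by norm_num) (by norm_num) ?_
    intro p hp hpB
    interval_cases p <;> first | (exfalso; revert hp; norm_num; done) | decide

end Quad2
section Exist

lemma cubic_no_root_rat (a b c : ℤ) (ℓ : ℕ)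
    (hℓ : ∀ x : ZMod ℓ, x ^ 3 + a * x ^ 2 + b * x + c ≠ 0) (x : ℚ) :
    x ^ 3 + a * x ^ 2 + b * x + c ≠ 0 := by
  intro h
  have hxint : IsIntegral ℤ x := by
    refine ⟨X ^ 3 + C a * X ^ 2 + C b * X + C c, by monicity!, ?_⟩
    simp only [eval₂_add, eval₂_mul, eval₂_pow, eval₂_X, eval₂_C]
    simp only [eq_intCast]
    exact h
  obtain ⟨n, rfl⟩ := IsIntegrallyClosed.isIntegral_iff.mp hxint
  have h2 : n ^ 3 + a * n ^ 2 + b * n + c = 0 := by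
    simp only [eq_intCast] at h
    exact_mod_cast h
  have h3 := congrArg (Int.cast : ℤ → ZMod ℓ) h2
  push_cast at h3
  exact hℓ _ h3

lemma cubic_no_root {K : Type} [Field K] [NumberField K] (hK : Module.finrank ℚ K = 2)
    (a b c : ℤ) (ℓ : ℕ)
    (hℓ : ∀ x : ZMod ℓ, x ^ 3 + a * x ^ 2 + b * x + c ≠ 0) (x : K) :
    x ^ 3 + a * x ^ 2 + b * x + c ≠ 0 := by
  intro h
  set q : ℚ[X] := X ^ 3 + C (a : ℚ) * X ^ 2 + C (b : ℚ) * X + C (c : ℚ) with hq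
  have hqm : q.Monic := by rw [hq]; monicity!
  have hqd : q.natDegree = 3 := by rw [hq]; compute_degree!
  have hirr : Irreducible q := by
    rw [irreducible_iff_roots_eq_zero_of_degree_le_three (by omega) (by omega)]
    apply Multiset.eq_zero_of_forall_notMem
    intro y hy
    have := (mem_roots'.mp hy).2
    rw [hq, IsRoot.def] at this
    simp only [eval_add, eval_mul, eval_pow, eval_X, eval_C] at this
    exact cubic_no_root_rat a b c ℓ hℓ y this
  have hx : aeval x q = 0 := by
    rw [hq]
    simp only [map_add, map_mul, map_pow, aeval_X, aeval_C]
    simpa using h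
  have h1 := minpoly.eq_of_irreducible_of_monic hirr hx hqm
  have h2 := minpoly.natDegree_le (A := ℚ) x
  rw [← h1, hqd, hK] at h2
  omega

lemma cubic_vieta {F : Type} [Field F] (a b c x y z : F) (hxy : x ≠ y) (hyz : y ≠ z) (hxz : x ≠ z)
    (hx : x ^ 3 + a * x ^ 2 + b * x + c = 0) (hy : y ^ 3 + a * y ^ 2 + b * y + c = 0)
    (hz : z ^ 3 + a * z ^ 2 + b * z + c = 0) :
    a = -(x + y + z) ∧ b = x * y + y * z + z * x ∧ c = -(x * y * z) := by
  have h1 : x ^ 2 + x * y + y ^ 2 + a * (x + y) + b = 0 := by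
    apply mul_left_cancel₀ (sub_ne_zero.mpr hxy)
    linear_combination hx - hy
  have h2 : x ^ 2 + x * z + z ^ 2 + a * (x + z) + b = 0 := by
    apply mul_left_cancel₀ (sub_ne_zero.mpr hxz)
    linear_combination hx - hz
  have h3 : x + y + z + a = 0 := by
    apply mul_left_cancel₀ (sub_ne_zero.mpr hyz)
    linear_combination h1 - h2
  have ha : a = -(x + y + z) := by linear_combination h3
  have hb : b = x * y + y * z + z * x := by
    rw [ha] at h1; linear_combination h1
  refine ⟨ha, hb, ?_⟩
  rw [ha, hb] at hx
  linear_combination hx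

lemma exist_part {K L : Type} [Field K] [NumberField K] [Field L] [NumberField L] [Algebra K L]
    (a b c : ℤ) (p : K[X]) (hp : p = X ^ 3 + C (a : K) * X ^ 2 + C (b : K) * X + C (c : K))
    (hroot : ∀ x : K, x ^ 3 + a * x ^ 2 + b * x + c ≠ 0)
    (D : ℤ) (hD : D = a ^ 2 * b ^ 2 - 4 * b ^ 3 - 4 * a ^ 3 * c - 27 * c ^ 2 + 18 * a * b * c)
    (δ : K) (hδ : δ ^ 2 = D) (i j : ℤ) (k : ℕ) (hij : i * (a ^ 2 - 3 * b) + j * D = 2 ^ k)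
    (hL : IsSplittingField K L p) :
    IsGalois K L ∧ Module.finrank K L = 3 ∧
      (∀ P : Ideal (𝓞 K), P.IsPrime → P ≠ ⊥ → (2 : 𝓞 K) ∉ P →
        ∀ Q : Ideal (𝓞 L), Q.IsPrime → Q.comap (algebraMap (𝓞 K) (𝓞 L)) = P →
          Ideal.ramificationIdx' P Q = 1) := by
  have hpm : p.Monic := by rw [hp]; monicity!
  have hpd : p.natDegree = 3 := by rw [hp]; compute_degree!
  have hirr : Irreducible p := by
    rw [irreducible_iff_roots_eq_zero_of_degree_le_three (by omega) (by omega)]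
    apply Multiset.eq_zero_of_forall_notMem
    intro y hy
    have := (mem_roots'.mp hy).2
    rw [hp, IsRoot.def] at this
    simp only [eval_add, eval_mul, eval_pow, eval_X, eval_C] at this
    exact hroot y this
  have hsep : p.Separable := hirr.separable
  have hgal : IsGalois K L := IsGalois.of_separable_splitting_field hsep
  have hev : ∀ x : L, aeval x p = 0 ↔ x ^ 3 + a * x ^ 2 + b * x + c = 0 := by
    intro x
    rw [hp]
    simp only [map_add, map_mul, map_pow, aeval_X, aeval_C, map_intCast]
  have hcard : Fintype.card (p.rootSet L) = 3 := by
    rw [card_rootSet_eq_natDegree hsep hL.splits, hpd]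
  have hcard' : (p.rootSet L).ncard = 3 := by
    rw [← Nat.card_coe_set_eq, Nat.card_eq_fintype_card, hcard]
  obtain ⟨x, y, z, hxy, hxz, hyz, hset⟩ := Set.ncard_eq_three.mp hcard'
  have hmem : ∀ r : L, r ∈ p.rootSet L ↔ r ^ 3 + a * r ^ 2 + b * r + c = 0 := by
    intro r
    rw [mem_rootSet, hev]
    exact ⟨fun h => h.2, fun h => ⟨hpm.ne_zero, h⟩⟩
  have hx := (hmem x).mp (by rw [hset]; simp)
  have hy := (hmem y).mp (by rw [hset]; simp)
  have hz := (hmem z).mp (by rw [hset]; simp)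
  obtain ⟨va, vb, vc⟩ := cubic_vieta (a : L) b c x y z hxy hyz hxz hx hy hz
  have hδL : (algebraMap K L δ) ^ 2 = ((x - y) * (y - z) * (z - x)) ^ 2 := by
    rw [← map_pow, hδ, map_intCast, hD]
    push_cast
    rw [va, vb, vc]; ring
  have hδ' : (x - y) * (y - z) * (z - x) ∈ (⊥ : IntermediateField K L) := by
    rcases sq_eq_sq_iff_eq_or_eq_neg.mp hδL with h | h
    · rw [← h]; exact IntermediateField.algebraMap_mem _ δ
    · have : (x - y) * (y - z) * (z - x) = -(algebraMap K L δ) := by rw [h]; ring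
      rw [this]; exact neg_mem (IntermediateField.algebraMap_mem _ δ)
  have hadj : IntermediateField.adjoin K {x} = ⊤ := by
    set F := IntermediateField.adjoin K {x} with hF
    have hxF : x ∈ F := IntermediateField.mem_adjoin_simple_self K x
    have hδF : (x - y) * (y - z) * (z - x) ∈ F := (bot_le : ⊥ ≤ F) hδ'
    have haF : (a : L) ∈ F := intCast_mem F a
    have hbF : (b : L) ∈ F := intCast_mem F b
    have hd1 : (x - y) * (z - x) = -(3 * x ^ 2 + 2 * a * x + b) := by rw [va, vb]; ring
    have hd2 : (x - y) * (z - x) ∈ F := by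
      rw [hd1]
      exact neg_mem (add_mem (add_mem (mul_mem (ofNat_mem F 3) (pow_mem hxF 2))
        (mul_mem (mul_mem (ofNat_mem F 2) haF) hxF)) hbF)
    have hd3 : (x - y) * (z - x) ≠ 0 := mul_ne_zero (sub_ne_zero.mpr hxy) (sub_ne_zero.mpr hxz.symm)
    have hyzF : y - z ∈ F := by
      have : y - z = (x - y) * (y - z) * (z - x) / ((x - y) * (z - x)) := by
        field_simp
      rw [this]; exact div_mem hδF hd2
    have hyF : y ∈ F := by
      have : y = ((-a - x) + (y - z)) / 2 := by rw [va]; ring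
      rw [this]
      exact div_mem (add_mem (sub_mem (neg_mem haF) hxF) hyzF) (ofNat_mem F 2)
    have hzF : z ∈ F := by
      have : z = (-a - x) - y := by rw [va]; ring
      rw [this]
      exact sub_mem (sub_mem (neg_mem haF) hxF) hyF
    have hsub : Algebra.adjoin K (p.rootSet L) ≤ F.toSubalgebra := by
      rw [Algebra.adjoin_le_iff, hset]
      rintro r (rfl | rfl | rfl) <;> assumption
    rw [hL.adjoin_rootSet] at hsub
    rw [← top_le_iff]
    intro r _
    exact hsub (Algebra.mem_top (x := r))
  have hdeg : Module.finrank K L = 3 := by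
    have hxi : IsIntegral K x := ⟨p, hpm, (hev x).mpr hx⟩
    have h1 := IntermediateField.adjoin.finrank hxi
    rw [hadj, IntermediateField.finrank_top', ← minpoly.eq_of_irreducible_of_monic hirr ((hev x).mpr hx) hpm,
      hpd] at h1
    exact h1
  refine ⟨hgal, hdeg, ?_⟩
  intro P hP hP0 h2P Q hQ hQP
  have : Q.LiesOver P := ⟨hQP.symm⟩
  rw [← card_inertia_eq P hP0 Q, Subgroup.card_eq_one, Subgroup.eq_bot_iff_forall]
  intro σ hσ
  by_contra hσ1
  have hσ3 : σ ^ 3 = 1 := by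
    rw [← hdeg, ← IsGalois.card_aut_eq_finrank K L]; exact pow_card_eq_one'
  have hfix : ∀ τ : Gal(L/K), τ x = x → τ = 1 := by
    intro τ hτ
    have h1 : (⊤ : IntermediateField K L) ≤ IntermediateField.fixedField (Subgroup.zpowers τ) := by
      rw [← hadj, IntermediateField.adjoin_simple_le_iff, IntermediateField.mem_fixedField_iff]
      intro f hf
      have : f ∈ MulAction.stabilizer Gal(L/K) x := by
        refine (Subgroup.zpowers_le.mpr ?_) hf
        exact hτ
      exact this
    ext r
    have := h1 (IntermediateField.mem_top (x := r))
    rw [IntermediateField.mem_fixedField_iff] at this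
    exact this τ (Subgroup.mem_zpowers τ)
  have hσx : x ≠ σ x := fun h => hσ1 (hfix σ h.symm)
  have hσσx : σ x ≠ σ (σ x) := fun h => hσx (σ.injective h)
  have hxne : x ≠ σ (σ x) := by
    intro h
    apply hσ1
    have h2 : σ ^ 2 = 1 := by
      apply hfix; rw [pow_two]; exact h.symm
    have : σ ^ 3 = σ ^ 2 * σ := pow_succ _ _
    rw [h2, one_mul, hσ3] at this
    exact this.symm
  have hmap : ∀ r : L, r ^ 3 + a * r ^ 2 + b * r + c = 0 →
      (σ r) ^ 3 + a * (σ r) ^ 2 + b * (σ r) + c = 0 := by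
    intro r hr
    have := congrArg σ hr
    simpa only [map_add, map_mul, map_pow, map_intCast, map_zero] using this
  have h1 := hmap x hx
  have h2 := hmap _ h1
  obtain ⟨wa, wb, wc⟩ := cubic_vieta (a : L) b c x (σ x) (σ (σ x)) hσx hσσx hxne hx h1 h2
  have hxint : IsIntegral ℤ x := by
    refine ⟨X ^ 3 + C a * X ^ 2 + C b * X + C c, by monicity!, ?_⟩
    simp only [eval₂_add, eval₂_mul, eval₂_pow, eval₂_X, eval₂_C]
    simp only [eq_intCast]
    exact hx
  let x0 : 𝓞 L := ⟨x, hxint⟩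
  have m1 : σ • x0 - x0 ∈ Q := hσ x0
  have m2 : σ • (σ • x0) - σ • x0 ∈ Q := hσ (σ • x0)
  have e1 : ((a ^ 2 - 3 * b : ℤ) : 𝓞 L) = (σ • x0 - x0) * ((σ • x0 - x0) +
      (σ • (σ • x0) - σ • x0)) + (σ • (σ • x0) - σ • x0) * (σ • (σ • x0) - σ • x0) := by
    apply RingOfIntegers.ext
    push_cast
    change (a : L) ^ 2 - 3 * b = (σ x - x) * ((σ x - x) + (σ (σ x) - σ x)) +
      (σ (σ x) - σ x) * (σ (σ x) - σ x)
    rw [wa, wb]; ring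
  have e2 : ((D : ℤ) : 𝓞 L) = (σ • x0 - x0) * ((σ • x0 - x0) *
      ((σ • (σ • x0) - σ • x0) * (σ • (σ • x0) - x0)) ^ 2) := by
    apply RingOfIntegers.ext
    rw [hD]
    push_cast
    change (a : L) ^ 2 * b ^ 2 - 4 * b ^ 3 - 4 * a ^ 3 * c - 27 * c ^ 2 + 18 * a * b * c =
      (σ x - x) * ((σ x - x) * ((σ (σ x) - σ x) * (σ (σ x) - x)) ^ 2)
    rw [wa, wb, wc]; ring
  have m3 : ((a ^ 2 - 3 * b : ℤ) : 𝓞 L) ∈ Q := by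
    rw [e1]; exact Q.add_mem (Q.mul_mem_right _ m1) (Q.mul_mem_right _ m2)
  have m4 : ((D : ℤ) : 𝓞 L) ∈ Q := by
    rw [e2]; exact Q.mul_mem_right _ m1
  have m5 : (2 : 𝓞 L) ^ k ∈ Q := by
    have : (2 : 𝓞 L) ^ k = (i : 𝓞 L) * ((a ^ 2 - 3 * b : ℤ) : 𝓞 L) + (j : 𝓞 L) * ((D : ℤ) : 𝓞 L) := by
      exact_mod_cast congrArg (Int.cast : ℤ → 𝓞 L) hij.symm
    rw [this]; exact Q.add_mem (Q.mul_mem_left _ m3) (Q.mul_mem_left _ m4)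
  have m6 : (2 : 𝓞 L) ∈ Q := hQ.mem_of_pow_mem _ m5
  apply h2P
  rw [← hQP, Ideal.mem_comap, map_ofNat]
  exact m6

end Exist
section Uniq

lemma inertia_restrict {K L N : Type} [Field K] [NumberField K] [Field L] [NumberField L]
    [Field N] [NumberField N] [Algebra K L] [Algebra K N] [Algebra L N] [IsScalarTower K L N]
    [IsGalois K L]
    (hunr : ∀ P : Ideal (𝓞 K), P.IsPrime → P ≠ ⊥ → (2 : 𝓞 K) ∉ P →
        ∀ Q : Ideal (𝓞 L), Q.IsPrime → Q.comap (algebraMap (𝓞 K) (𝓞 L)) = P →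
          Ideal.ramificationIdx' P Q = 1)
    (P : Ideal (𝓞 K)) [P.IsPrime] (hP : P ≠ ⊥) (h2 : (2 : 𝓞 K) ∉ P) (Q : Ideal (𝓞 N)) [Q.IsPrime]
    [hQP : Q.LiesOver P] (σ : Gal(N/K)) (hσ : σ ∈ Q.inertia Gal(N/K)) :
    AlgEquiv.restrictNormalHom L σ = 1 := by
  set QL : Ideal (𝓞 L) := Q.under (𝓞 L) with hQL
  have : QL.LiesOver P := Ideal.LiesOver.tower_bot Q QL P
  have h1 := hunr P inferInstance hP h2 QL inferInstance (Ideal.over_def QL P).symm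
  rw [← card_inertia_eq P hP QL, Subgroup.card_eq_one, Subgroup.eq_bot_iff_forall] at h1
  apply h1
  intro x
  change (AlgEquiv.restrictNormalHom L σ) • x - x ∈ QL
  rw [hQL, Ideal.under_def, Ideal.mem_comap]
  have : algebraMap (𝓞 L) (𝓞 N) ((AlgEquiv.restrictNormalHom L σ) • x - x) =
      σ • (algebraMap (𝓞 L) (𝓞 N) x) - algebraMap (𝓞 L) (𝓞 N) x := by
    apply RingOfIntegers.ext
    rw [map_sub]
    change algebraMap L N (AlgEquiv.restrictNormal σ L (x : L)) - algebraMap L N (x : L) =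
      σ (algebraMap L N (x : L)) - algebraMap L N (x : L)
    rw [AlgEquiv.restrictNormal_commutes]
  rw [this]
  exact hσ _

lemma unram_sub {K N : Type} [Field K] [NumberField K] [Field N] [NumberField N] [Algebra K N]
    [IsGalois K N] (H : Subgroup Gal(N/K))
    (hI : ∀ Q : Ideal (𝓞 N), Q.IsPrime → Q ≠ ⊥ → Q.inertia Gal(N/K) ≤ H)
    (P : Ideal (𝓞 K)) (hP : P.IsPrime) (hP0 : P ≠ ⊥)
    (R : Ideal (𝓞 (IntermediateField.fixedField H))) (hR : R.IsPrime) (hRP : R.LiesOver P) :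
    Ideal.ramificationIdx' P R = 1 := by
  obtain ⟨⟨Q, hQ, hQR⟩⟩ := R.nonempty_primesOver (S := 𝓞 N)
  have hR0 : R ≠ ⊥ := Ideal.ne_bot_of_liesOver_of_ne_bot hP0 R
  have hQ0 : Q ≠ ⊥ := Ideal.ne_bot_of_liesOver_of_ne_bot hR0 Q
  have hQP : Q.LiesOver P := Ideal.LiesOver.trans Q R P
  have h1 := Ideal.ramificationIdx'_algebra_tower' P R Q
  rw [← card_inertia_eq P hP0 Q, ← card_inertia_eq R hR0 Q] at h1
  have h2 : Nat.card (Q.inertia Gal(N/K)) ≤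
      Nat.card (Q.inertia Gal(N/(IntermediateField.fixedField H))) := by
    have hfix : ∀ σ : Q.inertia Gal(N/K),
        (σ : Gal(N/K)) ∈ (IntermediateField.fixedField H).fixingSubgroup := by
      intro σ
      rw [IntermediateField.fixingSubgroup_fixedField]
      exact hI Q hQ hQ0 σ.2
    let f : Q.inertia Gal(N/K) → Q.inertia Gal(N/(IntermediateField.fixedField H)) :=
      fun σ => ⟨IntermediateField.fixingSubgroupEquiv _ ⟨σ, hfix σ⟩, fun x => σ.2 x⟩
    apply Nat.card_le_card_of_injective f
    intro σ τ h
    have h3 := congrArg Subtype.val h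
    have h4 := (IntermediateField.fixingSubgroupEquiv (IntermediateField.fixedField H)).injective h3
    have h5 : (σ : Gal(N/K)) = τ := by simpa using h4
    exact Subtype.ext h5
  have h3 : 0 < Nat.card (Q.inertia Gal(N/K)) := Nat.card_pos
  have h4 : 0 < Ideal.ramificationIdx' P R := by
    rcases Nat.eq_zero_or_pos (Ideal.ramificationIdx' P R) with h | h
    · rw [h, zero_mul] at h1; omega
    · exact h
  by_contra h5
  have h6 : 2 ≤ Ideal.ramificationIdx' P R := by omega
  nlinarith

lemma compositum_no_nine {K L L' N : Type} [Field K] [NumberField K] [Field L] [NumberField L]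
    [Field L'] [NumberField L'] [Algebra K L'] [IsGalois K L']
    [Field N] [NumberField N] [Algebra K L] [Algebra K N] [Algebra L N] [IsScalarTower K L N]
    [Algebra L' N] [IsScalarTower K L' N]
    [IsGalois K L] [IsGalois K N] [IsPrincipalIdealRing (𝓞 K)]
    (hu : ∀ u : (𝓞 K)ˣ, u = 1 ∨ u = -1) (h2 : Prime (2 : 𝓞 K))
    (hunr : ∀ P : Ideal (𝓞 K), P.IsPrime → P ≠ ⊥ → (2 : 𝓞 K) ∉ P →
        ∀ Q : Ideal (𝓞 L), Q.IsPrime → Q.comap (algebraMap (𝓞 K) (𝓞 L)) = P →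
          Ideal.ramificationIdx' P Q = 1)
    (hunr' : ∀ P : Ideal (𝓞 K), P.IsPrime → P ≠ ⊥ → (2 : 𝓞 K) ∉ P →
        ∀ Q : Ideal (𝓞 L'), Q.IsPrime → Q.comap (algebraMap (𝓞 K) (𝓞 L')) = P →
          Ideal.ramificationIdx' P Q = 1)
    (hinj : ∀ σ : Gal(N/K), AlgEquiv.restrictNormalHom L σ = 1 →
      AlgEquiv.restrictNormalHom L' σ = 1 → σ = 1)
    (hcomm : ∀ σ τ : Gal(N/K), σ * τ = τ * σ) (hexp : ∀ σ : Gal(N/K), σ ^ 3 = 1)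
    (hdeg : Module.finrank K N = 9) : False := by
  have hcardG : Nat.card Gal(N/K) = 9 := by rw [IsGalois.card_aut_eq_finrank, hdeg]
  have : Fact (Nat.Prime 3) := ⟨Nat.prime_three⟩
  set P0 : Ideal (𝓞 K) := Ideal.span {2} with hP0
  have hP0p : P0.IsPrime := (Ideal.span_singleton_prime h2.ne_zero).mpr h2
  have hP00 : P0 ≠ ⊥ := by simp [hP0]
  obtain ⟨⟨Q0, hQ0p, hQ0P⟩⟩ := P0.nonempty_primesOver (S := 𝓞 N)
  have hQ00 : Q0 ≠ ⊥ := Ideal.ne_bot_of_liesOver_of_ne_bot hP00 Q0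
  have h2Q : (2 : 𝓞 N) ∈ Q0 := by
    have := (Ideal.mem_of_liesOver Q0 P0 (2 : 𝓞 K)).mp (Ideal.mem_span_singleton_self _)
    rwa [map_ofNat] at this
  have h3Q : (3 : 𝓞 N) ∉ Q0 := by
    intro h3
    apply hQ0p.ne_top
    rw [Ideal.eq_top_iff_one]
    have : (1 : 𝓞 N) = 3 - 2 := by norm_num
    rw [this]; exact Q0.sub_mem h3 h2Q
  have hfaith : ∀ σ : Gal(N/K), (∀ x : 𝓞 N, σ • x = x) → σ = 1 := by
    intro σ h
    ext y
    obtain ⟨a, b, hb, rfl⟩ := IsFractionRing.div_surjective (A := 𝓞 N) y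
    have ha : σ (algebraMap (𝓞 N) N a) = algebraMap (𝓞 N) N a :=
      congrArg (algebraMap (𝓞 N) N) (h a)
    have hb : σ (algebraMap (𝓞 N) N b) = algebraMap (𝓞 N) N b :=
      congrArg (algebraMap (𝓞 N) N) (h b)
    rw [map_div₀, ha, hb]; rfl
  have hle := card_inertia_le_three hfaith hexp Q0 hQ00 h3Q
  obtain ⟨g, hg1, hgI⟩ : ∃ g : Gal(N/K), g ≠ 1 ∧
      Q0.inertia Gal(N/K) ≤ Subgroup.zpowers g := by
    by_cases hbot : Q0.inertia Gal(N/K) = ⊥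
    · have : Nontrivial Gal(N/K) := by
        rw [← Finite.one_lt_card_iff_nontrivial, hcardG]; norm_num
      obtain ⟨g, hg⟩ := exists_ne (1 : Gal(N/K))
      exact ⟨g, hg, by rw [hbot]; exact bot_le⟩
    · obtain ⟨g, hg, hg1⟩ := (Subgroup.bot_or_exists_ne_one _).resolve_left hbot
      refine ⟨g, hg1, ?_⟩
      have ho : orderOf g = 3 := orderOf_eq_prime (hexp g) hg1
      have h4 : Subgroup.zpowers g ≤ Q0.inertia Gal(N/K) := Subgroup.zpowers_le.mpr hg
      exact (Subgroup.eq_of_le_of_card_ge h4 (by rw [Nat.card_zpowers, ho]; exact hle)).ge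
  set H := Subgroup.zpowers g with hH
  have hcardH : Nat.card H = 3 := by
    rw [hH, Nat.card_zpowers]; exact orderOf_eq_prime (hexp g) hg1
  have hnormal : H.Normal := ⟨fun n hn τ => by rw [hcomm τ n, mul_inv_cancel_right]; exact hn⟩
  have hI : ∀ Q : Ideal (𝓞 N), Q.IsPrime → Q ≠ ⊥ → Q.inertia Gal(N/K) ≤ H := by
    intro Q hQ hQne
    set P : Ideal (𝓞 K) := Q.under (𝓞 K) with hPdef
    have hPne : P ≠ ⊥ := Ideal.under_ne_bot _ hQne
    have hQP : Q.LiesOver P := ⟨rfl⟩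
    by_cases h2P : (2 : 𝓞 K) ∈ P
    · have hPP : P = P0 := eq_span_of_mem_prime 2 h2 P h2P
      have : Q.LiesOver P0 := hPP ▸ hQP
      obtain ⟨τ, hτ⟩ := Ideal.exists_smul_eq_of_isGaloisGroup P0 Q Q0 Gal(N/K)
      intro σ hσ
      apply hgI
      intro x
      change σ • x - x ∈ Q0
      have h5 : σ • (τ⁻¹ • x) - τ⁻¹ • x ∈ Q := hσ (τ⁻¹ • x)
      have h6 := Ideal.smul_mem_pointwise_smul τ _ _ h5
      rw [hτ, smul_sub, smul_smul, smul_smul, smul_inv_smul, hcomm τ σ, mul_inv_cancel_right] at h6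
      exact h6
    · intro σ hσ
      rw [hinj σ (inertia_restrict hunr P hPne h2P Q σ hσ)
        (inertia_restrict hunr' P hPne h2P Q σ hσ)]
      exact H.one_mem
  have hM : Module.finrank K (IntermediateField.fixedField H) = 3 := by
    have h7 := IntermediateField.finrank_fixedField_eq_card H
    have h8 := Module.finrank_mul_finrank K (IntermediateField.fixedField H) N
    rw [h7, hcardH, hdeg] at h8
    omega
  have hGM : IsGalois K (IntermediateField.fixedField H) := inferInstance
  exact no_unramified_cubic (K := K) (M := IntermediateField.fixedField H)
    (fun P hP hP0 R hR hRP => unram_sub H hI P hP hP0 R hR hRP) hM hu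


lemma uniq_part {K L L' : Type} [Field K] [NumberField K] [Field L] [NumberField L]
    [Field L'] [NumberField L'] [Algebra K L] [Algebra K L'] [IsGalois K L] [IsGalois K L']
    [IsPrincipalIdealRing (𝓞 K)]
    (hu : ∀ u : (𝓞 K)ˣ, u = 1 ∨ u = -1) (h2 : Prime (2 : 𝓞 K))
    (hL : Module.finrank K L = 3) (hL' : Module.finrank K L' = 3)
    (hunr : ∀ P : Ideal (𝓞 K), P.IsPrime → P ≠ ⊥ → (2 : 𝓞 K) ∉ P →
        ∀ Q : Ideal (𝓞 L), Q.IsPrime → Q.comap (algebraMap (𝓞 K) (𝓞 L)) = P →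
          Ideal.ramificationIdx' P Q = 1)
    (hunr' : ∀ P : Ideal (𝓞 K), P.IsPrime → P ≠ ⊥ → (2 : 𝓞 K) ∉ P →
        ∀ Q : Ideal (𝓞 L'), Q.IsPrime → Q.comap (algebraMap (𝓞 K) (𝓞 L')) = P →
          Ideal.ramificationIdx' P Q = 1) : Nonempty (L' ≃ₐ[K] L) := by
  have : Fact (Nat.Prime 3) := ⟨Nat.prime_three⟩
  let φ : L →ₐ[K] AlgebraicClosure K := IsAlgClosed.lift
  let φ' : L' →ₐ[K] AlgebraicClosure K := IsAlgClosed.lift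
  let e1 : L ≃ₐ[K] φ.fieldRange := AlgEquiv.ofInjectiveField φ
  let e2 : L' ≃ₐ[K] φ'.fieldRange := AlgEquiv.ofInjectiveField φ'
  have : FiniteDimensional K φ.fieldRange := e1.toLinearEquiv.finiteDimensional
  have : FiniteDimensional K φ'.fieldRange := e2.toLinearEquiv.finiteDimensional
  have : Normal K φ.fieldRange := Normal.of_algEquiv e1
  have : Normal K φ'.fieldRange := Normal.of_algEquiv e2
  let N : IntermediateField K (AlgebraicClosure K) := φ.fieldRange ⊔ φ'.fieldRange
  have hNf : FiniteDimensional K N := IntermediateField.finiteDimensional_sup _ _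
  have hNn : Normal K N := IntermediateField.normal_sup _ _ _ _
  have hNg : IsGalois K N := ⟨⟩
  have hNN : NumberField N := NumberField.of_module_finite K N
  let ψ : L →ₐ[K] N := (IntermediateField.inclusion le_sup_left).comp e1.toAlgHom
  let ψ' : L' →ₐ[K] N := (IntermediateField.inclusion le_sup_right).comp e2.toAlgHom
  let _ : Algebra L N := ψ.toRingHom.toAlgebra
  let _ : Algebra L' N := ψ'.toRingHom.toAlgebra
  have : IsScalarTower K L N := IsScalarTower.of_algHom ψ
  have : IsScalarTower K L' N := IsScalarTower.of_algHom ψ'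
  have hc : Nat.card Gal(L/K) = 3 := by rw [IsGalois.card_aut_eq_finrank, hL]
  have hc' : Nat.card Gal(L'/K) = 3 := by rw [IsGalois.card_aut_eq_finrank, hL']
  have hinj : ∀ σ : Gal(N/K), AlgEquiv.restrictNormalHom L σ = 1 →
      AlgEquiv.restrictNormalHom L' σ = 1 → σ = 1 := by
    intro σ h1 h1'
    have k1 : ∀ x : L, σ (ψ x) = ψ x := by
      intro x
      have := AlgEquiv.restrictNormal_commutes σ L x
      have h : AlgEquiv.restrictNormal σ L = 1 := h1
      rw [h] at this
      exact this.symm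
    have k2 : ∀ x : L', σ (ψ' x) = ψ' x := by
      intro x
      have := AlgEquiv.restrictNormal_commutes σ L' x
      have h : AlgEquiv.restrictNormal σ L' = 1 := h1'
      rw [h] at this
      exact this.symm
    let F : IntermediateField K N := IntermediateField.fixedField (Subgroup.zpowers σ)
    have hF : ∀ y : N, σ y = y → y ∈ F := by
      intro y hy
      rw [IntermediateField.mem_fixedField_iff]
      intro g hg
      have : g ∈ MulAction.stabilizer Gal(N/K) y := by
        refine (Subgroup.zpowers_le.mpr ?_) hg
        exact hy
      exact this
    have k3 : N ≤ IntermediateField.map N.val F := by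
      refine sup_le ?_ ?_
      · rintro _ ⟨x, rfl⟩
        exact ⟨ψ x, hF _ (k1 x), rfl⟩
      · rintro _ ⟨x, rfl⟩
        exact ⟨ψ' x, hF _ (k2 x), rfl⟩
    apply AlgEquiv.ext
    intro y
    obtain ⟨z, hz, hzy⟩ := k3 y.2
    have hzy' : z = y := Subtype.ext hzy
    subst hzy'
    have hz' : z ∈ F := hz
    rw [IntermediateField.mem_fixedField_iff] at hz'
    exact hz' σ (Subgroup.mem_zpowers σ)
  let f : Gal(N/K) →* Gal(L/K) × Gal(L'/K) :=
    (AlgEquiv.restrictNormalHom L).prod (AlgEquiv.restrictNormalHom L')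
  have hf : Function.Injective f := by
    rw [injective_iff_map_eq_one]
    intro σ h
    exact hinj σ (congrArg Prod.fst h) (congrArg Prod.snd h)
  have hcomm : ∀ σ τ : Gal(N/K), σ * τ = τ * σ := by
    have i1 : IsCyclic Gal(L/K) := isCyclic_of_prime_card hc
    have i2 : IsCyclic Gal(L'/K) := isCyclic_of_prime_card hc'
    have i3 := i1.isMulCommutative
    have i4 := i2.isMulCommutative
    intro σ τ
    apply hf
    rw [map_mul, map_mul]
    refine Prod.ext ?_ ?_
    · exact mul_comm' _ _
    · exact mul_comm' _ _
  have hexp : ∀ σ : Gal(N/K), σ ^ 3 = 1 := by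
    intro σ
    apply hf
    rw [map_pow, map_one]
    refine Prod.ext ?_ ?_
    · change (f σ).1 ^ 3 = 1
      rw [← hc]; exact pow_card_eq_one'
    · change (f σ).2 ^ 3 = 1
      rw [← hc']; exact pow_card_eq_one'
  have hdvd : Module.finrank K N ∣ 3 ^ 2 := by
    rw [← IsGalois.card_aut_eq_finrank]
    have := Subgroup.card_dvd_of_injective f hf
    rwa [Nat.card_prod, hc, hc'] at this
  have h3le : 3 ≤ Module.finrank K N := by
    rw [← hL]
    exact LinearMap.finrank_le_finrank_of_injective (f := ψ.toLinearMap) ψ.injective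
  obtain ⟨k, hk, hk2⟩ := (Nat.dvd_prime_pow Nat.prime_three).mp hdvd
  interval_cases k
  · omega
  · have b1 : Function.Bijective ψ := ⟨ψ.injective, by
      have := (LinearMap.injective_iff_surjective_of_finrank_eq_finrank (f := ψ.toLinearMap)
        (by rw [hL, hk2]; norm_num)).mp ψ.injective
      exact this⟩
    have b2 : Function.Bijective ψ' := ⟨ψ'.injective, by
      have := (LinearMap.injective_iff_surjective_of_finrank_eq_finrank (f := ψ'.toLinearMap)
        (by rw [hL', hk2]; norm_num)).mp ψ'.injective
      exact this⟩
    exact ⟨(AlgEquiv.ofBijective ψ' b2).trans (AlgEquiv.ofBijective ψ b1).symm⟩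
  · exact (compositum_no_nine (L := L) (L' := L') (N := N) hu h2 hunr hunr' hinj hcomm hexp
      (by rw [hk2]; norm_num)).elim

end Uniq

end Helpers

/-- For `d ∈ {11, 19, 43, 67, 163}` and `K = ℚ(√-d)`, the splitting field over `K` of the
cubic `p_d` listed in the paper is a degree-`3` Galois extension of `K` unramified at every
prime of `O_K` not dividing `2`, and it is the unique such extension up to `K`-isomorphism. -/
theorem splitting_field_cubic_unique_unramified_outside_two
    (d : ℕ) (hd : d ∈ ({11, 19, 43, 67, 163} : Finset ℕ))
    (K : Type) [Field K] [NumberField K]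
    (s : K) (hs : s ^ 2 = -(d : K)) (hK : Module.finrank ℚ K = 2)
    (p : K[X])
    (hp : p = if d = 11 then X ^ 3 - X ^ 2 + X + 1
      else if d = 19 then X ^ 3 - 2 * X - 2
      else if d = 43 then X ^ 3 - X ^ 2 - X + 3
      else if d = 67 then X ^ 3 - X ^ 2 - 3 * X + 5
      else X ^ 3 - 8 * X + 10)
    (L : Type) [Field L] [Algebra K L] [NumberField L]
    (hL : IsSplittingField K L p) :
    (IsGalois K L ∧ Module.finrank K L = 3 ∧
      (∀ P : Ideal (𝓞 K), P.IsPrime → P ≠ ⊥ → (2 : 𝓞 K) ∉ P →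
        ∀ Q : Ideal (𝓞 L), Q.IsPrime → Q.comap (algebraMap (𝓞 K) (𝓞 L)) = P →
          Ideal.ramificationIdx' P Q = 1)) ∧
    (∀ (L' : Type) [Field L'] [Algebra K L'] [NumberField L'], IsGalois K L' →
      Module.finrank K L' = 3 →
      (∀ P : Ideal (𝓞 K), P.IsPrime → P ≠ ⊥ → (2 : 𝓞 K) ∉ P →
        ∀ Q : Ideal (𝓞 L'), Q.IsPrime → Q.comap (algebraMap (𝓞 K) (𝓞 L')) = P →
          Ideal.ramificationIdx' P Q = 1) →
      Nonempty (L' ≃ₐ[K] L)) := by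
  obtain ⟨hPID, hu, h2⟩ := quad_all d hd s hs hK
  have hex : IsGalois K L ∧ Module.finrank K L = 3 ∧
      (∀ P : Ideal (𝓞 K), P.IsPrime → P ≠ ⊥ → (2 : 𝓞 K) ∉ P →
        ∀ Q : Ideal (𝓞 L), Q.IsPrime → Q.comap (algebraMap (𝓞 K) (𝓞 L)) = P →
          Ideal.ramificationIdx' P Q = 1) := by
    have hC2 : (C (2 : K) : K[X]) = 2 := map_ofNat C 2
    have hC3 : (C (3 : K) : K[X]) = 3 := map_ofNat C 3
    have hC5 : (C (5 : K) : K[X]) = 5 := map_ofNat C 5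
    have hC8 : (C (8 : K) : K[X]) = 8 := map_ofNat C 8
    have hC10 : (C (10 : K) : K[X]) = 10 := map_ofNat C 10
    simp only [Finset.mem_insert, Finset.mem_singleton] at hd
    rcases hd with rfl | rfl | rfl | rfl | rfl
    · refine exist_part (-1) 1 1 p ?_ (cubic_no_root hK _ _ _ 3 (by decide)) (-44) (by norm_num)
        (2 * s) (by rw [mul_pow, hs]; norm_num) (-1) 0 1 (by norm_num) hL
      rw [hp]; simp [hC2, hC3, hC5, hC8, hC10]; try ring
    · refine exist_part 0 (-2) (-2) p ?_ (cubic_no_root hK _ _ _ 5 (by decide)) (-76) (by norm_num)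
        (2 * s) (by rw [mul_pow, hs]; norm_num) 13 1 1 (by norm_num) hL
      rw [hp]; simp [hC2, hC3, hC5, hC8, hC10]; try ring
    · refine exist_part (-1) (-1) 3 p ?_ (cubic_no_root hK _ _ _ 11 (by decide)) (-172)
        (by norm_num) (2 * s) (by rw [mul_pow, hs]; norm_num) 1 0 2 (by norm_num) hL
      rw [hp]; simp [hC2, hC3, hC5, hC8, hC10]; try ring
    · refine exist_part (-1) (-3) 5 p ?_ (cubic_no_root hK _ _ _ 17 (by decide)) (-268)
        (by norm_num) (2 * s) (by rw [mul_pow, hs]; norm_num) 27 1 1 (by norm_num) hL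
      rw [hp]; simp [hC2, hC3, hC5, hC8, hC10]; try ring
    · refine exist_part 0 (-8) 10 p ?_ (cubic_no_root hK _ _ _ 4 (by decide)) (-652)
        (by norm_num) (2 * s) (by rw [mul_pow, hs]; norm_num) (-27) (-1) 2 (by norm_num) hL
      rw [hp]; simp [hC2, hC3, hC5, hC8, hC10]; try ring
  refine ⟨hex, ?_⟩
  intro L' _ _ _ hG' hd' hunr'
  obtain ⟨hG, hdeg, hunr⟩ := hex
  exact uniq_part hu h2 hdeg hd' hunr hunr'
end
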